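/- Consider a perturbed GIFS with degeneration and let K be the limit set of the unperturbed system and K(ε) the limit set of the perturbed system. Then: (1) if conditions (D.1), (D.2) and (D.3) hold, limsup_{ε→0} dim_H K(ε) ≤ dim_H K; (2) if conditions (D.1), (D.2) and (D.4) hold, liminf_{ε→0} dim_H K(ε) ≥ dim_H K; consequently, if (D.1)–(D.4) all hold, then lim_{ε→0} dim_H K(ε) = dim_H K. -/

import Mathlib

/-!
Continuity of the Hausdorff dimension of limit sets under degenerating perturbations.

*Weights.* For a finite word `w` and an exponent `t`, `Wt t w` is the supremum of the `t`-th power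
of the product of derivative norms along `w`; it is submultiplicative. For a loop `w` at a vertex
`v`, `Lt t v w` is the corresponding supremum over `J v`, and `Ql t v w` the `t`-th power of the
infimum of the product of the `inorm`s; the latter is supermultiplicative. No irreducibility of the
graph is assumed: decomposing a word according to its visits to the finitely many vertices of
non-negligible weight (`tsum_words_ne_top`) shows that if the loop sums at exponent `τ` are bounded,
then the sum of all weights at any exponent `t > τ` with `∑ v, Wt t [v] < ∞` is finite
(`tsum_Wt_ne_top`). Consequently the zero `s` of the pressure of the conformal system (`IsCrit`) is
unique, `∑ w, Wt t w < ∞` for `t > s`, and for `τ < s` the loop sums at some vertex are arbitrarily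
large (`IsCrit.exists_big`).

*Dimension bounds.* If `∑ Wt t w ≤ 1` over the words of some length `N`, covering the limit set by
cylinders gives `dimH K ≤ t` (`dimH_limit_le`). Conversely, if `∑ Ql τ v w > 1` over the loops at
`v` of some length `n`, then for `τ' < τ` some power of the loop family contains, by pigeonhole,
at least `B * exp (j * τ')` loops of contraction about `exp (-j)`; separation and bounded distortion
then give a subsystem whose limit set carries a tree structure with dimension at least `τ'`, so
`τ ≤ dimH K` (`le_dimH_of_lsum`). For the unperturbed system both bounds give `dimH K = s`.

*Perturbation.* For a fixed word, the perturbed derivative products converge to the unperturbed ones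
up to a bounded distortion factor independent of the word, and they tend to `0` for words using a
degenerate edge (`cmp`). For `t > s` a length `N` is chosen for which the unperturbed sum is tiny;
dominated convergence, with the majorant supplied by the summability assumption, makes the perturbed
sum at most `1`, so `dimH K(ε) ≤ t` eventually (`eventually_dimH_le`). For `τ < s` finitely many
loops already have a large unperturbed sum, which forces the perturbed loop sum above `1`, so
`τ ≤ dimH K(ε)` eventually (`eventually_le_dimH`).
-/

open scoped ENNReal NNReal Topology
open Filter Set Metric

noncomputable section

/-- The shift transformation on one-sided sequences. -/
def shift {S : Type*} (ω : ℕ → S) : ℕ → S := fun n => ω (n + 1)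

/-- The topological Markov shift with transition `A`. -/
def TMS {S : Type*} (A : S → S → Prop) : Set (ℕ → S) := {ω | ∀ n, A (ω n) (ω (n + 1))}

/-- The cylinder set of a word `w` inside the TMS with transition `A`. -/
def cylSet {S : Type*} (A : S → S → Prop) (n : ℕ) (w : Fin n → S) : Set (ℕ → S) :=
  {ω | ω ∈ TMS A ∧ ∀ i : Fin n, ω i = w i}

/-- Birkhoff sum `S_n f`. -/
def birkhoff {S : Type*} (f : (ℕ → S) → ℝ) (n : ℕ) (ω : ℕ → S) : ℝ :=
  ∑ i ∈ Finset.range n, f (shift^[i] ω)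

/-- Partition function `Z_n(f) = Σ_w sup_{ω ∈ [w]} exp (S_n f ω)`
(the supremum of `exp` coincides with `exp` of the supremum; empty cylinders contribute `0`). -/
def pressureZ {S : Type*} (A : S → S → Prop) (f : (ℕ → S) → ℝ) (n : ℕ) : ℝ≥0∞ :=
  ∑' w : Fin n → S, ⨆ ω ∈ cylSet A n w, ENNReal.ofReal (Real.exp (birkhoff f n ω))

/-- Logarithm `ℝ≥0∞ → EReal`, with `log 0 = ⊥` and `log ⊤ = ⊤`. -/
def elog (x : ℝ≥0∞) : EReal :=
  if x = 0 then ⊥ else if x = ⊤ then ⊤ else ((Real.log x.toReal : ℝ) : EReal)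

/-- The topological pressure `P(f) = lim (1/n) log Z_n(f)` (as a limsup, which equals the
limit whenever the limit exists). -/
def pressure {S : Type*} (A : S → S → Prop) (f : (ℕ → S) → ℝ) : EReal :=
  Filter.limsup (fun n : ℕ => ((n : ℝ)⁻¹ : EReal) * elog (pressureZ A f n)) Filter.atTop

/-- A potential is summable if `Σ_s exp (sup_{[s]} f) < ∞`. -/
def SummablePot {S : Type*} (A : S → S → Prop) (f : (ℕ → S) → ℝ) : Prop :=
  pressureZ A f 1 ≠ ⊤

/-- There is an `A`-admissible word of length `≥ 2` from `a` to `b`. -/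
def Chain {S : Type*} (A : S → S → Prop) (a b : S) : Prop :=
  ∃ (m : ℕ) (w : ℕ → S), 1 ≤ m ∧ w 0 = a ∧ w m = b ∧ ∀ i < m, A (w i) (w (i + 1))

/-- Restriction of a transition matrix to a set of states. -/
def restrictT {S : Type*} (A : S → S → Prop) (C : Set S) : S → S → Prop :=
  fun i j => A i j ∧ i ∈ C ∧ j ∈ C

/-- The communication class (the class of `a` under `↔`). -/
def commClass {S : Type*} (A : S → S → Prop) (a : S) : Set S :=
  {b | a = b ∨ (Chain A a b ∧ Chain A b a)}

end
noncomputable section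

/-- The ambient Euclidean space `ℝ^D`. -/
abbrev Pt (D : ℕ) := EuclideanSpace ℝ (Fin D)

/-- `‖A‖_i = ‖A⁻¹‖⁻¹` for an invertible continuous linear map (junk value otherwise). -/
def inorm {D : ℕ} (A : Pt D →L[ℝ] Pt D) : ℝ := ‖Ring.inverse A‖⁻¹

/-- A simple graph-directed iterated function system (GIFS) in `ℝ^D` on the vertex set `V`,
with edge relation `E`, seed sets `J`, open sets `O` and contractions `T`. -/
structure SGIFS (D : ℕ) (V : Type*) where
  E : V → V → Prop
  J : V → Set (Pt D)
  O : V → Set (Pt D)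
  T : V → V → Pt D → Pt D
  r : ℝ
  hr : r < 1
  J_cpt : ∀ v, IsCompact (J v)
  J_conn : ∀ v, IsConnected (J v)
  J_reg : ∀ v, J v = closure (interior (J v))
  J_diam : ∃ c : ℝ, ∀ v, Metric.diam (J v) ≤ c
  O_open : ∀ v, IsOpen (O v)
  O_bdd : ∀ v, Bornology.IsBounded (O v)
  O_conn : ∀ v, IsConnected (O v)
  hJO : ∃ c > 0, ∀ v, ∀ x ∈ J v, ∀ y ∉ O v, c ≤ dist x y
  T_diff : ∀ ⦃v u⦄, E v u → ContDiffOn ℝ 1 (T v u) (O u)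
  T_inj : ∀ ⦃v u⦄, E v u → Set.InjOn (T v u) (O u)
  T_openim : ∀ ⦃v u⦄, E v u → IsOpen (T v u '' O u)
  T_sub : ∀ ⦃v u⦄, E v u → T v u '' O u ⊆ O v
  T_J : ∀ ⦃v u⦄, E v u → T v u '' J u ⊆ J v
  T_unit : ∀ ⦃v u⦄, E v u → ∀ x ∈ O u, IsUnit (fderiv ℝ (T v u) x)
  T_contr : ∀ ⦃v u⦄, E v u → ∀ x ∈ O u, ‖fderiv ℝ (T v u) x‖ ≤ r

/-- Composition `T_{ω₀ω₁} ∘ ⋯ ∘ T_{ω_{k-1}ω_k}` along a sequence (identity for `k = 0`). -/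
def vcomp {D : ℕ} {V : Type*} (T : V → V → Pt D → Pt D) (ω : ℕ → V) : ℕ → Pt D → Pt D
  | 0 => id
  | k + 1 => vcomp T ω k ∘ T (ω k) (ω (k + 1))

/-- `π` is the coding map of the simple system `(Ed, J, T)`:
`{π ω} = ⋂_{k ≥ 1} T_{ω₀ω₁} ∘ ⋯ ∘ T_{ω_{k-1}ω_k} (J_{ω_k})`. -/
def IsCodingMap {D : ℕ} {V : Type*} (Ed : V → V → Prop) (J : V → Set (Pt D))
    (T : V → V → Pt D → Pt D) (π : (ℕ → V) → Pt D) : Prop :=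
  ∀ ω ∈ {ω : ℕ → V | ∀ n, Ed (ω n) (ω (n + 1))},
    (⋂ k : ℕ, vcomp T ω (k + 1) '' J (ω (k + 1))) = {π ω}

/-- `pcomp T w j m = T_{w_j w_{j+1}} ∘ ⋯ ∘ T_{w_{j+m-1} w_{j+m}}` (identity for `m = 0`). -/
def pcomp {D : ℕ} {V : Type*} (T : V → V → Pt D → Pt D) (w : ℕ → V) : ℕ → ℕ → Pt D → Pt D
  | _, 0 => id
  | j, m + 1 => T (w j) (w (j + 1)) ∘ pcomp T w (j + 1) m

/-- The potential `φ(ω) = log ‖T'_{ω₀ω₁}(π(σω))‖`. -/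
def phiU {D : ℕ} {V : Type*} (T : V → V → Pt D → Pt D) (π : (ℕ → V) → Pt D)
    (ω : ℕ → V) : ℝ :=
  Real.log ‖fderiv ℝ (T (ω 0) (ω 1)) (π (fun n => ω (n + 1)))‖

/-- The potential `φ̲(ω) = log ‖T'_{ω₀ω₁}(π(σω))‖_i`. -/
def phiL {D : ℕ} {V : Type*} (T : V → V → Pt D → Pt D) (π : (ℕ → V) → Pt D)
    (ω : ℕ → V) : ℝ :=
  Real.log (inorm (fderiv ℝ (T (ω 0) (ω 1)) (π (fun n => ω (n + 1)))))

/-- Conformality condition `(G.5)_C`. -/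
def CondConf {D : ℕ} {V : Type*} (Ed : V → V → Prop) (O : V → Set (Pt D))
    (T : V → V → Pt D → Pt D) : Prop :=
  ∀ ⦃v u⦄, Ed v u → ∀ x ∈ O u, IsConformalMap (fderiv ℝ (T v u) x)

/-- Strong separation condition `(G.6)_S` relative to a limit set `K`. -/
def CondSSC {D : ℕ} {V : Type*} (Ed : V → V → Prop) (J : V → Set (Pt D))
    (T : V → V → Pt D → Pt D) (K : Set (Pt D)) : Prop :=
  ∀ ⦃v u v' u'⦄, Ed v u → Ed v' u' → (v, u) ≠ (v', u') →
    (T v u '' (J u ∩ K)) ∩ (T v' u' '' (J u' ∩ K)) = ∅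

/-- Open set condition `(G.6)_O`. -/
def CondOSC {D : ℕ} {V : Type*} (Ed : V → V → Prop) (J : V → Set (Pt D))
    (T : V → V → Pt D → Pt D) : Prop :=
  ∀ ⦃v u v' u'⦄, Ed v u → Ed v' u' → (v, u) ≠ (v', u') →
    (T v u '' interior (J u)) ∩ (T v' u' '' interior (J u')) = ∅

/-- Bounded distortion `(G.7)_B`. -/
def CondBD {D : ℕ} {V : Type*} (Ed : V → V → Prop) (O : V → Set (Pt D))
    (T : V → V → Pt D → Pt D) : Prop :=
  ∃ c > 0, ∃ β ∈ Set.Ioc (0 : ℝ) 1, ∀ ⦃v u⦄, Ed v u → ∀ x ∈ O u, ∀ y ∈ O u,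
    |‖fderiv ℝ (T v u) x‖ - ‖fderiv ℝ (T v u) y‖| ≤
      c * ‖fderiv ℝ (T v u) x‖ * dist x y ^ β

/-- Bounded distortion for inverse maps `(G.7)_{BI}`. -/
def CondBDI {D : ℕ} {V : Type*} (Ed : V → V → Prop) (O : V → Set (Pt D))
    (T : V → V → Pt D → Pt D) : Prop :=
  ∃ c > 0, ∃ β ∈ Set.Ioc (0 : ℝ) 1, ∀ ⦃v u⦄, Ed v u → ∀ x ∈ O u, ∀ y ∈ O u,
    |inorm (fderiv ℝ (T v u) x) - inorm (fderiv ℝ (T v u) y)| ≤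
      c * inorm (fderiv ℝ (T v u) x) * dist x y ^ β

/-- Contractibility of the seed sets `(G.9)_J`. -/
def CondG9 {D : ℕ} {V : Type*} (Ed : V → V → Prop) (J : V → Set (Pt D))
    (T : V → V → Pt D → Pt D) : Prop :=
  ∃ c > 0, ∀ v, Metric.diam (J v) ≤
    c * sSup {t : ℝ | ∃ u, Ed v u ∧ ∃ z ∈ J u, t = ‖fderiv ℝ (T v u) z‖}

/-- The summability interval `Ī^V` relative to the limit set `K`. -/
def IbarSet {D : ℕ} {V : Type*} (Ed : V → V → Prop) (J : V → Set (Pt D))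
    (T : V → V → Pt D → Pt D) (K : Set (Pt D)) : Set ℝ :=
  {s | 0 ≤ s ∧
    (∑' v : V, ⨆ (u : V) (_ : Ed v u) (x : Pt D) (_ : x ∈ K ∩ J u),
      ENNReal.ofReal (inorm (fderiv ℝ (T v u) x) ^ s)) ≠ ⊤}

end

noncomputable section

/-- Summability condition `(G.8)_{SV}`: some `s ∈ Ī^V` satisfies `P(s φ̲) = 0`. -/
def CondG8 {D : ℕ} {V : Type*} (Ed : V → V → Prop) (J : V → Set (Pt D))
    (T : V → V → Pt D → Pt D) (π : (ℕ → V) → Pt D) : Prop :=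
  ∃ s ∈ IbarSet Ed J T (π '' TMS Ed), pressure Ed (fun ω => s * phiL T π ω) = 0

/-- A set of vertices is strongly connected (with edges restricted to it). -/
def SCOn {V : Type*} (Ed : V → V → Prop) (C : Set V) : Prop :=
  ∀ v ∈ C, ∀ u ∈ C, Chain (restrictT Ed C) v u

/-- A strongly connected component: a maximal strongly connected set of vertices. -/
def IsSCC {V : Type*} (Ed : V → V → Prop) (C : Set V) : Prop :=
  SCOn Ed C ∧ ∀ C', C ⊆ C' → SCOn Ed C' → C' = C

end

noncomputable section

/-- A perturbed GIFS with degeneration: an unperturbed simple GIFS on `(V₀, E₀)`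
(condition (P.1)) together with a family of perturbed simple GIFS on `(V̂ = V, Ê)`
for `ε ∈ (0,1)` satisfying condition (P.2). -/
structure PertGIFS (D : ℕ) (V : Type*) where
  /-- vertex set of the unperturbed graph -/
  V₀ : Set V
  /-- edge relation of the unperturbed graph -/
  E₀ : V → V → Prop
  /-- edge relation of the perturbed graph `Ĝ` -/
  EE : V → V → Prop
  /-- unperturbed seed sets (for `v ∈ V̂ ∖ V` these are the sets from (P.2)(ii)) -/
  J : V → Set (Pt D)
  O : V → Set (Pt D)
  /-- unperturbed maps; on `Ê ∖ E` equal to the constants `a v` -/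
  T : V → V → Pt D → Pt D
  a : V → Pt D
  Jε : ℝ → V → Set (Pt D)
  Oε : ℝ → V → Set (Pt D)
  Tε : ℝ → V → V → Pt D → Pt D
  r : ℝ
  r₁ : ℝ
  cpcd : ℝ
  β : ℝ
  c'' : ℝ
  hE₀E : ∀ ⦃v u⦄, E₀ v u → EE v u
  hE₀V : ∀ ⦃v u⦄, E₀ v u → v ∈ V₀ ∧ u ∈ V₀
  -- (P.1): the unperturbed system is a simple GIFS on (V₀, E₀)
  hr : r < 1
  J_cpt : ∀ v, IsCompact (J v)
  J_conn : ∀ v, IsConnected (J v)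
  J_reg : ∀ v ∈ V₀, J v = closure (interior (J v))
  J_diam : ∃ c : ℝ, ∀ v, Metric.diam (J v) ≤ c
  O_open : ∀ v ∈ V₀, IsOpen (O v)
  O_bdd : ∀ v ∈ V₀, Bornology.IsBounded (O v)
  O_conn : ∀ v ∈ V₀, IsConnected (O v)
  hcpcd : 0 < cpcd
  hJO : ∃ c > 0, (∀ v ∈ V₀, ∀ x ∈ J v, ∀ y ∉ O v, c ≤ dist x y) ∧ cpcd < c
  T_diff : ∀ ⦃v u⦄, E₀ v u → ContDiffOn ℝ 1 (T v u) (O u)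
  T_inj : ∀ ⦃v u⦄, E₀ v u → Set.InjOn (T v u) (O u)
  T_openim : ∀ ⦃v u⦄, E₀ v u → IsOpen (T v u '' O u)
  T_sub : ∀ ⦃v u⦄, E₀ v u → T v u '' O u ⊆ O v
  T_J : ∀ ⦃v u⦄, E₀ v u → T v u '' J u ⊆ J v
  T_unit : ∀ ⦃v u⦄, E₀ v u → ∀ x ∈ O u, IsUnit (fderiv ℝ (T v u) x)
  T_contr : ∀ ⦃v u⦄, E₀ v u → ∀ x ∈ O u, ‖fderiv ℝ (T v u) x‖ ≤ r
  /-- `G` has at least one strongly connected component -/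
  hSCC : ∃ C : Set V, C.Nonempty ∧ SCOn E₀ C
  /-- the degenerate maps are the constants `a v` -/
  hTconst : ∀ ⦃v u⦄, EE v u → ¬ E₀ v u → ∀ x, T v u x = a v
  ha : ∀ v, v ∉ V₀ → a v ∈ J v
  -- (P.2): the perturbed systems are simple GIFS on (V, Ê) for each ε ∈ (0,1)
  pJ_cpt : ∀ ε ∈ Set.Ioo (0 : ℝ) 1, ∀ v, IsCompact (Jε ε v)
  pJ_conn : ∀ ε ∈ Set.Ioo (0 : ℝ) 1, ∀ v, IsConnected (Jε ε v)
  pJ_reg : ∀ ε ∈ Set.Ioo (0 : ℝ) 1, ∀ v, Jε ε v = closure (interior (Jε ε v))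
  pJ_diam : ∀ ε ∈ Set.Ioo (0 : ℝ) 1, ∃ c : ℝ, ∀ v, Metric.diam (Jε ε v) ≤ c
  pO_open : ∀ ε ∈ Set.Ioo (0 : ℝ) 1, ∀ v, IsOpen (Oε ε v)
  pO_bdd : ∀ ε ∈ Set.Ioo (0 : ℝ) 1, ∀ v, Bornology.IsBounded (Oε ε v)
  pO_conn : ∀ ε ∈ Set.Ioo (0 : ℝ) 1, ∀ v, IsConnected (Oε ε v)
  pJO : ∀ ε ∈ Set.Ioo (0 : ℝ) 1, ∃ c > 0, ∀ v, ∀ x ∈ Jε ε v, ∀ y ∉ Oε ε v, c ≤ dist x y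
  pT_diff : ∀ ε ∈ Set.Ioo (0 : ℝ) 1, ∀ ⦃v u⦄, EE v u → ContDiffOn ℝ 1 (Tε ε v u) (Oε ε u)
  pT_inj : ∀ ε ∈ Set.Ioo (0 : ℝ) 1, ∀ ⦃v u⦄, EE v u → Set.InjOn (Tε ε v u) (Oε ε u)
  pT_openim : ∀ ε ∈ Set.Ioo (0 : ℝ) 1, ∀ ⦃v u⦄, EE v u → IsOpen (Tε ε v u '' Oε ε u)
  pT_sub : ∀ ε ∈ Set.Ioo (0 : ℝ) 1, ∀ ⦃v u⦄, EE v u → Tε ε v u '' Oε ε u ⊆ Oε ε v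
  pT_J : ∀ ε ∈ Set.Ioo (0 : ℝ) 1, ∀ ⦃v u⦄, EE v u → Tε ε v u '' Jε ε u ⊆ Jε ε v
  pT_unit : ∀ ε ∈ Set.Ioo (0 : ℝ) 1, ∀ ⦃v u⦄, EE v u → ∀ x ∈ Oε ε u,
    IsUnit (fderiv ℝ (Tε ε v u) x)
  pT_contr : ∀ ε ∈ Set.Ioo (0 : ℝ) 1, ∃ ρ < 1, ∀ ⦃v u⦄, EE v u → ∀ x ∈ Oε ε u,
    ‖fderiv ℝ (Tε ε v u) x‖ ≤ ρ
  -- (P.2)(i)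
  p_i : ∃ ε₀ > 0, ∃ c > 0, ∀ ε ∈ Set.Ioo (0 : ℝ) 1, ε < ε₀ →
    ∀ v, ∀ x ∈ Jε ε v, ∀ y ∉ Oε ε v, c ≤ dist x y
  -- (P.2)(ii)
  p_ii : ∃ ε₀ > 0, ∀ ε ∈ Set.Ioo (0 : ℝ) 1, ε < ε₀ →
    ∀ v, Jε ε v ⊆ Metric.thickening cpcd (J v)
  -- (P.2)(iii): uniform convergence of the maps
  p_iii : ∀ δ > 0, ∃ ε₀ > 0, ∀ ε ∈ Set.Ioo (0 : ℝ) 1, ε < ε₀ →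
    ∀ ⦃v u⦄, EE v u → ∀ x ∈ Jε ε u, dist (Tε ε v u x) (T v u x) ≤ δ
  -- (P.2)(iv): convergence of the derivatives, for each initial vertex
  p_iv : ∀ v, ∀ δ > 0, ∃ ε₀ > 0, ∀ ε ∈ Set.Ioo (0 : ℝ) 1, ε < ε₀ →
    ∀ ⦃u : V⦄, EE v u → ∀ x ∈ Jε ε u,
      ‖fderiv ℝ (Tε ε v u) x - fderiv ℝ (T v u) x‖ ≤ δ
  -- (P.2)(v)
  hr₁ : r₁ < 1
  hr₁pos : 0 < r₁
  p_v : ∃ ε₀ > 0, ∀ ε ∈ Set.Ioo (0 : ℝ) 1, ε < ε₀ →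
    ∀ ⦃v u⦄, EE v u → ∀ x ∈ Jε ε u, ‖fderiv ℝ (Tε ε v u) x‖ ≤ r₁
  -- (P.2)(vi)
  hβ : β ∈ Set.Ioc (0 : ℝ) 1
  hc'' : 0 < c''
  p_vi : ∀ ε ∈ Set.Ioo (0 : ℝ) 1, ∀ ⦃v u⦄, EE v u → ∀ x ∈ Oε ε u, ∀ y ∈ Oε ε u,
    |‖fderiv ℝ (Tε ε v u) x‖ - ‖fderiv ℝ (Tε ε v u) y‖| ≤
      c'' * ‖fderiv ℝ (Tε ε v u) x‖ * dist x y ^ β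

/-- The perturbed potential `φ(ε,ω) = log ‖T'_{ω₀ω₁}(ε, π(ε,σω))‖`. -/
def phiEps {D : ℕ} {V : Type*} (P : PertGIFS D V) (πε : ℝ → (ℕ → V) → Pt D)
    (ε : ℝ) (ω : ℕ → V) : ℝ :=
  Real.log ‖fderiv ℝ (P.Tε ε (ω 0) (ω 1)) (πε ε (fun n => ω (n + 1)))‖

/-- The summability interval `I_P^{V̂}` of the perturbation. -/
def IPSet {D : ℕ} {V : Type*} (P : PertGIFS D V) : Set ℝ :=
  {s | 0 ≤ s ∧ ∃ ε₀ > 0,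
    (∑' v : V, ⨆ (ε : ℝ) (_ : ε ∈ Set.Ioo 0 ε₀) (u : V) (_ : P.EE v u)
        (x : Pt D) (_ : x ∈ P.Jε ε u),
        ENNReal.ofReal (‖fderiv ℝ (P.Tε ε v u) x‖ ^ s)) ≠ ⊤}

/-- The summability interval `Ī_P^{V̂}` of the perturbation (with `‖·‖_i`). -/
def IPSetLow {D : ℕ} {V : Type*} (P : PertGIFS D V) : Set ℝ :=
  {s | 0 ≤ s ∧ ∃ ε₀ > 0,
    (∑' v : V, ⨆ (ε : ℝ) (_ : ε ∈ Set.Ioo 0 ε₀) (u : V) (_ : P.EE v u)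
        (x : Pt D) (_ : x ∈ P.Jε ε u),
        ENNReal.ofReal (inorm (fderiv ℝ (P.Tε ε v u) x) ^ s)) ≠ ⊤}

open Classical in
/-- The metric `d_θ` on sequences. -/
def dseq {S : Type*} (θ : ℝ) (ω υ : ℕ → S) : ℝ :=
  if ω = υ then 0 else θ ^ sInf {n : ℕ | ω n ≠ υ n}

end

namespace GIFS

/-! ### Linear maps: the lower norm `inorm` -/

section Inorm

variable {D : ℕ} {A B : Pt D →L[ℝ] Pt D}

lemma inverse_apply_self (hA : IsUnit A) (x : Pt D) : Ring.inverse A (A x) = x := by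
  have h := Ring.inverse_mul_cancel A hA
  simpa using congrArg (fun F : Pt D →L[ℝ] Pt D => F x) h

lemma apply_inverse_self (hA : IsUnit A) (x : Pt D) : A (Ring.inverse A x) = x := by
  have h := Ring.mul_inverse_cancel A hA
  simpa using congrArg (fun F : Pt D →L[ℝ] Pt D => F x) h

lemma inorm_nonneg : 0 ≤ inorm A := inv_nonneg.2 (norm_nonneg _)

lemma inverse_norm_pos [Nontrivial (Pt D)] (hA : IsUnit A) : 0 < ‖Ring.inverse A‖ := by
  obtain ⟨x, hx⟩ := exists_ne (0 : Pt D)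
  refine norm_pos_iff.2 fun h => hx ?_
  have := inverse_apply_self hA x
  rw [h] at this
  simpa using this.symm

lemma inorm_pos [Nontrivial (Pt D)] (hA : IsUnit A) : 0 < inorm A :=
  inv_pos.2 (inverse_norm_pos hA)

lemma inorm_mul_le [Nontrivial (Pt D)] (hA : IsUnit A) (x : Pt D) : inorm A * ‖x‖ ≤ ‖A x‖ := by
  have h := (Ring.inverse A).le_opNorm (A x)
  rw [inverse_apply_self hA] at h
  have hp := inverse_norm_pos hA
  unfold inorm
  rw [inv_mul_le_iff₀ hp]
  exact h

lemma inorm_le_norm [Nontrivial (Pt D)] (hA : IsUnit A) : inorm A ≤ ‖A‖ := by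
  obtain ⟨x, hx⟩ := exists_ne (0 : Pt D)
  have h1 := inorm_mul_le hA x
  have h2 := A.le_opNorm x
  exact le_of_mul_le_mul_right (h1.trans h2) (norm_pos_iff.2 hx)

lemma norm_pos_of_unit [Nontrivial (Pt D)] (hA : IsUnit A) : 0 < ‖A‖ :=
  (inorm_pos hA).trans_le (inorm_le_norm hA)

lemma le_inorm [Nontrivial (Pt D)] (hA : IsUnit A) {m : ℝ} (hm : ∀ x, m * ‖x‖ ≤ ‖A x‖) :
    m ≤ inorm A := by
  rcases le_or_gt m 0 with h | h
  · exact h.trans inorm_nonneg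
  · have : ‖Ring.inverse A‖ ≤ m⁻¹ := by
      refine ContinuousLinearMap.opNorm_le_bound _ (inv_nonneg.2 h.le) fun y => ?_
      have := hm (Ring.inverse A y)
      rw [apply_inverse_self hA] at this
      rwa [← div_eq_inv_mul, le_div_iff₀ h, mul_comm]
    unfold inorm
    exact (le_inv_comm₀ h (inverse_norm_pos hA)).2 this

lemma inorm_sub_le [Nontrivial (Pt D)] (hA : IsUnit A) (hB : IsUnit B) :
    inorm A - ‖B - A‖ ≤ inorm B := by
  refine le_inorm hB fun x => ?_
  have h1 := inorm_mul_le hA x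
  have h2 := (B - A).le_opNorm x
  have h3 : ‖A x‖ ≤ ‖B x‖ + ‖(B - A) x‖ := by
    have : A x = B x - (B - A) x := by simp
    rw [this]; exact norm_sub_le _ _
  linarith [sub_mul (inorm A) ‖B - A‖ ‖x‖]

lemma inorm_of_conformal [Nontrivial (Pt D)] (hA : IsUnit A) (hc : IsConformalMap A) :
    inorm A = ‖A‖ := by
  refine le_antisymm (inorm_le_norm hA) (le_inorm hA fun x => ?_)
  obtain ⟨k, hk, li, rfl⟩ := hc
  have : ‖k • li.toContinuousLinearMap‖ ≤ ‖k‖ :=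
    ContinuousLinearMap.opNorm_le_bound _ (norm_nonneg _) fun y => by simp [norm_smul]
  calc _ ≤ ‖k‖ * ‖x‖ := by gcongr
    _ = _ := by simp [norm_smul]

end Inorm

/-! ### Two facts about Euclidean space -/

/-- If the derivative of `f` expands by at least `m` on the ball `B(x, ρ)`, then the image of that
ball contains the ball of radius `m ρ` around `f x`. The preimage of a straight segment is
followed from `x` on; the set of parameters that can be reached at speed below `ρ` is closed, and
the local inverse shows that it cannot have a maximum before the end of the segment. -/
lemma ball_subset_image {D : ℕ} [Nontrivial (Pt D)] {f : Pt D → Pt D} {O : Set (Pt D)} {x : Pt D}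
    {ρ m : ℝ} (hm : 0 < m) (hO : IsOpen O) (hf : ContDiffOn ℝ 1 f O) (hsub : ball x ρ ⊆ O)
    (hu : ∀ z ∈ ball x ρ, IsUnit (fderiv ℝ f z))
    (hi : ∀ z ∈ ball x ρ, m ≤ inorm (fderiv ℝ f z)) :
    ball (f x) (m * ρ) ⊆ f '' ball x ρ := by
  intro y hy
  rw [mem_ball, dist_eq_norm] at hy
  have hρ : 0 < ρ := by
    by_contra h
    have := norm_nonneg (y - f x)
    nlinarith
  -- a smaller radius that leaves some room
  obtain ⟨ρ', h1, h2⟩ : ∃ ρ', ‖y - f x‖ / m < ρ' ∧ ρ' < ρ :=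
    exists_between (by rwa [div_lt_iff₀' hm])
  have hρ' : 0 < ρ' := (by positivity : 0 ≤ ‖y - f x‖ / m).trans_lt h1
  have h1' : ‖y - f x‖ < m * ρ' := by rwa [div_lt_iff₀' hm] at h1
  set γ : ℝ → Pt D := fun t => f x + t • (y - f x) with hγ
  set S : Set ℝ := {t | ∃ z ∈ closedBall x (ρ' * t), f z = γ t} with hS
  have hcb : ∀ t ∈ Icc (0 : ℝ) 1, closedBall x (ρ' * t) ⊆ ball x ρ := fun t ht =>
    closedBall_subset_ball (by nlinarith [ht.2])
  have hcont : ContinuousOn f (closedBall x ρ') :=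
    hf.continuousOn.mono ((closedBall_subset_ball h2).trans hsub)
  have hclosed : IsClosed (S ∩ Icc 0 1) := by
    -- the set is the projection of a compact set
    have : S ∩ Icc 0 1 = Prod.fst '' {p : ℝ × Pt D | p ∈ Icc (0 : ℝ) 1 ×ˢ closedBall x ρ' ∧
        dist p.2 x ≤ ρ' * p.1 ∧ f p.2 = γ p.1} := by
      ext t
      constructor
      · rintro ⟨⟨z, hz, hz'⟩, ht⟩
        refine ⟨(t, z), ⟨⟨ht, ?_⟩, hz, hz'⟩, rfl⟩
        exact closedBall_subset_closedBall (by nlinarith [ht.2]) hz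
      · rintro ⟨⟨t, z⟩, ⟨⟨ht, hz⟩, hz', hz''⟩, rfl⟩
        exact ⟨⟨z, hz', hz''⟩, ht⟩
    rw [this]
    refine IsCompact.isClosed (IsCompact.image ?_ continuous_fst)
    have hK : IsCompact (Icc (0 : ℝ) 1 ×ˢ closedBall x ρ') :=
      isCompact_Icc.prod (isCompact_closedBall x ρ')
    have hcl : IsClosed {p : ℝ × Pt D | p ∈ Icc (0 : ℝ) 1 ×ˢ closedBall x ρ' ∧
        dist p.2 x ≤ ρ' * p.1 ∧ f p.2 = γ p.1} := by
      have e : {p : ℝ × Pt D | p ∈ Icc (0 : ℝ) 1 ×ˢ closedBall x ρ' ∧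
        dist p.2 x ≤ ρ' * p.1 ∧ f p.2 = γ p.1} = {p : ℝ × Pt D | dist p.2 x ≤ ρ' * p.1} ∩
          ((Icc (0 : ℝ) 1 ×ˢ closedBall x ρ') ∩ (fun p : ℝ × Pt D => f p.2 - γ p.1) ⁻¹' {0}) := by
        ext p
        simp only [mem_ofPred_eq, mem_inter_iff, mem_preimage, mem_singleton_iff, sub_eq_zero]
        tauto
      rw [e]
      refine IsClosed.inter (isClosed_le (by fun_prop) (by fun_prop)) ?_
      refine ContinuousOn.preimage_isClosed_of_isClosed ?_ hK.isClosed isClosed_singleton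
      refine ContinuousOn.sub ?_ (by fun_prop)
      exact hcont.comp continuous_snd.continuousOn fun p hp => hp.2
    exact hK.of_isClosed_subset hcl fun p hp => hp.1
  have h01 : Icc (0 : ℝ) 1 ⊆ S := by
    refine hclosed.Icc_subset_of_forall_exists_gt ⟨x, by simp, by simp [hγ]⟩ ?_
    rintro t ⟨⟨z, hz, hfz⟩, ht⟩ s (hs : t < s)
    have hzb : z ∈ ball x ρ := hcb t ⟨ht.1, ht.2.le⟩ hz
    obtain ⟨A, hA⟩ := hu z hzb
    set e : Pt D ≃L[ℝ] Pt D := ContinuousLinearEquiv.unitsEquiv ℝ (Pt D) A with he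
    have heA : (e : Pt D →L[ℝ] Pt D) = fderiv ℝ f z := by rw [← hA]; ext v; rfl
    have hst : HasStrictFDerivAt f (e : Pt D →L[ℝ] Pt D) z := by
      rw [heA]
      exact (hf.contDiffAt (hO.mem_nhds (hsub hzb))).hasStrictFDerivAt (by norm_num)
    -- the local inverse has derivative of norm at most `1 / m`
    have hinv := hst.to_localInverse
    have hnorm : ‖(e.symm : Pt D →L[ℝ] Pt D)‖ ≤ m⁻¹ := by
      refine ContinuousLinearMap.opNorm_le_bound _ (inv_nonneg.2 hm.le) fun v => ?_
      have h3 := inorm_mul_le (hu z hzb) (e.symm v)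
      have h4 : fderiv ℝ f z (e.symm v) = v := by
        rw [← heA]; simp
      rw [h4] at h3
      have h5 := hi z hzb
      rw [← div_eq_inv_mul, le_div_iff₀ hm]
      have := norm_nonneg (e.symm v)
      simp only [ContinuousLinearEquiv.coe_coe]
      nlinarith
    have hder : HasFDerivAt (hst.localInverse f e z) (e.symm : Pt D →L[ℝ] Pt D) (γ t) := by
      rw [← hfz]; exact hinv.hasFDerivAt
    have hγd : HasDerivWithinAt γ (y - f x) (Ioi t) t := by
      have : HasDerivAt γ ((1 : ℝ) • (y - f x)) t :=
        ((hasDerivAt_id t).smul_const (y - f x)).const_add (f x)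
      simpa using this.hasDerivWithinAt
    have hcomp := hder.comp_hasDerivWithinAt t hγd
    have hgz : (hst.localInverse f e z) (γ t) = z := by
      rw [← hfz]; exact hst.localInverse_apply_image
    have hlim := hcomp.limsup_norm_slope_le (r := ρ') (by
      calc ‖(e.symm : Pt D →L[ℝ] Pt D) (y - f x)‖ ≤ m⁻¹ * ‖y - f x‖ :=
            (ContinuousLinearMap.le_opNorm _ _).trans (by gcongr)
        _ < ρ' := by rwa [← div_eq_inv_mul])
    have hright : ∀ᶠ q in 𝓝[>] t, f (hst.localInverse f e z (γ q)) = γ q := by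
      have : Tendsto γ (𝓝[>] t) (𝓝 (f z)) := by
        rw [hfz]
        exact (by fun_prop : Continuous γ).continuousAt.tendsto.mono_left nhdsWithin_le_nhds
      exact this.eventually hst.eventually_right_inverse
    obtain ⟨q, ⟨hq1, hq2⟩, hq3⟩ :=
      ((hlim.and hright).and (Ioc_mem_nhdsGT hs)).exists
    refine ⟨q, ⟨hst.localInverse f e z (γ q), ?_, hq2⟩, hq3⟩
    have hqt : 0 < q - t := sub_pos.2 hq3.1
    simp only [Function.comp_apply, hgz, Real.norm_eq_abs, abs_of_pos hqt] at hq1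
    rw [inv_mul_lt_iff₀ hqt] at hq1
    rw [mem_closedBall] at hz ⊢
    calc dist (hst.localInverse f e z (γ q)) x
        ≤ dist (hst.localInverse f e z (γ q)) z + dist z x := dist_triangle _ _ _
      _ ≤ (q - t) * ρ' + ρ' * t := by rw [dist_eq_norm]; exact add_le_add hq1.le hz
      _ = ρ' * q := by ring
  obtain ⟨z, hz, hfz⟩ := h01 (right_mem_Icc.2 zero_le_one)
  exact ⟨z, hcb 1 (by simp) hz, by simpa [hγ] using hfz⟩

/-- A set of diameter at most `R` in `ℝ^D` splits into at most `M` pieces of diameter below `c`,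
with `M` depending only on `D`, `R` and `c`. -/
lemma exists_cells (D : ℕ) (R c : ℝ) (hc : 0 < c) : ∃ M : ℕ, ∀ S : Set (Pt D),
    (∀ x ∈ S, ∀ z ∈ S, dist x z ≤ R) →
      ∃ cell : Pt D → Fin M, ∀ x ∈ S, ∀ z ∈ S, cell x = cell z → dist x z < c := by
  obtain ⟨t, htf, ht⟩ := Metric.totallyBounded_iff.1
    (isCompact_closedBall (0 : Pt D) R).totallyBounded (c / 2) (half_pos hc)
  have : Fintype t := htf.fintype
  refine ⟨Fintype.card t + 1, fun S hS => ?_⟩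
  rcases S.eq_empty_or_nonempty with rfl | ⟨p, hp⟩
  · exact ⟨fun _ => 0, by simp⟩
  have key : ∀ x ∈ S, ∃ y : t, dist (x - p) y < c / 2 := by
    intro x hx
    have hx' : x - p ∈ closedBall (0 : Pt D) R := by
      simpa [← dist_eq_norm] using hS x hx p hp
    obtain ⟨y, hy, hxy⟩ := mem_iUnion₂.1 (ht hx')
    exact ⟨⟨y, hy⟩, hxy⟩
  classical
  refine ⟨fun x => if h : ∃ y : t, dist (x - p) y < c / 2 then
    (Fintype.equivFin t h.choose).castSucc else 0, fun x hx z hz hxz => ?_⟩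
  simp only [key x hx, key z hz, dif_pos, Fin.castSucc_inj, EmbeddingLike.apply_eq_iff_eq] at hxz
  have h1 := (key x hx).choose_spec
  have h2 := (key z hz).choose_spec
  rw [← hxz] at h2
  calc dist x z = dist (x - p) (z - p) := by simp
    _ < c := by
      have := dist_triangle_right (x - p) (z - p) ((key x hx).choose : Pt D)
      linarith

/-- A connected set of diameter at most `R` is stretched to diameter at most `M d` by a continuous
map that moves points closer than `c` to points at distance at most `d`: the distances to a fixed
image point fill an interval, which is covered by `M` sets of length at most `d`. -/
lemma exists_chain_bound (D : ℕ) (R c : ℝ) (hc : 0 < c) : ∃ M : ℕ, ∀ S : Set (Pt D),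
    IsPreconnected S → (∀ x ∈ S, ∀ z ∈ S, dist x z ≤ R) → ∀ f : Pt D → Pt D, ContinuousOn f S →
      ∀ d : ℝ, (∀ x ∈ S, ∀ z ∈ S, dist x z < c → dist (f x) (f z) ≤ d) →
        ∀ x ∈ S, ∀ z ∈ S, dist (f x) (f z) ≤ M * d := by
  obtain ⟨M, hM⟩ := exists_cells D R c hc
  refine ⟨M, fun S hS hR f hf d hd x hx z hz => ?_⟩
  obtain ⟨cell, hcell⟩ := hM S hR
  have hd0 : 0 ≤ d := by simpa using hd x hx x hx (by simpa using hc)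
  set h : Pt D → ℝ := fun y => dist (f x) (f y) with hh
  have hpre : IsPreconnected (h '' S) := hS.image h (by fun_prop)
  have hIcc : Icc 0 (h z) ⊆ h '' S :=
    hpre.Icc_subset ⟨x, hx, by simp [hh]⟩ ⟨z, hz, rfl⟩
  have hcov : h '' S ⊆ ⋃ i : Fin M, h '' {y ∈ S | cell y = i} := by
    rintro _ ⟨y, hy, rfl⟩
    exact mem_iUnion.2 ⟨cell y, y, ⟨hy, rfl⟩, rfl⟩
  have hvol : ∀ i : Fin M, MeasureTheory.volume (h '' {y ∈ S | cell y = i}) ≤ ENNReal.ofReal d := by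
    intro i
    refine (Real.volume_le_diam _).trans (ediam_le ?_)
    rintro _ ⟨y, ⟨hy, hyi⟩, rfl⟩ _ ⟨y', ⟨hy', hyi'⟩, rfl⟩
    rw [edist_dist]
    refine ENNReal.ofReal_le_ofReal ?_
    refine le_trans ?_ (hd y hy y' hy' (hcell y hy y' hy' (hyi.trans hyi'.symm)))
    rw [Real.dist_eq]
    simp only [hh]
    rw [dist_comm (f x), dist_comm (f x)]
    exact abs_dist_sub_le _ _ _
  have : ENNReal.ofReal (h z) ≤ ENNReal.ofReal (M * d) := by
    calc ENNReal.ofReal (h z) = MeasureTheory.volume (Icc 0 (h z)) := by simp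
      _ ≤ MeasureTheory.volume (⋃ i : Fin M, h '' {y ∈ S | cell y = i}) :=
        MeasureTheory.measure_mono (hIcc.trans hcov)
      _ ≤ ∑ i : Fin M, MeasureTheory.volume (h '' {y ∈ S | cell y = i}) :=
        MeasureTheory.measure_iUnion_fintype_le _ _
      _ ≤ ∑ _i : Fin M, ENNReal.ofReal d := Finset.sum_le_sum fun i _ => hvol i
      _ = ENNReal.ofReal (M * d) := by
        rw [ENNReal.ofReal_mul (by positivity)]; simp
  exact (ENNReal.ofReal_le_ofReal_iff (by positivity)).1 this

end GIFS

noncomputable section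
namespace GIFS

/-! ### Words, their maps and their derivative products -/

section Words

variable {D : ℕ} {V : Type*}

/-- The first letter of the word `w u`. -/
def hd (w : List V) (u : V) : V := w.headD u

/-- The word `w u` is a path of the graph `E`. -/
def adm (E : V → V → Prop) : List V → V → Prop
  | [], _ => True
  | v :: w, u => E v (hd w u) ∧ adm E w u

/-- The composition `T_{w₀w₁} ∘ ⋯ ∘ T_{w_{n-1}u}` along the word `w u`. -/
def fmap (T : V → V → Pt D → Pt D) : List V → V → Pt D → Pt D
  | [], _, x => x
  | v :: w, u, x => T v (hd w u) (fmap T w u x)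

/-- The product of `g (T'_{w_k w_{k+1}})` along the word `w u`, each derivative taken at the
corresponding image of `x`; it is used for the norm and for `inorm`. -/
def wprod (T : V → V → Pt D → Pt D) (g : (Pt D →L[ℝ] Pt D) → ℝ) : List V → V → Pt D → ℝ
  | [], _, _ => 1
  | v :: w, u, x => g (fderiv ℝ (T v (hd w u)) (fmap T w u x)) * wprod T g w u x

variable {E : V → V → Prop} {T : V → V → Pt D → Pt D} {g : (Pt D →L[ℝ] Pt D) → ℝ}

@[simp] lemma hd_nil (u : V) : hd [] u = u := rfl
@[simp] lemma hd_cons (v : V) (w : List V) (u : V) : hd (v :: w) u = v := rfl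
@[simp] lemma adm_nil (u : V) : adm E [] u := trivial
lemma adm_cons (v : V) (w : List V) (u : V) : adm E (v :: w) u ↔ E v (hd w u) ∧ adm E w u :=
  Iff.rfl
@[simp] lemma fmap_nil (u : V) (x : Pt D) : fmap T [] u x = x := rfl
lemma fmap_cons (v : V) (w : List V) (u : V) (x : Pt D) :
    fmap T (v :: w) u x = T v (hd w u) (fmap T w u x) := rfl
@[simp] lemma wprod_nil (u : V) (x : Pt D) : wprod T g [] u x = 1 := rfl
lemma wprod_cons (v : V) (w : List V) (u : V) (x : Pt D) : wprod T g (v :: w) u x =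
    g (fderiv ℝ (T v (hd w u)) (fmap T w u x)) * wprod T g w u x := rfl

lemma hd_append (w w' : List V) (u : V) : hd (w ++ w') u = hd w (hd w' u) := by
  cases w <;> simp

lemma adm_append (w w' : List V) (u : V) :
    adm E (w ++ w') u ↔ adm E w (hd w' u) ∧ adm E w' u := by
  induction w with
  | nil => simp
  | cons v w ih => simp [adm_cons, ih, hd_append, and_assoc]

lemma fmap_append (w w' : List V) (u : V) (x : Pt D) :
    fmap T (w ++ w') u x = fmap T w (hd w' u) (fmap T w' u x) := by
  induction w with
  | nil => simp
  | cons v w ih => simp [fmap_cons, ih, hd_append]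

lemma wprod_append (w w' : List V) (u : V) (x : Pt D) :
    wprod T g (w ++ w') u x =
      wprod T g w (hd w' u) (fmap T w' u x) * wprod T g w' u x := by
  induction w with
  | nil => simp
  | cons v w ih => simp [wprod_cons, ih, hd_append, fmap_append, mul_assoc]

lemma adm_mono {E' : V → V → Prop} (h : ∀ ⦃v u⦄, E v u → E' v u) (w : List V) (u : V)
    (hw : adm E w u) : adm E' w u := by
  induction w with
  | nil => trivial
  | cons v w ih => exact ⟨h hw.1, ih hw.2⟩

lemma wprod_norm_nonneg (w : List V) (u : V) (x : Pt D) : 0 ≤ wprod T norm w u x := by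
  induction w with
  | nil => simp
  | cons v w ih => exact mul_nonneg (norm_nonneg _) ih

end Words

/-! ### Systems with uniform constants -/

/-- The geometric data of a simple GIFS together with quantitative constants: `c` is a radius of
balls around points of `J u` contained in `O u` on which every map contracts by `r`, `R` bounds the
diameters of the seed sets, and `b`, `β` are distortion constants for both `‖·‖` and `inorm`. -/
structure GS {D : ℕ} {V : Type*} (E : V → V → Prop) (J O : V → Set (Pt D))
    (T : V → V → Pt D → Pt D) (c R r b β : ℝ) : Prop where
  hc : 0 < c
  hR : 0 ≤ R
  hr0 : 0 < r
  hr1 : r < 1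
  hb : 0 ≤ b
  hβ : 0 < β
  J_conn : ∀ v, IsConnected (J v)
  J_cpt : ∀ v, IsCompact (J v)
  J_diam : ∀ v, ∀ x ∈ J v, ∀ z ∈ J v, dist x z ≤ R
  O_open : ∀ ⦃v u⦄, E v u → IsOpen (O u)
  JO : ∀ ⦃v u⦄, E v u → ∀ x ∈ J u, ball x c ⊆ O u
  T_diff : ∀ ⦃v u⦄, E v u → ContDiffOn ℝ 1 (T v u) (O u)
  T_inj : ∀ ⦃v u⦄, E v u → Set.InjOn (T v u) (O u)
  T_sub : ∀ ⦃v u⦄, E v u → T v u '' O u ⊆ O v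
  T_J : ∀ ⦃v u⦄, E v u → T v u '' J u ⊆ J v
  T_unit : ∀ ⦃v u⦄, E v u → ∀ x ∈ O u, IsUnit (fderiv ℝ (T v u) x)
  T_r : ∀ ⦃v u⦄, E v u → ∀ x ∈ J u, ∀ z ∈ ball x c, ‖fderiv ℝ (T v u) z‖ ≤ r
  bd : ∀ ⦃v u⦄, E v u → ∀ x ∈ O u, ∀ z ∈ O u,
    |‖fderiv ℝ (T v u) x‖ - ‖fderiv ℝ (T v u) z‖| ≤ b * ‖fderiv ℝ (T v u) x‖ * dist x z ^ β
  bdi : ∀ ⦃v u⦄, E v u → ∀ x ∈ O u, ∀ z ∈ O u,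
    |inorm (fderiv ℝ (T v u) x) - inorm (fderiv ℝ (T v u) z)| ≤
      b * inorm (fderiv ℝ (T v u) x) * dist x z ^ β

/-- The number of pieces provided by `exists_chain_bound`. -/
def chainM (D : ℕ) (R c : ℝ) : ℕ :=
  if hc : 0 < c then (exists_chain_bound D R c hc).choose else 0

/-- Distortion constant for pairs of points at initial distance at most `h`. -/
def dconst (r b β h : ℝ) : ℝ := Real.exp (b * h ^ β * (1 - r ^ β)⁻¹)

lemma dconst_pos (r b β h : ℝ) : 0 < dconst r b β h := Real.exp_pos _

lemma mul_pow_rpow {h r β : ℝ} (hh : 0 ≤ h) (hr : 0 ≤ r) (n : ℕ) :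
    (h * r ^ n) ^ β = h ^ β * (r ^ β) ^ n := by
  rw [Real.mul_rpow hh (by positivity), ← Real.rpow_natCast, ← Real.rpow_mul hr, mul_comm (n : ℝ),
    Real.rpow_mul hr, Real.rpow_natCast]

/-- The partial distortion exponents `b h^β (1 + r^β + ⋯ + r^{β(n-1)})`. -/
def dsum (r b β h : ℝ) (n : ℕ) : ℝ := b * h ^ β * ∑ j ∈ Finset.range n, (r ^ β) ^ j

lemma dsum_succ (r b β h : ℝ) (n : ℕ) :
    dsum r b β h (n + 1) = b * h ^ β * (r ^ β) ^ n + dsum r b β h n := by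
  rw [dsum, dsum, Finset.sum_range_succ]; ring

lemma dsum_le {r b β h : ℝ} (hr0 : 0 < r) (hr1 : r < 1) (hb : 0 ≤ b) (hβ : 0 < β) (hh : 0 ≤ h)
    (n : ℕ) : Real.exp (dsum r b β h n) ≤ dconst r b β h := by
  have h1 : r ^ β < 1 := Real.rpow_lt_one hr0.le hr1 hβ
  have h0 : 0 ≤ r ^ β := by positivity
  refine Real.exp_le_exp.2 (mul_le_mul_of_nonneg_left ?_ (by positivity))
  rw [← tsum_geometric_of_lt_one h0 h1]
  exact (summable_geometric_of_lt_one h0 h1).sum_le_tsum _ fun _ _ => by positivity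

lemma one_le_dconst {r b β h : ℝ} (hr0 : 0 < r) (hr1 : r < 1) (hb : 0 ≤ b) (hβ : 0 < β)
    (hh : 0 ≤ h) : 1 ≤ dconst r b β h := by
  simpa [dsum] using dsum_le hr0 hr1 hb hβ hh 0

namespace GS

variable {D : ℕ} {V : Type*} {E : V → V → Prop} {J O : V → Set (Pt D)}
  {T : V → V → Pt D → Pt D} {c R r b β : ℝ}

section

variable (h : GS E J O T c R r b β)
include h

lemma J_sub {v u : V} (e : E v u) : J u ⊆ O u := fun x hx => h.JO e x hx (mem_ball_self h.hc)

lemma fmap_mem (w : List V) (u : V) (hw : adm E w u) {x : Pt D} (hx : x ∈ J u) :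
    fmap T w u x ∈ J (hd w u) := by
  induction w with
  | nil => exact hx
  | cons v w ih => exact h.T_J hw.1 ⟨_, ih hw.2, rfl⟩

lemma fmap_injOn (w : List V) (u : V) (hw : adm E w u) :
    (∀ x, (w = [] ∨ x ∈ O u) → w ≠ [] → fmap T w u x ∈ O (hd w u)) ∧
    InjOn (fmap T w u) (O u) := by
  induction w with
  | nil => exact ⟨fun x _ h => absurd rfl h, fun x _ y _ hxy => hxy⟩
  | cons v w ih =>
    obtain ⟨ih1, ih2⟩ := ih hw.2
    have hmem : ∀ x ∈ O u, fmap T w u x ∈ O (hd w u) := by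
      intro x hx
      by_cases hw0 : w = []
      · subst hw0; exact hx
      · exact ih1 x (Or.inr hx) hw0
    refine ⟨fun x hx _ => ?_, fun x hx y hy hxy => ?_⟩
    · exact h.T_sub hw.1 ⟨_, hmem x (by simpa using hx), rfl⟩
    · exact ih2 hx hy (h.T_inj hw.1 (hmem x hx) (hmem y hy) hxy)

lemma differentiableAt {v u : V} (e : E v u) {x : Pt D} (hx : x ∈ O u) :
    DifferentiableAt ℝ (T v u) x :=
  ((h.T_diff e).contDiffAt ((h.O_open e).mem_nhds hx)).differentiableAt (by norm_num)

/-- One-step distortion of the norm of the derivative. -/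
lemma norm_le {v u : V} (e : E v u) {x z : Pt D} (hx : x ∈ O u) (hz : z ∈ O u) :
    ‖fderiv ℝ (T v u) x‖ ≤ Real.exp (b * dist x z ^ β) * ‖fderiv ℝ (T v u) z‖ := by
  have h1 := (abs_le.1 (h.bd e z hz x hx)).1
  have h2 := Real.add_one_le_exp (b * dist x z ^ β)
  rw [dist_comm z x] at h1
  have := norm_nonneg (fderiv ℝ (T v u) z)
  nlinarith

/-- One-step distortion of the lower norm of the derivative. -/
lemma inorm_le {v u : V} (e : E v u) {x z : Pt D} (hx : x ∈ O u) (hz : z ∈ O u) :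
    inorm (fderiv ℝ (T v u) x) ≤
      Real.exp (b * dist x z ^ β) * inorm (fderiv ℝ (T v u) z) := by
  have h1 := (abs_le.1 (h.bdi e z hz x hx)).1
  have h2 := Real.add_one_le_exp (b * dist x z ^ β)
  rw [dist_comm z x] at h1
  have := inorm_nonneg (A := fderiv ℝ (T v u) z)
  nlinarith

lemma dist_step {v u : V} (e : E v u) {x z : Pt D} (hx : x ∈ J u) (hz : dist z x < c) :
    dist (T v u z) (T v u x) ≤ r * dist z x := by
  rw [dist_eq_norm, dist_eq_norm]
  exact (convex_ball x c).norm_image_sub_le_of_norm_fderiv_le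
    (fun y hy => h.differentiableAt e (h.JO e x hx hy)) (fun y hy => h.T_r e x hx y hy)
    (mem_ball_self h.hc) hz

lemma dist_step' {v u : V} (e : E v u) {x z : Pt D} (hx : x ∈ J u) (hz : dist z x < c) :
    dist (T v u z) (T v u x) ≤
      Real.exp (b * dist z x ^ β) * ‖fderiv ℝ (T v u) x‖ * dist z x := by
  have hsub : closedBall x (dist z x) ⊆ O u :=
    (closedBall_subset_ball hz).trans (h.JO e x hx)
  have hxO := h.J_sub e hx
  have key := (convex_closedBall x (dist z x)).norm_image_sub_le_of_norm_fderiv_le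
    (f := T v u) (C := Real.exp (b * dist z x ^ β) * ‖fderiv ℝ (T v u) x‖)
    (fun y hy => h.differentiableAt e (hsub hy)) (fun y hy => ?_)
    (mem_closedBall_self dist_nonneg) (mem_closedBall.2 le_rfl)
  · rwa [← dist_eq_norm, ← dist_eq_norm] at key
  refine (h.norm_le e (hsub hy) hxO).trans ?_
  have := h.hb
  have := h.hβ
  gcongr
  exact mem_closedBall.1 hy

lemma fmap_near (w : List V) (u : V) (hw : adm E w u) {x z : Pt D} (hx : x ∈ J u)
    (hz : dist z x < c) :
    dist (fmap T w u z) (fmap T w u x) ≤ dist z x * r ^ w.length := by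
  induction w with
  | nil => simp
  | cons v w ih =>
    have ih' := ih hw.2
    have hpow : r ^ w.length ≤ 1 := pow_le_one₀ h.hr0.le h.hr1.le
    have hlt : dist (fmap T w u z) (fmap T w u x) < c :=
      ih'.trans_lt ((mul_le_of_le_one_right dist_nonneg hpow).trans_lt hz)
    have := h.dist_step hw.1 (h.fmap_mem w u hw.2 hx) hlt
    rw [fmap_cons, fmap_cons, List.length_cons, pow_succ]
    have h0 := h.hr0
    nlinarith [mul_le_mul_of_nonneg_left ih' h0.le]

lemma wprod_norm_le (w : List V) (u : V) (hw : adm E w u) {x : Pt D} (hx : x ∈ J u) :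
    wprod T norm w u x ≤ r ^ w.length := by
  induction w with
  | nil => simp
  | cons v w ih =>
    rw [wprod_cons, List.length_cons, pow_succ, mul_comm]
    exact mul_le_mul (ih hw.2)
      (h.T_r hw.1 _ (h.fmap_mem w u hw.2 hx) _ (mem_ball_self h.hc)) (norm_nonneg _)
      (pow_nonneg h.hr0.le _)

lemma wprod_norm_le_one (w : List V) (u : V) (hw : adm E w u) {x : Pt D} (hx : x ∈ J u) :
    wprod T norm w u x ≤ 1 :=
  (h.wprod_norm_le w u hw hx).trans (pow_le_one₀ h.hr0.le h.hr1.le)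

lemma fmap_near' (w : List V) (u : V) (hw : adm E w u) {x z : Pt D} (hx : x ∈ J u)
    (hz : dist z x < c) :
    dist (fmap T w u z) (fmap T w u x) ≤
      Real.exp (dsum r b β c w.length) * wprod T norm w u x * dist z x := by
  induction w with
  | nil => simp [dsum]
  | cons v w ih =>
    have ih' := ih hw.2
    have h0 := h.hr0
    have hc := h.hc
    have hb := h.hb
    have hβ := h.hβ
    have hpow : r ^ w.length ≤ 1 := pow_le_one₀ h.hr0.le h.hr1.le
    have hnear := h.fmap_near w u hw.2 hx hz
    have hlt : dist (fmap T w u z) (fmap T w u x) < c :=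
      hnear.trans_lt ((mul_le_of_le_one_right dist_nonneg hpow).trans_lt hz)
    have hstep := h.dist_step' hw.1 (h.fmap_mem w u hw.2 hx) hlt
    have hdist : dist (fmap T w u z) (fmap T w u x) ^ β ≤ c ^ β * (r ^ β) ^ w.length := by
      rw [← mul_pow_rpow hc.le h0.le]
      refine Real.rpow_le_rpow dist_nonneg (hnear.trans ?_) hβ.le
      gcongr
    rw [fmap_cons, fmap_cons, List.length_cons, dsum_succ, Real.exp_add, wprod_cons]
    calc _ ≤ _ := hstep
      _ ≤ Real.exp (b * (c ^ β * (r ^ β) ^ w.length)) *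
          ‖fderiv ℝ (T v (hd w u)) (fmap T w u x)‖ *
          (Real.exp (dsum r b β c w.length) * wprod T norm w u x * dist z x) := by
        gcongr
      _ = _ := by ring_nf

lemma continuousOn_fmap (w : List V) (u : V) (hw : adm E w u) :
    ContinuousOn (fmap T w u) (J u) := by
  induction w with
  | nil => exact continuousOn_id
  | cons v w ih =>
    exact ((h.T_diff hw.1).continuousOn.mono (h.J_sub hw.1)).comp (ih hw.2)
      fun x hx => h.fmap_mem w u hw.2 hx

lemma chainM_spec {S : Set (Pt D)} (hS : IsPreconnected S) (hS' : ∀ x ∈ S, ∀ z ∈ S, dist x z ≤ R)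
    {f : Pt D → Pt D} (hf : ContinuousOn f S) {d : ℝ}
    (hfd : ∀ x ∈ S, ∀ z ∈ S, dist x z < c → dist (f x) (f z) ≤ d) :
    ∀ x ∈ S, ∀ z ∈ S, dist (f x) (f z) ≤ chainM D R c * d := by
  unfold chainM
  rw [dif_pos h.hc]
  exact (exists_chain_bound D R c h.hc).choose_spec S hS hS' f hf d hfd

/-- Uniform exponential contraction of the seed sets. -/
lemma fmap_far (w : List V) (u : V) (hw : adm E w u) {x z : Pt D} (hx : x ∈ J u)
    (hz : z ∈ J u) :
    dist (fmap T w u x) (fmap T w u z) ≤ (chainM D R c * c) * r ^ w.length := by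
  rw [mul_assoc]
  refine h.chainM_spec (h.J_conn u).isPreconnected (h.J_diam u) (h.continuousOn_fmap w u hw)
    (fun y hy y' hy' hyy' => ?_) x hx z hz
  refine (h.fmap_near w u hw hy' hyy').trans ?_
  have := h.hr0
  gcongr

/-- The size of `T_w (J u)` is controlled by the derivative product and the size of `J u`. -/
lemma fmap_diam (w : List V) (u : V) (hw : adm E w u) {B : ℝ}
    (hB : ∀ x ∈ J u, wprod T norm w u x ≤ B) {x z : Pt D} (hx : x ∈ J u) (hz : z ∈ J u) :
    dist (fmap T w u x) (fmap T w u z) ≤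
      ((chainM D R c + 1) * dconst r b β c) * B * diam (J u) := by
  have hc := h.hc
  have hB0 : 0 ≤ B := (wprod_norm_nonneg w u x).trans (hB x hx)
  have hdc := dconst_pos r b β c
  have hle : Real.exp (dsum r b β c w.length) ≤ dconst r b β c :=
    dsum_le h.hr0 h.hr1 h.hb h.hβ hc.le _
  have hloc : ∀ y ∈ J u, ∀ y' ∈ J u, dist y y' < c →
      dist (fmap T w u y) (fmap T w u y') ≤ dconst r b β c * B * dist y y' := by
    intro y hy y' hy' hyy'
    refine (h.fmap_near' w u hw hy' hyy').trans ?_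
    gcongr
    · exact wprod_norm_nonneg w u y'
    · exact hB y' hy'
  have hdist : ∀ y ∈ J u, ∀ y' ∈ J u, dist y y' ≤ diam (J u) := fun y hy y' hy' =>
    dist_le_diam_of_mem (h.J_cpt u).isBounded hy hy'
  have hdiam : 0 ≤ diam (J u) := diam_nonneg
  rcases lt_or_ge (diam (J u)) c with hlt | hge
  · calc _ ≤ dconst r b β c * B * dist x z := hloc x hx z hz ((hdist x hx z hz).trans_lt hlt)
      _ ≤ dconst r b β c * B * diam (J u) := by gcongr; exact hdist x hx z hz
      _ = (1 * dconst r b β c) * B * diam (J u) := by ring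
      _ ≤ _ := by gcongr; simp
  · calc _ ≤ chainM D R c * (dconst r b β c * B * c) :=
        h.chainM_spec (h.J_conn u).isPreconnected (h.J_diam u) (h.continuousOn_fmap w u hw)
          (fun y hy y' hy' hyy' => (hloc y hy y' hy' hyy').trans (by gcongr)) x hx z hz
      _ ≤ chainM D R c * (dconst r b β c * B * diam (J u)) := by gcongr
      _ = (chainM D R c * dconst r b β c) * B * diam (J u) := by ring
      _ ≤ _ := by gcongr; simp

/-- Bounded distortion of the derivative products between points of the seed set. -/
lemma wprod_distort (w : List V) (u : V) (hw : adm E w u) {x z : Pt D} (hx : x ∈ J u)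
    (hz : z ∈ J u) :
    wprod T norm w u x ≤ dconst r b β (chainM D R c * c) * wprod T norm w u z := by
  have hc := h.hc
  have h0 := h.hr0
  have hb := h.hb
  have hβ := h.hβ
  refine le_trans ?_ (mul_le_mul_of_nonneg_right (dsum_le h.hr0 h.hr1 h.hb h.hβ (by positivity)
    w.length) (wprod_norm_nonneg w u z))
  induction w with
  | nil => simp [dsum]
  | cons v w ih =>
    have hdist : dist (fmap T w u x) (fmap T w u z) ^ β ≤
        (chainM D R c * c) ^ β * (r ^ β) ^ w.length := by
      rw [← mul_pow_rpow (by positivity) h0.le]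
      exact Real.rpow_le_rpow dist_nonneg (h.fmap_far w u hw.2 hx hz) hβ.le
    have hO : ∀ y ∈ J u, fmap T w u y ∈ O (hd w u) := fun y hy =>
      h.J_sub hw.1 (h.fmap_mem w u hw.2 hy)
    rw [List.length_cons, dsum_succ, Real.exp_add, wprod_cons, wprod_cons]
    calc _ ≤ (Real.exp (b * ((chainM D R c * c) ^ β * (r ^ β) ^ w.length)) *
          ‖fderiv ℝ (T v (hd w u)) (fmap T w u z)‖) *
          (Real.exp (dsum r b β (chainM D R c * c) w.length) * wprod T norm w u z) := by
          refine mul_le_mul ((h.norm_le hw.1 (hO x hx) (hO z hz)).trans ?_) (ih hw.2)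
            (wprod_norm_nonneg w u x) (by positivity)
          gcongr
      _ = _ := by ring_nf

variable [Nontrivial (Pt D)]

lemma wprod_pos (w : List V) (u : V) (hw : adm E w u) {x : Pt D} (hx : x ∈ J u) :
    0 < wprod T inorm w u x ∧ wprod T inorm w u x ≤ wprod T norm w u x := by
  induction w with
  | nil => simp
  | cons v w ih =>
    obtain ⟨h1, h2⟩ := ih hw.2
    have hu := h.T_unit hw.1 _ (h.J_sub hw.1 (h.fmap_mem w u hw.2 hx))
    exact ⟨mul_pos (inorm_pos hu) h1,
      mul_le_mul (inorm_le_norm hu) h2 h1.le (norm_nonneg _)⟩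

/-- The image of a small ball under a composition contains a ball of comparable radius. -/
lemma ball_subset_fmap (w : List V) (u : V) (hw : adm E w u) {y : Pt D} (hy : y ∈ J u) {ρ : ℝ}
    (hρ0 : 0 < ρ) (hρ : ρ ≤ c) :
    ball (fmap T w u y) (Real.exp (-dsum r b β c w.length) * wprod T inorm w u y * ρ) ⊆
      fmap T w u '' ball y ρ := by
  have hc := h.hc
  have h0 := h.hr0
  have hb := h.hb
  have hβ := h.hβ
  induction w with
  | nil =>
    simp only [dsum, List.length_nil, Finset.range_zero, Finset.sum_empty, mul_zero, neg_zero,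
      Real.exp_zero, wprod_nil, one_mul, fmap_nil]
    exact fun z hz => ⟨z, hz, rfl⟩
  | cons v w ih =>
    have hy' := h.fmap_mem w u hw.2 hy
    have hp := h.wprod_pos w u hw.2 hy
    set ρ' := Real.exp (-dsum r b β c w.length) * wprod T inorm w u y * ρ with hρ'
    have hds : 0 ≤ dsum r b β c w.length := by unfold dsum; positivity
    have hρ'0 : 0 < ρ' := mul_pos (mul_pos (Real.exp_pos _) hp.1) hρ0
    have hρ'le : ρ' ≤ c * r ^ w.length := by
      have h1 : Real.exp (-dsum r b β c w.length) ≤ 1 := Real.exp_le_one_iff.2 (by linarith)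
      have h2 := hp.2.trans (h.wprod_norm_le w u hw.2 hy)
      calc ρ' ≤ 1 * r ^ w.length * c := by
            rw [hρ']
            gcongr
            exact hp.1.le
        _ = _ := by ring
    have hρ'c : ρ' ≤ c :=
      hρ'le.trans (mul_le_of_le_one_right hc.le (pow_le_one₀ h.hr0.le h.hr1.le))
    set m := Real.exp (-(b * c ^ β * (r ^ β) ^ w.length)) *
      inorm (fderiv ℝ (T v (hd w u)) (fmap T w u y)) with hm
    have hsub : ball (fmap T w u y) ρ' ⊆ O (hd w u) :=
      (ball_subset_ball hρ'c).trans (h.JO hw.1 _ hy')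
    have key := ball_subset_image (f := T v (hd w u)) (x := fmap T w u y) (ρ := ρ') (m := m)
      (mul_pos (Real.exp_pos _) (inorm_pos (h.T_unit hw.1 _ (h.J_sub hw.1 hy'))))
      (h.O_open hw.1) (h.T_diff hw.1) hsub (fun z hz => h.T_unit hw.1 z (hsub hz)) (by
        intro z hz
        have h1 := h.inorm_le hw.1 (h.J_sub hw.1 hy') (hsub hz)
        have h2 : dist (fmap T w u y) z ^ β ≤ c ^ β * (r ^ β) ^ w.length := by
          rw [← mul_pow_rpow hc.le h0.le, dist_comm]
          exact Real.rpow_le_rpow dist_nonneg ((mem_ball.1 hz).le.trans hρ'le) hβ.le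
        rw [hm, Real.exp_neg, inv_mul_le_iff₀ (Real.exp_pos _)]
        refine h1.trans ?_
        rw [mul_assoc b]
        have := inorm_nonneg (A := fderiv ℝ (T v (hd w u)) z)
        gcongr)
    have e : Real.exp (-dsum r b β c (v :: w).length) * wprod T inorm (v :: w) u y * ρ =
        m * ρ' := by
      rw [List.length_cons, dsum_succ, neg_add, Real.exp_add, wprod_cons, hm, hρ']
      ring
    rw [e, fmap_cons]
    refine key.trans ?_
    rintro _ ⟨z, hz, rfl⟩
    obtain ⟨z', hz', rfl⟩ := ih hw.2 hz
    exact ⟨z', hz', rfl⟩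

lemma ball_subset_fmap' (w : List V) (u : V) (hw : adm E w u) {y : Pt D} (hy : y ∈ J u) {ρ : ℝ}
    (hρ0 : 0 < ρ) (hρ : ρ ≤ c) :
    ball (fmap T w u y) ((dconst r b β c)⁻¹ * wprod T inorm w u y * ρ) ⊆
      fmap T w u '' ball y ρ := by
  refine subset_trans (ball_subset_ball ?_) (h.ball_subset_fmap w u hw hy hρ0 hρ)
  have := (h.wprod_pos w u hw hy).1
  rw [Real.exp_neg]
  gcongr
  exact dsum_le h.hr0 h.hr1 h.hb h.hβ h.hc.le _

/-- The compositions expand distances at least by the product of the lower norms, up to a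
constant. -/
lemma lower_lipschitz (w : List V) (u : V) (hw : adm E w u) {x z : Pt D} (hx : x ∈ J u)
    (hz : z ∈ J u) :
    ((dconst r b β c)⁻¹ * (c / (c + R))) * wprod T inorm w u x * dist x z ≤
      dist (fmap T w u x) (fmap T w u z) := by
  rcases eq_or_ne x z with rfl | hne
  · simp
  have hc := h.hc
  have hR := h.hR
  have hdist : 0 < dist x z := dist_pos.2 hne
  have hp := (h.wprod_pos w u hw hx).1
  have hdc := dconst_pos r b β c
  cases w with
  | nil =>
    have h1 := one_le_dconst h.hr0 h.hr1 h.hb h.hβ hc.le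
    have h2 : c / (c + R) ≤ 1 := (div_le_one (by positivity)).2 (by linarith)
    have h3 : (dconst r b β c)⁻¹ ≤ 1 := inv_le_one_of_one_le₀ h1
    have h4 : (dconst r b β c)⁻¹ * (c / (c + R)) ≤ 1 :=
      mul_le_one₀ h3 (by positivity) h2
    simpa using mul_le_mul_of_nonneg_right h4 hdist.le
  | cons v w =>
    set ρ := min c (dist x z) with hρ
    have hρ0 : 0 < ρ := lt_min hc hdist
    have hle : dist x z * (c / (c + R)) ≤ ρ := by
      have hdR := h.J_diam u x hx z hz
      rw [mul_div_assoc', div_le_iff₀ (by positivity), hρ]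
      rcases min_cases c (dist x z) with ⟨e, h'⟩ | ⟨e, h'⟩ <;> rw [e] <;> nlinarith
    by_contra hcon
    rw [not_le] at hcon
    have hmem : fmap T (v :: w) u z ∈ fmap T (v :: w) u '' ball x ρ := by
      refine h.ball_subset_fmap' (v :: w) u hw hx hρ0 (min_le_left _ _) ?_
      rw [mem_ball, dist_comm]
      refine hcon.trans_le ?_
      calc _ = (dconst r b β c)⁻¹ * wprod T inorm (v :: w) u x *
            (dist x z * (c / (c + R))) := by ring
        _ ≤ _ := by gcongr
    obtain ⟨z', hz', hzz'⟩ := hmem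
    -- both points lie in the last open set, where the composition is injective
    have hO : ball x c ⊆ O u ∧ J u ⊆ O u := by
      have : ∃ v', E v' u := by
        clear hzz' hcon hp
        induction w generalizing v with
        | nil => exact ⟨v, hw.1⟩
        | cons v' w ih => exact ih v' hw.2
      obtain ⟨v', e⟩ := this
      exact ⟨h.JO e x hx, h.J_sub e⟩
    have := (h.fmap_injOn (v :: w) u hw).2 (hO.1 (ball_subset_ball (min_le_left _ _) hz'))
      (hO.2 hz) hzz'
    subst this
    have := mem_ball.1 hz'
    rw [dist_comm] at this
    exact absurd (min_le_right c (dist x z')) (not_le.2 this)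

end

end GS


/-! ### Sums over words -/

section Sums

variable {V : Type*}

open Classical in
/-- The sum of `f` over the words of length `n`. -/
def lsum (f : List V → ℝ≥0∞) (n : ℕ) : ℝ≥0∞ := ∑' w : List V, if w.length = n then f w else 0

lemma lsum_le_tsum (f : List V → ℝ≥0∞) (n : ℕ) : lsum f n ≤ ∑' w, f w :=
  ENNReal.tsum_le_tsum fun w => by split_ifs <;> simp

lemma lsum_mono {f g : List V → ℝ≥0∞} {n : ℕ} (h : ∀ w, w.length = n → f w ≤ g w) :
    lsum f n ≤ lsum g n :=
  ENNReal.tsum_le_tsum fun w => by split_ifs with hw <;> simp [h w, hw]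

lemma lsum_const_mul (f : List V → ℝ≥0∞) (n : ℕ) (a : ℝ≥0∞) :
    lsum (fun w => a * f w) n = a * lsum f n := by
  rw [lsum, lsum, ← ENNReal.tsum_mul_left]
  exact tsum_congr fun w => by split_ifs <;> simp

lemma tsum_eq_tsum_lsum (f : List V → ℝ≥0∞) : ∑' w, f w = ∑' n, lsum f n := by
  unfold lsum
  rw [ENNReal.tsum_comm]
  exact tsum_congr fun w => by simp

lemma lsum_zero (f : List V → ℝ≥0∞) : lsum f 0 = f [] := by
  rw [lsum, tsum_eq_single []]
  · simp
  · intro w hw; simp [hw]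

lemma lsum_one_le (f : List V → ℝ≥0∞) : lsum f 1 ≤ ∑' v, f [v] := by
  classical
  have h1 : lsum f 1 = ∑' w : {w : List V // w.length = 1}, f w := by
    refine Eq.trans ?_ (tsum_subtype {w : List V | w.length = 1} f).symm
    exact tsum_congr fun w => by simp [Set.indicator_apply]
  rw [h1]
  have hs : ∀ w : {w : List V // w.length = 1}, ∃ v, w.1 = [v] := fun w =>
    List.length_eq_one_iff.1 w.2
  choose g hg using hs
  have hinj : Function.Injective g := fun w w' h => by
    apply Subtype.ext; rw [hg w, hg w', h]
  calc _ = ∑' w : {w : List V // w.length = 1}, f [g w] := tsum_congr fun w => by rw [← hg w]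
    _ ≤ _ := ENNReal.tsum_comp_le_tsum_of_injective hinj (fun v => f [v])

/-- Splitting words at position `m`: submultiplicative weights. -/
lemma lsum_add_le {f g h : List V → ℝ≥0∞} (m n : ℕ)
    (H : ∀ w w', w.length = m → w'.length = n → f (w ++ w') ≤ g w * h w') :
    lsum f (m + n) ≤ lsum g m * lsum h n := by
  classical
  let G : List V × List V → ℝ≥0∞ := fun p =>
    (if p.1.length = m then g p.1 else 0) * (if p.2.length = n then h p.2 else 0)
  have hinj : Function.Injective fun w : List V => (w.take m, w.drop m) := by
    intro w w' h
    rw [← List.take_append_drop m w, ← List.take_append_drop m w']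
    simp only [Prod.mk.injEq] at h
    rw [h.1, h.2]
  calc lsum f (m + n) ≤ ∑' w : List V, G (w.take m, w.drop m) := by
        refine ENNReal.tsum_le_tsum fun w => ?_
        split_ifs with hw
        · have h1 : (w.take m).length = m := by simp; omega
          have h2 : (w.drop m).length = n := by simp; omega
          simp only [G, h1, h2, if_true]
          conv_lhs => rw [← List.take_append_drop m w]
          exact H _ _ h1 h2
        · exact zero_le
    _ ≤ ∑' p, G p := ENNReal.tsum_comp_le_tsum_of_injective hinj G
    _ = _ := by
        rw [ENNReal.tsum_prod']
        simp only [G, ENNReal.tsum_mul_left, ENNReal.tsum_mul_right]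
        rfl

/-- Concatenation of words of fixed lengths: supermultiplicative weights. -/
lemma le_lsum_add {f g h : List V → ℝ≥0∞} (m n : ℕ)
    (H : ∀ w w', w.length = m → w'.length = n → g w * h w' ≤ f (w ++ w')) :
    lsum g m * lsum h n ≤ lsum f (m + n) := by
  classical
  let G : List V × List V → ℝ≥0∞ := fun p =>
    (if p.1.length = m then g p.1 else 0) * (if p.2.length = n then h p.2 else 0)
  let S : Set (List V × List V) := {p | p.1.length = m ∧ p.2.length = n}
  have hsupp : Function.support G ⊆ S := by
    intro p hp
    by_contra hcon
    apply hp
    simp only [S, Set.mem_ofPred_eq, not_and_or] at hcon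
    rcases hcon with h | h <;> simp [G, h]
  have hinj : Function.Injective fun p : S => p.1.1 ++ p.1.2 := by
    intro p q hpq
    have h1 : p.1.1.length = q.1.1.length := by rw [p.2.1, q.2.1]
    obtain ⟨e1, e2⟩ := List.append_inj hpq h1
    exact Subtype.ext (Prod.ext e1 e2)
  calc lsum g m * lsum h n = ∑' p, G p := by
        rw [ENNReal.tsum_prod']
        simp only [G, ENNReal.tsum_mul_left, ENNReal.tsum_mul_right]
        rfl
    _ = ∑' p : S, G p := (tsum_subtype_eq_of_support_subset hsupp).symm
    _ ≤ ∑' p : S, (if (p.1.1 ++ p.1.2).length = m + n then f (p.1.1 ++ p.1.2) else 0) := by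
        refine ENNReal.tsum_le_tsum fun p => ?_
        simp only [G, p.2.1, p.2.2, if_true, List.length_append]
        exact H _ _ p.2.1 p.2.2
    _ ≤ _ := ENNReal.tsum_comp_le_tsum_of_injective hinj
        (fun w : List V => if w.length = m + n then f w else 0)

lemma lsum_prod_le (a : V → ℝ≥0∞) (n : ℕ) : lsum (fun w => (w.map a).prod) n ≤ (∑' v, a v) ^ n := by
  induction n with
  | zero => simp [lsum_zero]
  | succ n ih =>
    rw [pow_succ]
    refine (lsum_add_le n 1 (g := fun w => (w.map a).prod) (h := fun w => (w.map a).prod)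
      (fun w w' _ _ => by simp)).trans ?_
    gcongr
    simpa using lsum_one_le (fun w => (w.map a).prod)

lemma pow_lsum_le {f : List V → ℝ≥0∞} (h1 : 1 ≤ f []) (H : ∀ w w', f w * f w' ≤ f (w ++ w'))
    (n k : ℕ) : lsum f n ^ k ≤ lsum f (k * n) := by
  induction k with
  | zero => simpa [lsum_zero] using h1
  | succ k ih =>
    rw [pow_succ, Nat.succ_mul]
    exact (mul_le_mul_left ih _).trans (le_lsum_add _ _ fun w w' _ _ => H w w')

lemma lsum_le_pow {f : List V → ℝ≥0∞} (h1 : f [] ≤ 1) (H : ∀ w w', f (w ++ w') ≤ f w * f w')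
    (n k : ℕ) : lsum f (k * n) ≤ lsum f n ^ k := by
  induction k with
  | zero => simpa [lsum_zero] using h1
  | succ k ih =>
    rw [pow_succ, Nat.succ_mul]
    exact (lsum_add_le _ _ fun w w' _ _ => H w w').trans (mul_le_mul_left ih _)

open Classical in
/-- The sum of `f` over the words with letters in `G`. -/
def asum (f : List V → ℝ≥0∞) (G : Set V) : ℝ≥0∞ :=
  ∑' w : List V, if ∀ x ∈ w, x ∈ G then f w else 0

/-- A word over `insert v G` containing `v` splits at the first and the last occurrence of `v`. -/
lemma exists_split (v : V) (G : Set V) (w : List V) (hw : ∀ x ∈ w, x ∈ insert v G) (hv : v ∈ w) :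
    ∃ p : List V × List V × List V, w = p.1 ++ (p.2.1 ++ v :: p.2.2) ∧ hd p.2.1 v = v ∧
      (∀ x ∈ p.1, x ∈ G) ∧ ∀ x ∈ p.2.2, x ∈ G := by
  obtain ⟨b, m, rfl, hb⟩ := List.eq_append_cons_of_mem hv
  have hv' : v ∈ (v :: m).reverse := by simp
  obtain ⟨s, t, hst, hs⟩ := List.eq_append_cons_of_mem hv'
  have hm : v :: m = t.reverse ++ v :: s.reverse := by
    have := congrArg List.reverse hst
    simpa using this
  refine ⟨(b, t.reverse, s.reverse), by rw [hm], ?_, fun x hx => ?_, fun x hx => ?_⟩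
  · cases ht : t.reverse with
    | nil => rfl
    | cons y l =>
      rw [ht] at hm
      simp only [List.cons_append, List.cons.injEq] at hm
      exact hm.1.symm
  · exact (hw x (by simp [hx])).resolve_left fun e => hb (e ▸ hx)
  · refine (hw x ?_).resolve_left fun e => hs (by
      simp only [List.mem_reverse] at hx
      exact e ▸ hx)
    rw [hm]; simp only at hx; simp [hx]

/-- Adding one letter `v` to the alphabet keeps the sum finite, provided that the loops at `v` have
a finite sum. -/
lemma asum_insert_le {W : List V → ℝ≥0∞} {L : V → List V → ℝ≥0∞}
    (H : ∀ w w', W (w ++ w') ≤ W w * W w')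
    (HL : ∀ v ℓ w', hd ℓ v = v → W (ℓ ++ v :: w') ≤ L v ℓ * W (v :: w')) (v : V) (G : Set V) :
    asum W (insert v G) ≤
      asum W G + asum W G * ((∑' ℓ, L v ℓ) * (W [v] * asum W G)) := by
  classical
  let S : Set (List V) := {w | (∀ x ∈ w, x ∈ insert v G) ∧ v ∈ w}
  choose g hg using fun w : S => exists_split v G w.1 w.2.1 w.2.2
  have hinj : Function.Injective g := fun w w' h => by
    apply Subtype.ext; rw [(hg w).1, (hg w').1, h]
  let f₁ : List V → ℝ≥0∞ := fun w => if ∀ x ∈ w, x ∈ G then W w else 0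
  let F : List V × List V × List V → ℝ≥0∞ := fun p => f₁ p.1 * (L v p.2.1 * (W [v] * f₁ p.2.2))
  have h1 : asum W (insert v G) ≤ asum W G + ∑' w : S, W w := by
    rw [tsum_subtype S W, asum, asum, ← ENNReal.tsum_add]
    refine ENNReal.tsum_le_tsum fun w => ?_
    by_cases hS : w ∈ S
    · rw [Set.indicator_of_mem hS, if_pos hS.1]; exact le_add_self
    · by_cases hw : ∀ x ∈ w, x ∈ insert v G
      · have : ∀ x ∈ w, x ∈ G := fun x hx =>
          (hw x hx).resolve_left fun e => hS ⟨hw, e ▸ hx⟩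
        rw [if_pos hw, if_pos this]; exact le_self_add
      · rw [if_neg hw]; exact zero_le
  refine h1.trans (add_le_add_right ?_ _)
  calc ∑' w : S, W w ≤ ∑' w : S, F (g w) := by
        refine ENNReal.tsum_le_tsum fun w => ?_
        obtain ⟨e, h2, h3, h4⟩ := hg w
        simp only [F, f₁, if_pos h3, if_pos h4]
        conv_lhs => rw [e]
        refine (H _ _).trans (mul_le_mul_right ((HL v _ _ h2).trans (mul_le_mul_right ?_ _)) _)
        exact H [v] _
    _ ≤ ∑' p, F p := ENNReal.tsum_comp_le_tsum_of_injective hinj F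
    _ = _ := by
      simp only [F, ENNReal.tsum_prod', ENNReal.tsum_mul_left, ENNReal.tsum_mul_right]
      rfl

/-- If the one-letter weights are summable and, for every vertex, the loop weights are summable,
then the weights of all words are summable. -/
lemma tsum_words_ne_top {W : List V → ℝ≥0∞} {L : V → List V → ℝ≥0∞} (h0 : W [] ≤ 1)
    (H : ∀ w w', W (w ++ w') ≤ W w * W w')
    (HL : ∀ v ℓ w', hd ℓ v = v → W (ℓ ++ v :: w') ≤ L v ℓ * W (v :: w'))
    (h1 : ∑' v, W [v] ≠ ⊤) (hL : ∀ v, ∑' ℓ, L v ℓ ≠ ⊤) : ∑' w, W w ≠ ⊤ := by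
  classical
  obtain ⟨F, hF⟩ : ∃ F : Finset V, ∑' v : {v // v ∉ F}, W [v.1] ≤ 2⁻¹ := by
    have := ENNReal.tendsto_tsum_compl_atTop_zero h1
    have h2 : (0 : ℝ≥0∞) < 2⁻¹ := by simp
    obtain ⟨F, hF⟩ := (this.eventually (gt_mem_nhds h2)).exists
    exact ⟨F, hF.le⟩
  let a : V → ℝ≥0∞ := fun v => if v ∈ F then 0 else W [v]
  have ha : ∑' v, a v ≤ 2⁻¹ := by
    refine le_trans (le_of_eq ?_) hF
    refine Eq.trans ?_ (tsum_subtype {v | v ∉ F} fun v => W [v]).symm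
    exact tsum_congr fun v => by by_cases hv : v ∈ F <;> simp [a, hv]
  have hbase : asum W {v | v ∉ F} ≠ ⊤ := by
    have hle : ∀ w : List V, (∀ x ∈ w, x ∉ F) → W w ≤ (w.map a).prod := by
      intro w
      induction w with
      | nil => intro _; simpa using h0
      | cons v w ih =>
        intro hw
        rw [List.map_cons, List.prod_cons]
        refine (H [v] w).trans (mul_le_mul' ?_ (ih fun x hx => hw x (by simp [hx])))
        simp [a, hw v (by simp)]
    have : asum W {v | v ∉ F} ≤ ∑' w : List V, (w.map a).prod := by
      refine ENNReal.tsum_le_tsum fun w => ?_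
      split_ifs with hw
      · exact hle w hw
      · exact zero_le
    refine ne_top_of_le_ne_top ?_ this
    rw [tsum_eq_tsum_lsum]
    have h2 : ∑' n, lsum (fun w => (w.map a).prod) n ≤ ∑' n : ℕ, (2⁻¹ : ℝ≥0∞) ^ n :=
      ENNReal.tsum_le_tsum fun n => (lsum_prod_le a n).trans (pow_le_pow_left' ha n)
    refine ne_top_of_le_ne_top ?_ h2
    rw [ENNReal.tsum_geometric]
    simp
  have hstep : ∀ F' : Finset V, asum W ({v | v ∉ F} ∪ F') ≠ ⊤ := by
    intro F'
    induction F' using Finset.induction_on with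
    | empty => simpa using hbase
    | insert v F' _ ih =>
      have e : ({v | v ∉ F} ∪ ((insert v F' : Finset V) : Set V)) =
          insert v ({v | v ∉ F} ∪ (F' : Set V)) := by
        rw [Finset.coe_insert, Set.union_insert]
      rw [e]
      refine ne_top_of_le_ne_top ?_ (asum_insert_le H HL v _)
      have hv : W [v] ≠ ⊤ := ENNReal.ne_top_of_tsum_ne_top h1 v
      exact ENNReal.add_ne_top.2 ⟨ih, ENNReal.mul_ne_top ih
        (ENNReal.mul_ne_top (hL v) (ENNReal.mul_ne_top hv ih))⟩
  have huniv : ({v | v ∉ F} ∪ (F : Set V)) = Set.univ := by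
    ext v; by_cases hv : v ∈ F <;> simp [hv]
  have := hstep F
  rw [huniv] at this
  simpa [asum] using this

end Sums

/-! ### Pressure -/

section Pressure

lemma elog_mono {x y : ℝ≥0∞} (h : x ≤ y) : elog x ≤ elog y := by
  unfold elog
  by_cases hx : x = 0
  · simp [hx]
  have hy : y ≠ 0 := fun e => hx (le_antisymm (e ▸ h) zero_le)
  by_cases hyt : y = ⊤
  · simp [hyt]
  have hxt : x ≠ ⊤ := ne_top_of_le_ne_top hyt h
  simp only [hx, hy, hyt, hxt, if_false]
  exact EReal.coe_le_coe_iff.2 (Real.log_le_log (ENNReal.toReal_pos hx hxt)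
    (ENNReal.toReal_mono hyt h))

lemma elog_ofReal {x : ℝ} (hx : 0 < x) : elog (ENNReal.ofReal x) = (Real.log x : ℝ) := by
  unfold elog
  simp [hx, ENNReal.toReal_ofReal hx.le]

variable {V : Type*} {E : V → V → Prop} {f : (ℕ → V) → ℝ}

lemma inv_cast_eq (n : ℕ) : ((n : ℝ)⁻¹ : EReal) = (((n : ℝ)⁻¹ : ℝ) : EReal) := by
  rfl

/-- A loop sum larger than one makes the pressure positive. -/
lemma pressure_pos {X : ℝ≥0∞} (hX : 1 < X) {n : ℕ} (hn : 1 ≤ n)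
    (h : ∀ k, 1 ≤ k → X ^ k ≤ pressureZ E f (k * n)) : 0 < pressure E f := by
  obtain ⟨x, hx1, hxX⟩ : ∃ x : ℝ, 1 < x ∧ ENNReal.ofReal x ≤ X := by
    obtain ⟨y, hy1, hy2⟩ := exists_between hX
    have hyt : y ≠ ⊤ := hy2.ne_top
    refine ⟨y.toReal, ?_, by rw [ENNReal.ofReal_toReal hyt]; exact hy2.le⟩
    rw [← ENNReal.toReal_one]
    exact (ENNReal.toReal_lt_toReal ENNReal.one_ne_top hyt).2 hy1
  have hlog : 0 < Real.log x := Real.log_pos hx1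
  have hn' : (0 : ℝ) < n := by exact_mod_cast hn
  have hpos : (0 : EReal) < ((Real.log x / n : ℝ) : EReal) := by
    exact_mod_cast div_pos hlog hn'
  refine hpos.trans_le (le_limsup_of_frequently_le ?_ )
  rw [Filter.frequently_atTop]
  intro N
  refine ⟨(N + 1) * n, by nlinarith, ?_⟩
  have h1 : ENNReal.ofReal (x ^ (N + 1)) ≤ pressureZ E f ((N + 1) * n) := by
    rw [ENNReal.ofReal_pow (by linarith)]
    exact (pow_le_pow_left' hxX _).trans (h _ (by omega))
  have h2 := elog_mono h1
  rw [elog_ofReal (by positivity), Real.log_pow] at h2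
  have h3 : ((Real.log x / n : ℝ) : EReal) =
      (((((N + 1) * n : ℕ) : ℝ)⁻¹ : ℝ) : EReal) * ((((N + 1 : ℕ) : ℝ) * Real.log x : ℝ) : EReal) := by
    rw [← EReal.coe_mul]
    congr 1
    push_cast
    field_simp
  rw [h3, inv_cast_eq]
  exact mul_le_mul_of_nonneg_left h2 (by exact_mod_cast (by positivity))

/-- Submultiplicative weights, one of whose length sums is smaller than one, make the pressure
negative. -/
lemma pressure_neg {W : List V → ℝ≥0∞} (h0 : W [] ≤ 1)
    (H : ∀ w w', W (w ++ w') ≤ W w * W w') (h1 : ∑' v, W [v] ≠ ⊤) {N : ℕ} (hN : 1 ≤ N)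
    (hlt : lsum W N < 1) (h : ∀ n, pressureZ E f n ≤ lsum W n) : pressure E f < 0 := by
  obtain ⟨q, hq0, hq1, hq⟩ : ∃ q : ℝ, 0 < q ∧ q < 1 ∧ lsum W N ≤ ENNReal.ofReal q := by
    obtain ⟨y, hy1, hy2⟩ := exists_between hlt
    have hyt : y ≠ ⊤ := hy2.ne_top
    refine ⟨y.toReal, ENNReal.toReal_pos (ne_bot_of_gt hy1) hyt, ?_,
      by rw [ENNReal.ofReal_toReal hyt]; exact hy1.le⟩
    rw [← ENNReal.toReal_one]
    exact (ENNReal.toReal_lt_toReal hyt ENNReal.one_ne_top).2 hy2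
  -- a bound for all remainders
  obtain ⟨M, hM1, hM⟩ : ∃ M : ℝ, 1 ≤ M ∧ ∀ j < N, lsum W j ≤ ENNReal.ofReal M := by
    have hfin : ∀ j, lsum W j ≠ ⊤ := by
      intro j
      have e := lsum_le_pow h0 H 1 j
      rw [mul_one] at e
      exact ne_top_of_le_ne_top (ENNReal.pow_ne_top (ne_top_of_le_ne_top h1 (lsum_one_le W))) e
    refine ⟨1 + ∑ j ∈ Finset.range N, (lsum W j).toReal,
      le_add_of_nonneg_right (Finset.sum_nonneg fun _ _ => ENNReal.toReal_nonneg), fun j hj => ?_⟩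
    rw [← ENNReal.ofReal_toReal (hfin j)]
    refine ENNReal.ofReal_le_ofReal ?_
    have := Finset.single_le_sum (f := fun j => (lsum W j).toReal)
      (fun i _ => ENNReal.toReal_nonneg) (Finset.mem_range.2 hj)
    linarith
  have hlog : Real.log q < 0 := Real.log_neg hq0 hq1
  have hN' : (0 : ℝ) < N := by exact_mod_cast hN
  have hneg : ((Real.log q / (2 * N) : ℝ) : EReal) < 0 := by
    exact_mod_cast div_neg_of_neg_of_pos hlog (by positivity)
  refine lt_of_le_of_lt (limsup_le_of_le (h := ?_)) hneg
  have hev : ∀ᶠ n : ℕ in atTop, (2 * N : ℝ) * (Real.log M - Real.log q) ≤ n * (-Real.log q) := by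
    have : Tendsto (fun n : ℕ => (n : ℝ) * (-Real.log q)) atTop atTop :=
      tendsto_natCast_atTop_atTop.atTop_mul_const (by linarith)
    exact this.eventually_ge_atTop _
  filter_upwards [hev, eventually_ge_atTop 1] with n hn hn1
  have hn1' : (0 : ℝ) < n := by exact_mod_cast hn1
  have hZ : pressureZ E f n ≤ ENNReal.ofReal (q ^ (n / N) * M) := by
    refine (h n).trans ?_
    have e : n = n / N * N + n % N := (Nat.div_add_mod' n N).symm
    conv_lhs => rw [e]
    refine (lsum_add_le _ _ fun w w' _ _ => H w w').trans ?_
    rw [ENNReal.ofReal_mul (by positivity), ENNReal.ofReal_pow hq0.le]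
    exact mul_le_mul' ((lsum_le_pow h0 H _ _).trans (pow_le_pow_left' hq _))
      (hM _ (Nat.mod_lt _ hN))
  have h2 := elog_mono hZ
  rw [elog_ofReal (by positivity), Real.log_mul (by positivity) (by positivity),
    Real.log_pow] at h2
  rw [inv_cast_eq]
  refine (mul_le_mul_of_nonneg_left h2 (by exact_mod_cast (by positivity))).trans ?_
  rw [← EReal.coe_mul, EReal.coe_le_coe_iff]
  have hdiv : (n : ℝ) ≤ ((n / N : ℕ) : ℝ) * N + N := by
    have : n < (n / N) * N + N := by
      have := Nat.div_add_mod' n N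
      have := Nat.mod_lt n hN
      omega
    exact_mod_cast this.le
  rw [inv_mul_le_iff₀ hn1', mul_div_assoc', le_div_iff₀ (by positivity)]
  nlinarith

end Pressure


/-! ### The coding map -/

section Coding

variable {D : ℕ} {V : Type*} {E : V → V → Prop} {J O : V → Set (Pt D)}
  {T : V → V → Pt D → Pt D} {c R r b β : ℝ} {π : (ℕ → V) → Pt D}

/-- The sequence `w τ`. -/
def cat : List V → (ℕ → V) → ℕ → V
  | [], τ => τ
  | v :: w, τ => fun n => Nat.casesOn n v (fun k => cat w τ k)

lemma cat_zero (w : List V) (τ : ℕ → V) : cat w τ 0 = hd w (τ 0) := by cases w <;> rfl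

lemma shift_cat_cons (v : V) (w : List V) (τ : ℕ → V) : shift (cat (v :: w) τ) = cat w τ := rfl

lemma cat_apply (w : List V) (τ : ℕ → V) (i : ℕ) :
    cat w τ i = if h : i < w.length then w[i] else τ (i - w.length) := by
  induction w generalizing i with
  | nil => simp [cat]
  | cons v w ih =>
    cases i with
    | zero => simp [cat]
    | succ i =>
      have : cat (v :: w) τ (i + 1) = cat w τ i := rfl
      rw [this, ih]
      simp

lemma shift_mem {ω : ℕ → V} (hω : ω ∈ TMS E) : shift ω ∈ TMS E := fun n => hω (n + 1)

lemma shift_iterate_mem {ω : ℕ → V} (hω : ω ∈ TMS E) (n : ℕ) : shift^[n] ω ∈ TMS E := by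
  induction n generalizing ω with
  | zero => exact hω
  | succ n ih => exact ih (shift_mem hω)

lemma shift_iterate_apply (ω : ℕ → V) (n k : ℕ) : (shift^[n] ω) k = ω (k + n) := by
  induction n generalizing ω with
  | zero => rfl
  | succ n ih => rw [Function.iterate_succ_apply, ih]; rfl

lemma cat_mem {w : List V} {τ : ℕ → V} (hτ : τ ∈ TMS E) (hw : adm E w (τ 0)) : cat w τ ∈ TMS E := by
  induction w with
  | nil => exact hτ
  | cons v w ih =>
    intro n
    cases n with
    | zero =>
      change E v (cat w τ 0)
      rw [cat_zero]
      exact hw.1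
    | succ n => exact ih hw.2 n

/-- The word of the first `n` letters of a sequence. -/
def pre (n : ℕ) (ω : ℕ → V) : List V := List.ofFn fun i : Fin n => ω i

lemma pre_zero (ω : ℕ → V) : pre 0 ω = [] := by simp [pre]

lemma pre_succ (n : ℕ) (ω : ℕ → V) : pre (n + 1) ω = ω 0 :: pre n (shift ω) := by
  simp [pre, List.ofFn_succ, shift]

@[simp] lemma length_pre (n : ℕ) (ω : ℕ → V) : (pre n ω).length = n := by simp [pre]

lemma hd_pre (n : ℕ) (ω : ℕ → V) : hd (pre n ω) (ω n) = ω 0 := by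
  cases n with
  | zero => rw [pre_zero]; rfl
  | succ n => rw [pre_succ]; rfl

lemma adm_pre (n : ℕ) {ω : ℕ → V} (hω : ω ∈ TMS E) : adm E (pre n ω) (ω n) := by
  induction n generalizing ω with
  | zero => rw [pre_zero]; trivial
  | succ n ih =>
    rw [pre_succ, adm_cons]
    refine ⟨?_, ih (shift_mem hω)⟩
    have := hd_pre n (shift ω)
    simp only [shift] at this
    rw [show hd (pre n (shift ω)) (ω (n + 1)) = ω 1 from this]
    exact hω 0

lemma vcomp_succ' (ω : ℕ → V) (k : ℕ) :
    vcomp T ω (k + 1) = T (ω 0) (ω 1) ∘ vcomp T (shift ω) k := by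
  induction k with
  | zero => rfl
  | succ k ih =>
    have : vcomp T ω (k + 1 + 1) = vcomp T ω (k + 1) ∘ T (ω (k + 1)) (ω (k + 1 + 1)) := rfl
    rw [this, ih]
    rfl

variable (h : GS E J O T c R r b β) (hπ : IsCodingMap E J T π)
include h hπ

lemma coding_mem {ω : ℕ → V} (hω : ω ∈ TMS E) : π ω ∈ J (ω 0) := by
  have h1 : π ω ∈ ⋂ k : ℕ, vcomp T ω (k + 1) '' J (ω (k + 1)) := by rw [hπ ω hω]; rfl
  exact h.T_J (hω 0) (mem_iInter.1 h1 0)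

lemma coding_step {ω : ℕ → V} (hω : ω ∈ TMS E) : π ω = T (ω 0) (ω 1) (π (shift ω)) := by
  have h2 : π (shift ω) ∈ ⋂ k : ℕ, vcomp T (shift ω) (k + 1) '' J (shift ω (k + 1)) := by
    rw [hπ _ (shift_mem hω)]; rfl
  have h3 : T (ω 0) (ω 1) (π (shift ω)) ∈ ⋂ k : ℕ, vcomp T ω (k + 1) '' J (ω (k + 1)) := by
    refine mem_iInter.2 fun k => ?_
    rw [vcomp_succ', image_comp]
    refine ⟨_, ?_, rfl⟩
    cases k with
    | zero => exact ⟨_, coding_mem h hπ (shift_mem hω), rfl⟩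
    | succ k => exact mem_iInter.1 h2 k
  rw [hπ ω hω] at h3
  exact h3.symm

lemma coding_cat {w : List V} {τ : ℕ → V} (hτ : τ ∈ TMS E) (hw : adm E w (τ 0)) :
    π (cat w τ) = fmap T w (τ 0) (π τ) := by
  induction w with
  | nil => rfl
  | cons v w ih =>
    rw [coding_step h hπ (cat_mem hτ hw), fmap_cons, shift_cat_cons, ih hw.2]
    have h1 : cat (v :: w) τ 1 = hd w (τ 0) := cat_zero w τ
    rw [h1]; rfl

lemma coding_pre {ω : ℕ → V} (hω : ω ∈ TMS E) (n : ℕ) :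
    π ω = fmap T (pre n ω) (ω n) (π (shift^[n] ω)) := by
  induction n generalizing ω with
  | zero => rw [pre_zero]; rfl
  | succ n ih =>
    rw [coding_step h hπ hω, pre_succ, fmap_cons]
    have h1 := hd_pre n (shift ω)
    have h2 := ih (shift_mem hω)
    simp only [shift] at h1
    rw [show hd (pre n (shift ω)) (ω (n + 1)) = ω 1 from h1, h2]
    rfl

omit h hπ in
lemma birkhoff_succ (f : (ℕ → V) → ℝ) (n : ℕ) (ω : ℕ → V) :
    birkhoff f (n + 1) ω = f ω + birkhoff f n (shift ω) := by
  rw [birkhoff, Finset.sum_range_succ', add_comm]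
  rfl

/-- Birkhoff sums of the potential are logarithms of derivative products. -/
lemma exp_birkhoff [Nontrivial (Pt D)] {f : (ℕ → V) → ℝ} {s : ℝ}
    (hf : ∀ ω ∈ TMS E, f ω = s * Real.log ‖fderiv ℝ (T (ω 0) (ω 1)) (π (shift ω))‖)
    {ω : ℕ → V} (hω : ω ∈ TMS E) (n : ℕ) :
    Real.exp (birkhoff f n ω) = wprod T norm (pre n ω) (ω n) (π (shift^[n] ω)) ^ s := by
  induction n generalizing ω with
  | zero => rw [pre_zero]; simp [birkhoff]
  | succ n ih =>
    rw [birkhoff_succ, Real.exp_add, ih (shift_mem hω), pre_succ, wprod_cons]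
    have h1 := hd_pre n (shift ω)
    simp only [shift] at h1
    rw [show hd (pre n (shift ω)) (ω (n + 1)) = ω 1 from h1]
    have h2 := coding_pre h hπ (shift_mem hω) n
    have h3 : fmap T (pre n (shift ω)) (ω (n + 1)) (π (shift^[n + 1] ω)) = π (shift ω) := h2.symm
    rw [h3, Real.mul_rpow (norm_nonneg _) (wprod_norm_nonneg _ _ _), hf ω hω]
    have hpos : 0 < ‖fderiv ℝ (T (ω 0) (ω 1)) (π (shift ω))‖ :=
      norm_pos_of_unit (h.T_unit (hω 0) _ (h.J_sub (hω 0) (coding_mem h hπ (shift_mem hω))))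
    rw [Real.rpow_def_of_pos hpos, mul_comm s]
    rfl

end Coding

/-! ### Weights of words and loops -/

section Weights

variable {D : ℕ} {V : Type*}

/-- The weight `sup ‖(T_w)'‖^t` of a word, in the product form of `wprod`. -/
def Wt (E : V → V → Prop) (J : V → Set (Pt D)) (T : V → V → Pt D → Pt D) (t : ℝ) (w : List V) :
    ℝ≥0∞ :=
  ⨆ (u : V) (_ : adm E w u) (x : Pt D) (_ : x ∈ J u), ENNReal.ofReal (wprod T norm w u x ^ t)

/-- The weight of a word `ℓ` for which `ℓ v` is a loop at `v` (zero for other words). -/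
def Lt (E : V → V → Prop) (J : V → Set (Pt D)) (T : V → V → Pt D → Pt D) (t : ℝ) (v : V)
    (ℓ : List V) : ℝ≥0∞ :=
  ⨆ (_ : adm E ℓ v ∧ hd ℓ v = v) (x : Pt D) (_ : x ∈ J v), ENNReal.ofReal (wprod T norm ℓ v x ^ t)

open Classical in
/-- The lower weight of a loop `ℓ v` at `v`, with an infimum in place of the supremum. -/
def Qt (E : V → V → Prop) (J : V → Set (Pt D)) (T : V → V → Pt D → Pt D) (t : ℝ) (v : V)
    (ℓ : List V) : ℝ≥0∞ :=
  if adm E ℓ v ∧ hd ℓ v = v then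
    ⨅ (x : Pt D) (_ : x ∈ J v), ENNReal.ofReal (wprod T norm ℓ v x ^ t) else 0

variable {E : V → V → Prop} {J O : V → Set (Pt D)}
  {T : V → V → Pt D → Pt D} {c R r b β : ℝ} {π : (ℕ → V) → Pt D} {t : ℝ}

lemma le_Wt {w : List V} {u : V} (hw : adm E w u) {x : Pt D} (hx : x ∈ J u) :
    ENNReal.ofReal (wprod T norm w u x ^ t) ≤ Wt E J T t w :=
  le_iSup₂_of_le u hw (le_iSup₂_of_le x hx le_rfl)

lemma Wt_le {w : List V} {a : ℝ≥0∞}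
    (H : ∀ u, adm E w u → ∀ x ∈ J u, ENNReal.ofReal (wprod T norm w u x ^ t) ≤ a) :
    Wt E J T t w ≤ a :=
  iSup₂_le fun u hu => iSup₂_le fun x hx => H u hu x hx

lemma Wt_nil : Wt E J T t [] ≤ 1 := Wt_le fun u _ x _ => by simp

lemma Qt_nil (v : V) : 1 ≤ Qt E J T t v [] := by
  rw [Qt, if_pos ⟨trivial, rfl⟩]
  exact le_iInf₂ fun x _ => by simp

lemma Qt_mul (h : GS E J O T c R r b β) (v : V) (w w' : List V) :
    Qt E J T t v w * Qt E J T t v w' ≤ Qt E J T t v (w ++ w') := by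
  by_cases h1 : adm E w v ∧ hd w v = v
  · by_cases h2 : adm E w' v ∧ hd w' v = v
    · have h3 : adm E (w ++ w') v ∧ hd (w ++ w') v = v :=
        ⟨(adm_append _ _ _).2 ⟨by rw [h2.2]; exact h1.1, h2.1⟩, by rw [hd_append, h2.2, h1.2]⟩
      unfold Qt
      rw [if_pos h1, if_pos h2, if_pos h3]
      refine le_iInf₂ fun x hx => ?_
      have hx' : fmap T w' v x ∈ J v := by
        have := h.fmap_mem w' v h2.1 hx
        rwa [h2.2] at this
      rw [wprod_append, h2.2, Real.mul_rpow (wprod_norm_nonneg _ _ _) (wprod_norm_nonneg _ _ _),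
        ENNReal.ofReal_mul (Real.rpow_nonneg (wprod_norm_nonneg _ _ _) _)]
      exact mul_le_mul' (iInf₂_le _ hx') (iInf₂_le _ hx)
    · rw [Qt, Qt, if_neg h2]; simp
  · rw [Qt, if_neg h1]; simp

lemma Wt_append (h : GS E J O T c R r b β) (w w' : List V) :
    Wt E J T t (w ++ w') ≤ Wt E J T t w * Wt E J T t w' := by
  refine Wt_le fun u hu x hx => ?_
  rw [adm_append] at hu
  rw [wprod_append, Real.mul_rpow (wprod_norm_nonneg _ _ _) (wprod_norm_nonneg _ _ _),
    ENNReal.ofReal_mul (Real.rpow_nonneg (wprod_norm_nonneg _ _ _) _)]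
  exact mul_le_mul' (le_Wt hu.1 (h.fmap_mem w' u hu.2 hx)) (le_Wt hu.2 hx)

lemma Wt_loop (h : GS E J O T c R r b β) (v : V) (ℓ w : List V) (hℓ : hd ℓ v = v) :
    Wt E J T t (ℓ ++ v :: w) ≤ Lt E J T t v ℓ * Wt E J T t (v :: w) := by
  refine Wt_le fun u hu x hx => ?_
  rw [adm_append] at hu
  rw [wprod_append, Real.mul_rpow (wprod_norm_nonneg _ _ _) (wprod_norm_nonneg _ _ _),
    ENNReal.ofReal_mul (Real.rpow_nonneg (wprod_norm_nonneg _ _ _) _)]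
  refine mul_le_mul' ?_ (le_Wt hu.2 hx)
  exact le_iSup_of_le ⟨hu.1, hℓ⟩
    (le_iSup₂_of_le _ (h.fmap_mem (v :: w) u hu.2 hx) le_rfl)

lemma Lt_le_Qt (h : GS E J O T c R r b β) (ht : 0 ≤ t) (v : V) (ℓ : List V) :
    Lt E J T t v ℓ ≤
      ENNReal.ofReal (dconst r b β (chainM D R c * c) ^ t) * Qt E J T t v ℓ := by
  refine iSup_le fun hℓ => iSup₂_le fun x hx => ?_
  have hd0 := dconst_pos r b β (chainM D R c * c)
  rw [Qt, if_pos hℓ]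
  rw [ENNReal.mul_iInf_of_ne (by simp; positivity) (by simp)]
  refine le_iInf fun z => ?_
  rw [ENNReal.mul_iInf_of_ne (by simp; positivity) (by simp)]
  refine le_iInf fun hz => ?_
  rw [← ENNReal.ofReal_mul (by positivity), ← Real.mul_rpow hd0.le (wprod_norm_nonneg _ _ _)]
  exact ENNReal.ofReal_le_ofReal (Real.rpow_le_rpow (wprod_norm_nonneg _ _ _)
    (h.wprod_distort ℓ v hℓ.1 hx hz) ht)

lemma Lt_le_mul (h : GS E J O T c R r b β) [Nontrivial (Pt D)] {τ : ℝ} (hτ : τ < t) (v : V)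
    (ℓ : List V) :
    Lt E J T t v ℓ ≤ ENNReal.ofReal (r ^ (t - τ)) ^ ℓ.length * Lt E J T τ v ℓ := by
  refine iSup_le fun hℓ => iSup₂_le fun x hx => ?_
  have hp := h.wprod_pos ℓ v hℓ.1 hx
  have hpos := hp.1.trans_le hp.2
  have hr := h.hr0
  have e : wprod T norm ℓ v x ^ t ≤ (r ^ (t - τ)) ^ ℓ.length * wprod T norm ℓ v x ^ τ := by
    have e1 : wprod T norm ℓ v x ^ t =
        wprod T norm ℓ v x ^ (t - τ) * wprod T norm ℓ v x ^ τ := by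
      rw [← Real.rpow_add hpos]; ring_nf
    rw [e1]
    gcongr
    have := Real.rpow_le_rpow hpos.le (h.wprod_norm_le ℓ v hℓ.1 hx) (by linarith : 0 ≤ t - τ)
    refine this.trans (le_of_eq ?_)
    rw [← Real.rpow_natCast, ← Real.rpow_natCast, ← Real.rpow_mul hr.le, ← Real.rpow_mul hr.le,
      mul_comm]
  refine (ENNReal.ofReal_le_ofReal e).trans ?_
  rw [ENNReal.ofReal_mul (by positivity), ENNReal.ofReal_pow (by positivity)]
  gcongr
  exact le_iSup_of_le hℓ (le_iSup₂_of_le x hx le_rfl)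

lemma Wt_antitone (h : GS E J O T c R r b β) [Nontrivial (Pt D)] {τ : ℝ} (hτ : τ ≤ t)
    (w : List V) : Wt E J T t w ≤ Wt E J T τ w := by
  refine Wt_le fun u hu x hx => ?_
  have hp := h.wprod_pos w u hu hx
  refine (ENNReal.ofReal_le_ofReal ?_).trans (le_Wt hu hx)
  exact Real.rpow_le_rpow_of_exponent_ge (hp.1.trans_le hp.2) (h.wprod_norm_le_one w u hu hx) hτ

lemma Wt_le_one (h : GS E J O T c R r b β) (ht : 0 ≤ t) (w : List V) : Wt E J T t w ≤ 1 := by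
  refine Wt_le fun u hu x hx => ?_
  rw [← ENNReal.ofReal_one]
  exact ENNReal.ofReal_le_ofReal
    (Real.rpow_le_one (wprod_norm_nonneg _ _ _) (h.wprod_norm_le_one w u hu hx) ht)

/-- Summability of all word weights at `t`, from summability over single letters and a bound for
the loop sums at a smaller exponent. -/
lemma tsum_Wt_ne_top (h : GS E J O T c R r b β) [Nontrivial (Pt D)] {τ : ℝ} (hτ : τ < t)
    (h1 : ∑' v, Wt E J T t [v] ≠ ⊤) {B : ℝ≥0∞} (hBt : B ≠ ⊤)
    (hB : ∀ v n, 1 ≤ n → lsum (Lt E J T τ v) n ≤ B) : ∑' w, Wt E J T t w ≠ ⊤ := by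
  refine tsum_words_ne_top Wt_nil (Wt_append h) (fun v ℓ w' => Wt_loop h v ℓ w') h1 fun v => ?_
  rw [tsum_eq_tsum_lsum]
  have hr := h.hr0
  have hq : r ^ (t - τ) < 1 := Real.rpow_lt_one hr.le h.hr1 (by linarith)
  have hb : ∀ n, lsum (Lt E J T t v) n ≤ (1 + B) * ENNReal.ofReal (r ^ (t - τ)) ^ n := by
    intro n
    have h2 : lsum (Lt E J T t v) n ≤
        lsum (fun ℓ => ENNReal.ofReal (r ^ (t - τ)) ^ n * Lt E J T τ v ℓ) n :=
      lsum_mono fun ℓ hℓ => by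
        have := Lt_le_mul h hτ v ℓ
        rwa [hℓ] at this
    rw [lsum_const_mul] at h2
    rw [mul_comm]
    refine h2.trans (mul_le_mul_right ?_ _)
    cases n with
    | zero =>
      rw [lsum_zero]
      refine le_trans ?_ le_self_add
      exact iSup_le fun _ => iSup₂_le fun x hx => by simp
    | succ n => exact (hB v _ (by omega)).trans le_add_self
  refine ne_top_of_le_ne_top ?_ (ENNReal.tsum_le_tsum hb)
  rw [ENNReal.tsum_mul_left, ENNReal.tsum_geometric]
  refine ENNReal.mul_ne_top (by simp [hBt]) (ENNReal.inv_ne_top.2 ?_)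
  rw [Ne, tsub_eq_zero_iff_le, not_le]
  exact ENNReal.ofReal_lt_one.2 hq

lemma exists_lsum_lt {f : List V → ℝ≥0∞} (hf : ∑' w, f w ≠ ⊤) {η : ℝ≥0∞} (hη : 0 < η) :
    ∃ N, 1 ≤ N ∧ lsum f N < η := by
  rw [tsum_eq_tsum_lsum] at hf
  have := ENNReal.tendsto_atTop_zero_of_tsum_ne_top hf
  obtain ⟨N, hN⟩ := ((this.eventually (gt_mem_nhds hη)).and (eventually_ge_atTop 1)).exists
  exact ⟨N, hN.2, hN.1⟩

variable [Nontrivial (Pt D)] {f : (ℕ → V) → ℝ}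

lemma pressureZ_le (h : GS E J O T c R r b β) (hπ : IsCodingMap E J T π)
    (hf : ∀ ω ∈ TMS E, f ω = t * Real.log ‖fderiv ℝ (T (ω 0) (ω 1)) (π (shift ω))‖) (n : ℕ) :
    pressureZ E f n ≤ lsum (Wt E J T t) n := by
  classical
  have hinj : Function.Injective fun w : Fin n → V => List.ofFn w := List.ofFn_injective
  refine le_trans ?_ (ENNReal.tsum_comp_le_tsum_of_injective hinj
    (fun w : List V => if w.length = n then Wt E J T t w else 0))
  refine ENNReal.tsum_le_tsum fun w => iSup₂_le fun ω hω => ?_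
  rw [exp_birkhoff h hπ hf hω.1 n]
  have e : List.ofFn w = pre n ω := by
    rw [pre]; congr 1; funext i; exact (hω.2 i).symm
  simp only [List.length_ofFn, if_true]
  rw [e]
  refine le_Wt (adm_pre n hω.1) ?_
  have := coding_mem h hπ (shift_iterate_mem hω.1 n)
  rwa [shift_iterate_apply, zero_add] at this

lemma exists_edge_of_adm {w : List V} {u : V} (hw : adm E w u) (h0 : w ≠ []) : ∃ v, E v u := by
  induction w with
  | nil => exact absurd rfl h0
  | cons v w ih =>
    cases w with
    | nil => exact ⟨v, hw.1⟩
    | cons v' w => exact ih hw.2 (by simp)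

lemma exists_path (hext : ∀ ⦃v u⦄, E v u → ∃ u', E u u') {v u : V} (e : E v u) :
    ∃ τ ∈ TMS E, τ 0 = u := by
  choose g hg using fun (p : {p : V × V // E p.1 p.2}) => hext p.2
  let F : {p : V × V // E p.1 p.2} → {p : V × V // E p.1 p.2} := fun p =>
    ⟨(p.1.2, g p), hg p⟩
  refine ⟨fun n => (F^[n] ⟨(v, u), e⟩).1.2, fun n => ?_, rfl⟩
  have : F^[n + 1] ⟨(v, u), e⟩ = F (F^[n] ⟨(v, u), e⟩) := Function.iterate_succ_apply' _ _ _
  simp only [this, F]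
  exact hg _

lemma le_pressureZ (h : GS E J O T c R r b β) (hπ : IsCodingMap E J T π)
    (hf : ∀ ω ∈ TMS E, f ω = t * Real.log ‖fderiv ℝ (T (ω 0) (ω 1)) (π (shift ω))‖)
    (hext : ∀ ⦃v u⦄, E v u → ∃ u', E u u') (v : V) {n : ℕ} (hn : 1 ≤ n) :
    lsum (Qt E J T t v) n ≤ pressureZ E f n := by
  classical
  have h1 : lsum (Qt E J T t v) n =
      ∑' w : {w : List V // w.length = n}, Qt E J T t v w := by
    refine Eq.trans ?_ (tsum_subtype {w : List V | w.length = n} (Qt E J T t v)).symm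
    exact tsum_congr fun w => by simp [Set.indicator_apply]
  rw [h1]
  let g : {w : List V // w.length = n} → (Fin n → V) := fun w i => w.1[i.1]'(by rw [w.2]; exact i.2)
  have hofFn : ∀ w, List.ofFn (g w) = w.1 := fun w => by
    refine List.ext_getElem (by simp [w.2]) fun i h1 h2 => by simp [g]
  have hinj : Function.Injective g := fun w w' e => by
    apply Subtype.ext; rw [← hofFn w, ← hofFn w', e]
  refine le_trans ?_ (ENNReal.tsum_comp_le_tsum_of_injective hinj _)
  refine ENNReal.tsum_le_tsum fun w => ?_
  by_cases hw : adm E w.1 v ∧ hd w.1 v = v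
  · have hne : w.1 ≠ [] := by
      intro e; have := w.2; rw [e] at this; simp at this; omega
    obtain ⟨x, hx⟩ := exists_edge_of_adm hw.1 hne
    obtain ⟨τ, hτ, hτ0⟩ := exists_path hext hx
    have hadm : adm E w.1 (τ 0) := by rw [hτ0]; exact hw.1
    have hmem := cat_mem hτ hadm
    have hcat : ∀ i (hi : i < n), cat w.1 τ i = w.1[i]'(by rw [w.2]; exact hi) := fun i hi => by
      rw [cat_apply, dif_pos (by rw [w.2]; exact hi)]
    have hpre : pre n (cat w.1 τ) = w.1 := by
      rw [← hofFn w, pre]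
      congr 1; funext i
      rw [hofFn w]
      exact hcat i i.2
    have hsh : shift^[n] (cat w.1 τ) = τ := by
      funext k
      rw [shift_iterate_apply, cat_apply, dif_neg (by rw [w.2]; omega), w.2]
      simp
    refine le_iSup₂_of_le (cat w.1 τ) ⟨hmem, fun i => hcat i i.2⟩ ?_
    have hn' : cat w.1 τ n = v := by
      have := congrFun hsh 0
      rw [shift_iterate_apply, zero_add] at this
      rw [this, hτ0]
    rw [exp_birkhoff h hπ hf hmem n, hpre, hsh, hn', Qt, if_pos hw]
    refine iInf₂_le (π τ) ?_
    rw [← hτ0]; exact coding_mem h hπ hτ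
  · rw [Qt, if_neg hw]; exact zero_le

/-- Zero pressure bounds all loop sums. -/
lemma lsum_Lt_le_of_pressure (h : GS E J O T c R r b β) (hπ : IsCodingMap E J T π) (ht : 0 ≤ t)
    (hf : ∀ ω ∈ TMS E, f ω = t * Real.log ‖fderiv ℝ (T (ω 0) (ω 1)) (π (shift ω))‖)
    (hext : ∀ ⦃v u⦄, E v u → ∃ u', E u u') (hP : pressure E f = 0) (v : V) (n : ℕ) (hn : 1 ≤ n) :
    lsum (Lt E J T t v) n ≤ ENNReal.ofReal (dconst r b β (chainM D R c * c) ^ t) := by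
  have hQ : lsum (Qt E J T t v) n ≤ 1 := by
    by_contra hcon
    rw [not_le] at hcon
    refine absurd hP (pressure_pos hcon hn fun k hk => ?_).ne'
    exact (pow_lsum_le (Qt_nil v) (Qt_mul h v) n k).trans
      (le_pressureZ h hπ hf hext v (Nat.mul_pos hk hn))
  have h1 : lsum (Lt E J T t v) n ≤ lsum (fun ℓ =>
      ENNReal.ofReal (dconst r b β (chainM D R c * c) ^ t) * Qt E J T t v ℓ) n :=
    lsum_mono fun ℓ _ => Lt_le_Qt h ht v ℓ
  rw [lsum_const_mul] at h1
  exact h1.trans (mul_le_of_le_one_right' hQ)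

lemma pressure_neg_of_tsum (h : GS E J O T c R r b β) (hπ : IsCodingMap E J T π)
    (hf : ∀ ω ∈ TMS E, f ω = t * Real.log ‖fderiv ℝ (T (ω 0) (ω 1)) (π (shift ω))‖)
    (h1 : ∑' w, Wt E J T t w ≠ ⊤) : pressure E f < 0 := by
  obtain ⟨N, hN, hlt⟩ := exists_lsum_lt h1 zero_lt_one
  have h2 : ∑' v, Wt E J T t [v] ≠ ⊤ := by
    refine ne_top_of_le_ne_top h1 (ENNReal.tsum_comp_le_tsum_of_injective (f := fun v : V => [v])
      (fun v u e => by simpa using e) _)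
  exact pressure_neg Wt_nil (Wt_append h) h2 hN hlt (pressureZ_le h hπ hf)

end Weights


/-! ### Upper bound for the dimension of a limit set -/

section Upper

variable {D : ℕ} {V : Type*} {E : V → V → Prop} {J O : V → Set (Pt D)}
  {T : V → V → Pt D → Pt D} {c R r b β t : ℝ} {π : (ℕ → V) → Pt D}

lemma norm_wprod_le_Wt (h : GS E J O T c R r b β) (ht : 0 < t) {w : List V} {u : V}
    (hw : adm E w u) {x : Pt D} (hx : x ∈ J u) :
    wprod T norm w u x ≤ (Wt E J T t w).toReal ^ (1 / t) := by
  have h0 := wprod_norm_nonneg (T := T) w u x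
  have h1 : Wt E J T t w ≠ ⊤ := ((Wt_le_one h ht.le w).trans_lt ENNReal.one_lt_top).ne
  have h2 : wprod T norm w u x ^ t ≤ (Wt E J T t w).toReal :=
    (ENNReal.ofReal_le_iff_le_toReal h1).1 (le_Wt hw hx)
  calc wprod T norm w u x = (wprod T norm w u x ^ t) ^ (1 / t) := by
        rw [← Real.rpow_mul h0, mul_one_div_cancel ht.ne', Real.rpow_one]
    _ ≤ _ := Real.rpow_le_rpow (Real.rpow_nonneg h0 _) h2 (by positivity)

/-- Covering the limit set by the pieces of generation `k N` bounds its dimension. -/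
theorem dimH_limit_le [Countable V] (h : GS E J O T c R r b β) (hπ : IsCodingMap E J T π)
    (h9 : CondG9 E J T) (ht : 0 < t) (h1 : ∑' v, Wt E J T t [v] ≠ ⊤) {N : ℕ} (hN : 1 ≤ N)
    (hle : lsum (Wt E J T t) N ≤ 1) : dimH (π '' TMS E) ≤ ENNReal.ofReal t := by
  classical
  obtain ⟨c₁, hc₁, h9⟩ := h9
  set A : ℝ := (chainM D R c + 1) * dconst r b β c with hA
  have hA0 : 0 ≤ A := mul_nonneg (by positivity) (dconst_pos _ _ _ _).le
  let pc : ℕ → List V × V → Set (Pt D) := fun n p =>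
    if p.1.length = n * N ∧ adm E p.1 p.2 then fmap T p.1 p.2 '' J p.2 else ∅
  have hdiam : ∀ v, diam (J v) ≤ c₁ * (Wt E J T t [v]).toReal ^ (1 / t) := fun v => by
    refine (h9 v).trans (mul_le_mul_of_nonneg_left (Real.sSup_le ?_ (by positivity)) hc₁.le)
    rintro _ ⟨u, e, z, hz, rfl⟩
    have := norm_wprod_le_Wt (w := [v]) h ht (u := u) ⟨e, trivial⟩ hz
    simpa [wprod, hd] using this
  have hpc1 : ∀ n p, ediam (pc n p) ≤ ENNReal.ofReal (chainM D R c * c * r ^ (n * N)) := by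
    rintro n ⟨w, u⟩
    simp only [pc]
    split_ifs with hw
    · refine ediam_le ?_
      rintro _ ⟨x, hx, rfl⟩ _ ⟨z, hz, rfl⟩
      rw [edist_dist, ← hw.1]
      exact ENNReal.ofReal_le_ofReal (h.fmap_far w u hw.2 hx hz)
    · simp
  have hpc2 : ∀ n p, ediam (pc n p) ^ t ≤ ENNReal.ofReal ((A * c₁) ^ t) *
      ((if p.1.length = n * N then Wt E J T t p.1 else 0) * Wt E J T t [p.2]) := by
    rintro n ⟨w, u⟩
    simp only [pc]
    by_cases hw : w.length = n * N ∧ adm E w u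
    · rw [if_pos hw, if_pos hw.1]
      have t1 : Wt E J T t w ≠ ⊤ := ((Wt_le_one h ht.le w).trans_lt ENNReal.one_lt_top).ne
      have t2 : Wt E J T t [u] ≠ ⊤ := ((Wt_le_one h ht.le [u]).trans_lt ENNReal.one_lt_top).ne
      have hd1 : ediam (fmap T w u '' J u) ≤ ENNReal.ofReal (A * c₁ *
          (((Wt E J T t w).toReal ^ (1 / t)) * ((Wt E J T t [u]).toReal ^ (1 / t)))) := by
        refine ediam_le ?_
        rintro _ ⟨x, hx, rfl⟩ _ ⟨z, hz, rfl⟩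
        rw [edist_dist]
        refine ENNReal.ofReal_le_ofReal ?_
        refine (h.fmap_diam w u hw.2 (fun x hx => norm_wprod_le_Wt h ht hw.2 hx) hx hz).trans ?_
        calc A * (Wt E J T t w).toReal ^ (1 / t) * diam (J u)
            ≤ A * (Wt E J T t w).toReal ^ (1 / t) * (c₁ * (Wt E J T t [u]).toReal ^ (1 / t)) :=
              mul_le_mul_of_nonneg_left (hdiam u) (by positivity)
          _ = _ := by ring
      refine (ENNReal.rpow_le_rpow hd1 ht.le).trans (le_of_eq ?_)
      rw [ENNReal.ofReal_rpow_of_nonneg (by positivity) ht.le, Real.mul_rpow (by positivity)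
        (by positivity), Real.mul_rpow (x := (Wt E J T t w).toReal ^ (1 / t)) (by positivity)
        (by positivity), ← Real.rpow_mul
        ENNReal.toReal_nonneg, ← Real.rpow_mul ENNReal.toReal_nonneg, one_div_mul_cancel ht.ne',
        Real.rpow_one, Real.rpow_one, ENNReal.ofReal_mul (by positivity),
        ENNReal.ofReal_mul (by positivity), ENNReal.ofReal_toReal t1, ENNReal.ofReal_toReal t2]
    · rw [if_neg hw]
      simp [ht]
  have hsum : ∀ n, ∑' p, ediam (pc n p) ^ t ≤
      ENNReal.ofReal ((A * c₁) ^ t) * ∑' v, Wt E J T t [v] := fun n => by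
    refine (ENNReal.tsum_le_tsum (hpc2 n)).trans ?_
    rw [ENNReal.tsum_mul_left, ENNReal.tsum_prod (f := fun w u =>
      (if List.length w = n * N then Wt E J T t w else 0) * Wt E J T t [u])]
    refine mul_le_mul_right ?_ _
    simp_rw [ENNReal.tsum_mul_left]
    rw [ENNReal.tsum_mul_right]
    have : lsum (Wt E J T t) (n * N) ≤ 1 :=
      (lsum_le_pow Wt_nil (Wt_append h) N n).trans (pow_le_one₀ zero_le hle)
    calc _ ≤ 1 * _ := mul_le_mul_left this _
      _ = _ := one_mul _
  have hcov : ∀ n, π '' TMS E ⊆ ⋃ p, pc n p := by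
    rintro n _ ⟨ω, hω, rfl⟩
    refine mem_iUnion.2 ⟨(pre (n * N) ω, ω (n * N)), ?_⟩
    simp only [pc]
    rw [if_pos ⟨length_pre _ _, adm_pre _ hω⟩, coding_pre h hπ hω (n * N)]
    refine mem_image_of_mem _ ?_
    have := coding_mem h hπ (shift_iterate_mem hω (n * N))
    rwa [shift_iterate_apply, zero_add] at this
  have htend : Tendsto (fun n : ℕ => ENNReal.ofReal (chainM D R c * c * r ^ (n * N))) atTop
      (𝓝 0) := by
    rw [← ENNReal.ofReal_zero]
    refine (ENNReal.continuous_ofReal.tendsto 0).comp ?_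
    have h3 : Tendsto (fun n : ℕ => r ^ (n * N)) atTop (𝓝 0) :=
      (tendsto_pow_atTop_nhds_zero_of_lt_one h.hr0.le h.hr1).comp
        (tendsto_atTop_mono (fun n => Nat.le_mul_of_pos_right n hN) tendsto_id)
    simpa using h3.const_mul (chainM D R c * c : ℝ)
  have hH : MeasureTheory.Measure.hausdorffMeasure t (π '' TMS E) ≠ ⊤ := by
    refine ne_top_of_le_ne_top (ENNReal.mul_ne_top
      (ENNReal.ofReal_ne_top (r := (A * c₁) ^ t)) h1) ?_
    refine (MeasureTheory.Measure.hausdorffMeasure_le_liminf_tsum t _ _ htend pc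
      (Eventually.of_forall hpc1) (Eventually.of_forall hcov)).trans ?_
    refine (liminf_le_liminf (Eventually.of_forall hsum)).trans ?_
    simp
  have := dimH_le_of_hausdorffMeasure_ne_top (d := t.toNNReal)
    (s := π '' TMS E) (by rwa [Real.coe_toNNReal t ht.le])
  exact this

end Upper


/-! ### Lower bound for the dimension of a separated Cantor set -/

section Cantor

variable {D : ℕ} {V : Type*} {E : V → V → Prop} {J O : V → Set (Pt D)}
  {T : V → V → Pt D → Pt D} {c R r b β t : ℝ} {π : (ℕ → V) → Pt D}

/-- A set coded by `m` symbols, in which points separating at time `k` are at distance at least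
`δ ρ ^ k`, is mapped onto the unit interval by a `τ`-Hölder map (read the code as a base `m`
expansion) as soon as `m * ρ ^ τ ≥ 1`. -/
lemma le_dimH_of_separated {m : ℕ} (hm : 2 ≤ m) {ρ τ δ : ℝ} (hρ : 0 < ρ) (hτ : 0 < τ) (hδ : 0 < δ)
    (hmρ : 1 ≤ m * ρ ^ τ) (p : (ℕ → Fin m) → Pt D)
    (hsep : ∀ k α α', (∀ i < k, α i = α' i) → α k ≠ α' k → ρ ^ k * δ ≤ dist (p α) (p α')) :
    ENNReal.ofReal τ ≤ dimH (range p) := by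
  classical
  have : Nonempty (ℕ → Fin m) := ⟨fun _ => ⟨0, by omega⟩⟩
  have key : ∀ α α', |Real.ofDigits α - Real.ofDigits α'| ≤ (δ ^ τ)⁻¹ * dist (p α) (p α') ^ τ := by
    intro α α'
    by_cases hne : α = α'
    · subst hne; simp; positivity
    have hex : ∃ k, α k ≠ α' k := Function.ne_iff.1 hne
    set k := Nat.find hex
    have h1 : ∀ i < k, α i = α' i := fun i hi => not_not.1 (Nat.find_min hex hi)
    have h2 := hsep k α α' h1 (Nat.find_spec hex)
    have hm0 : (0 : ℝ) < m := by exact_mod_cast (by omega : 0 < m)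
    refine (Real.abs_ofDigits_sub_ofDigits_le h1).trans ?_
    have h3 : ((m : ℝ) ^ k)⁻¹ ≤ (ρ ^ τ) ^ k := by
      rw [← inv_pow]
      exact pow_le_pow_left₀ (by positivity) ((inv_le_iff_one_le_mul₀' hm0).2 hmρ) k
    have h4 : (ρ ^ k * δ) ^ τ = (ρ ^ τ) ^ k * δ ^ τ := by
      rw [Real.mul_rpow (by positivity) hδ.le, ← Real.rpow_natCast, ← Real.rpow_mul hρ.le,
        mul_comm (k : ℝ), Real.rpow_mul hρ.le, Real.rpow_natCast]
    have h5 := Real.rpow_le_rpow (by positivity) h2 hτ.le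
    rw [h4] at h5
    rw [inv_mul_eq_div, le_div_iff₀ (by positivity)]
    exact (mul_le_mul_of_nonneg_right h3 (by positivity)).trans h5
  have hinj : ∀ α α', p α = p α' → Real.ofDigits α = Real.ofDigits α' := fun α α' he => by
    have := key α α'
    rw [he, dist_self, Real.zero_rpow hτ.ne', mul_zero] at this
    exact sub_eq_zero.1 (abs_eq_zero.1 (le_antisymm this (abs_nonneg _)))
  let g : Pt D → ℝ := fun x => Real.ofDigits (Function.invFun p x)
  have hg : ∀ α, g (p α) = Real.ofDigits α := fun α =>
    hinj _ _ (Function.invFun_eq ⟨α, rfl⟩)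
  have hH : HolderOnWith ((δ ^ τ)⁻¹).toNNReal τ.toNNReal g (range p) := by
    rintro _ ⟨α, rfl⟩ _ ⟨α', rfl⟩
    rw [hg, hg, edist_dist, edist_dist, Real.dist_eq, Real.coe_toNNReal τ hτ.le]
    change _ ≤ ENNReal.ofReal _ * _
    rw [ENNReal.ofReal_rpow_of_nonneg dist_nonneg hτ.le, ← ENNReal.ofReal_mul (by positivity)]
    exact ENNReal.ofReal_le_ofReal (key α α')
  have h1 := hH.dimH_image_le (by simpa using hτ)
  have h2 : Icc (0 : ℝ) 1 ⊆ g '' range p := fun y hy => by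
    obtain ⟨α, -, rfl⟩ := Real.ofDigits_SurjOn (by omega : 1 < m) hy
    exact ⟨p α, ⟨α, rfl⟩, hg α⟩
  have h3 : dimH (Icc (0 : ℝ) 1) = 1 := by
    rw [Real.dimH_of_nonempty_interior (by simp), Module.finrank_self, Nat.cast_one]
  have h4 : 1 ≤ dimH (range p) / (τ.toNNReal : ℝ≥0∞) := h3 ▸ (dimH_mono h2).trans h1
  have h5 : (τ.toNNReal : ℝ≥0∞) ≠ 0 := by simpa using hτ
  rw [ENNReal.le_div_iff_mul_le (Or.inl h5) (Or.inl ENNReal.coe_ne_top), one_mul] at h4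
  exact h4

/-- The sequence obtained by concatenating the words `ws (α 0), ws (α 1), …` of length `L`. -/
def conc {m : ℕ} (L : ℕ) (v : V) (ws : Fin m → List V) (α : ℕ → Fin m) : ℕ → V :=
  fun i => (ws (α (i / L))).getD (i % L) v

lemma conc_eq {m L : ℕ} (hL : 1 ≤ L) (v : V) {ws : Fin m → List V} (hl : ∀ i, (ws i).length = L)
    (α : ℕ → Fin m) : conc L v ws α = cat (ws (α 0)) (conc L v ws (shift α)) := by
  funext i
  rw [cat_apply]
  split_ifs with hi
  · rw [hl] at hi
    simp [conc, Nat.div_eq_of_lt hi, Nat.mod_eq_of_lt hi, hl, hi]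
  · rw [hl] at hi ⊢
    push Not at hi
    obtain ⟨j, rfl⟩ := Nat.exists_eq_add_of_le hi
    simp [conc, shift, Nat.add_div_left j (by omega : 0 < L)]

lemma conc_zero {m L : ℕ} (v : V) {ws : Fin m → List V}
    (hv : ∀ i, hd (ws i) v = v) (α : ℕ → Fin m) :
    conc L v ws α 0 = v := by
  have h1 := hv (α 0)
  simp only [conc, Nat.zero_div, Nat.zero_mod]
  cases hw : ws (α 0) with
  | nil => rfl
  | cons x w => rw [hw] at h1; exact h1

lemma cat_adm {w : List V} {τ : ℕ → V} {n : ℕ} (hτ : ∀ i < n, E (τ i) (τ (i + 1)))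
    (hw : adm E w (τ 0)) : ∀ i < n + w.length, E (cat w τ i) (cat w τ (i + 1)) := by
  induction w with
  | nil => exact hτ
  | cons v w ih =>
    intro i hi
    cases i with
    | zero =>
      change E v (cat w τ 0)
      rw [cat_zero]
      exact hw.1
    | succ i =>
      refine ih hw.2 i ?_
      simp only [List.length_cons] at hi
      omega

lemma conc_mem {m L : ℕ} (hL : 1 ≤ L) (v : V) {ws : Fin m → List V}
    (hl : ∀ i, (ws i).length = L) (hv : ∀ i, hd (ws i) v = v) (ha : ∀ i, adm E (ws i) v)
    (α : ℕ → Fin m) : conc L v ws α ∈ TMS E := by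
  have key : ∀ k α, ∀ i < k * L, E (conc L v ws α i) (conc L v ws α (i + 1)) := by
    intro k
    induction k with
    | zero => intro α i hi; omega
    | succ k ih =>
      intro α i hi
      rw [conc_eq hL v hl α]
      refine cat_adm (ih (shift α)) ?_ i (by rw [hl]; linarith)
      rw [conc_zero v hv]
      exact ha _
  exact fun n => key (n + 1) α n (by nlinarith)

/-- Finitely many loops of the same length at `v`, with disjoint pieces and contracting by at most
`ρ`, generate a subset of the limit set of dimension at least `log m / log (1 / ρ)`. -/
theorem le_dimH_of_loops (h : GS E J O T c R r b β) (hπ : IsCodingMap E J T π) {v : V} {m L : ℕ}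
    (hL : 1 ≤ L) (hm : 2 ≤ m) {ws : Fin m → List V} (hl : ∀ i, (ws i).length = L)
    (hv : ∀ i, hd (ws i) v = v) (ha : ∀ i, adm E (ws i) v) {ρ τ : ℝ} (hρ : 0 < ρ) (hτ : 0 < τ)
    (hmρ : 1 ≤ m * ρ ^ τ)
    (hlip : ∀ i, ∀ x ∈ J v, ∀ z ∈ J v, ρ * dist x z ≤ dist (fmap T (ws i) v x) (fmap T (ws i) v z))
    (hdis : ∀ i j, i ≠ j → ∀ ω ∈ TMS E, ω 0 = v → ∀ ω' ∈ TMS E, ω' 0 = v →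
      fmap T (ws i) v (π ω) ≠ fmap T (ws j) v (π ω')) :
    ENNReal.ofReal τ ≤ dimH (π '' TMS E) := by
  set om := conc L v ws with hom
  have om_mem : ∀ α, om α ∈ TMS E := conc_mem hL v hl hv ha
  have om0 : ∀ α, om α 0 = v := conc_zero v hv
  set p : (ℕ → Fin m) → Pt D := fun α => π (om α) with hp
  have pJ : ∀ α, p α ∈ J v := fun α => om0 α ▸ coding_mem h hπ (om_mem α)
  have prec : ∀ α, p α = fmap T (ws (α 0)) v (p (shift α)) := fun α => by
    have h1 : adm E (ws (α 0)) (om (shift α) 0) := by rw [om0]; exact ha _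
    have := coding_cat h hπ (om_mem (shift α)) h1
    rw [om0] at this
    rw [← this, hp, hom]
    exact congrArg π (conc_eq hL v hl α)
  -- codes agreeing up to time `k` give nearby points
  have pnear : ∀ k α α', (∀ i < k, α i = α' i) →
      dist (p α) (p α') ≤ chainM D R c * c * r ^ k := by
    intro k α α' hk
    have : ∃ w, k ≤ w.length ∧ adm E w v ∧ ∃ x ∈ J v, ∃ z ∈ J v, p α = fmap T w v x ∧
        p α' = fmap T w v z ∧ hd w v = v := by
      induction k generalizing α α' with
      | zero => exact ⟨[], le_rfl, trivial, _, pJ α, _, pJ α', rfl, rfl, rfl⟩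
      | succ k ih =>
        obtain ⟨w, h1, h2, x, hx, z, hz, h3, h4, h5⟩ := ih (shift α) (shift α')
          (fun i hi => hk (i + 1) (by omega))
        refine ⟨ws (α 0) ++ w, ?_, ?_, x, hx, z, hz, ?_, ?_, ?_⟩
        · rw [List.length_append, hl]; omega
        · rw [adm_append, h5]; exact ⟨ha _, h2⟩
        · rw [fmap_append, h5, ← h3, prec α]
        · rw [fmap_append, h5, ← h4, prec α', hk 0 (by omega)]
        · rw [hd_append, h5, hv]
    obtain ⟨w, h1, h2, x, hx, z, hz, h3, h4, -⟩ := this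
    rw [h3, h4]
    refine (h.fmap_far w v h2 hx hz).trans (mul_le_mul_of_nonneg_left ?_ ?_)
    · exact pow_le_pow_of_le_one h.hr0.le h.hr1.le h1
    · exact mul_nonneg (Nat.cast_nonneg _) h.hc.le
  have pcont : Continuous p := by
    rw [continuous_iff_continuousAt]
    intro α
    rw [ContinuousAt, Metric.tendsto_nhds]
    intro η hη
    have h3 : Tendsto (fun k : ℕ => chainM D R c * c * r ^ k) atTop (𝓝 0) := by
      simpa using (tendsto_pow_atTop_nhds_zero_of_lt_one h.hr0.le h.hr1).const_mul
        (chainM D R c * c : ℝ)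
    obtain ⟨k, hk⟩ := (h3.eventually (gt_mem_nhds hη)).exists
    filter_upwards [(PiNat.isOpen_cylinder (fun _ => Fin m) α k).mem_nhds
      (PiNat.self_mem_cylinder α k)] with α' hα'
    exact (pnear k α' α hα').trans_lt hk
  -- compactness of the code space gives a uniform gap at the first level
  obtain ⟨δ, hδ, hgap⟩ : ∃ δ > 0, ∀ α α', α 0 ≠ α' 0 → δ ≤ dist (p α) (p α') := by
    let S : Set ((ℕ → Fin m) × (ℕ → Fin m)) := {q | q.1 0 ≠ q.2 0}
    have hS : IsCompact S := by
      refine IsClosed.isCompact ?_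
      have : S = (fun q : (ℕ → Fin m) × (ℕ → Fin m) => (q.1 0, q.2 0)) ⁻¹' {a | a.1 ≠ a.2} := rfl
      rw [this]
      exact (isClosed_discrete _).preimage (((continuous_apply 0).comp continuous_fst).prodMk
        ((continuous_apply 0).comp continuous_snd))
    by_cases hne : S.Nonempty
    · obtain ⟨q, hq, hmin⟩ := hS.exists_isMinOn hne
        (f := fun q => dist (p q.1) (p q.2))
        ((pcont.comp continuous_fst).dist (pcont.comp continuous_snd)).continuousOn
      refine ⟨dist (p q.1) (p q.2), ?_, fun α α' hα => isMinOn_iff.1 hmin (α, α') hα⟩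
      rw [gt_iff_lt, dist_pos, prec q.1, prec q.2]
      exact hdis _ _ hq _ (om_mem _) (om0 _) _ (om_mem _) (om0 _)
    · exact ⟨1, one_pos, fun α α' hα => absurd ⟨(α, α'), hα⟩ hne⟩
  have hsep : ∀ k α α', (∀ i < k, α i = α' i) → α k ≠ α' k →
      ρ ^ k * δ ≤ dist (p α) (p α') := by
    intro k
    induction k with
    | zero => intro α α' _ hne; simpa using hgap α α' hne
    | succ k ih =>
      intro α α' he hne
      have h1 := ih (shift α) (shift α') (fun i hi => he (i + 1) (by omega)) hne
      have h2 := hlip (α 0) _ (pJ (shift α)) _ (pJ (shift α'))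
      rw [prec α, prec α', ← he 0 (by omega)]
      refine le_trans ?_ h2
      rw [pow_succ']
      nlinarith
  refine (le_dimH_of_separated hm hρ hτ hδ hmρ p hsep).trans (dimH_mono ?_)
  rintro _ ⟨α, rfl⟩
  exact mem_image_of_mem π (om_mem α)

end Cantor


/-! ### Selecting many loops of comparable contraction -/

section Select

variable {D : ℕ} {V : Type*} {E : V → V → Prop} {J O : V → Set (Pt D)}
  {T : V → V → Pt D → Pt D} {c R r b β t : ℝ} {π : (ℕ → V) → Pt D}

/-- The smallest contraction of the composition along the loop `w v` on `J v`, measured by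
`inorm` along the orbit. -/
def qi (J : V → Set (Pt D)) (T : V → V → Pt D → Pt D) (v : V) (w : List V) : ℝ :=
  sInf (wprod T inorm w v '' J v)

open Classical in
/-- The weight `qi ^ τ` of a loop at `v` (zero for other words). -/
def Ql (E : V → V → Prop) (J : V → Set (Pt D)) (T : V → V → Pt D → Pt D) (τ : ℝ) (v : V)
    (w : List V) : ℝ≥0∞ :=
  if adm E w v ∧ hd w v = v then ENNReal.ofReal (qi J T v w ^ τ) else 0

lemma wprod_inorm_nonneg (w : List V) (u : V) (x : Pt D) : 0 ≤ wprod T inorm w u x := by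
  induction w with
  | nil => simp
  | cons v w ih => exact mul_nonneg inorm_nonneg ih

lemma qi_nonneg (v : V) (w : List V) : 0 ≤ qi J T v w := by
  refine Real.sInf_nonneg ?_
  rintro _ ⟨x, -, rfl⟩
  exact wprod_inorm_nonneg _ _ _

lemma qi_le {v : V} (w : List V) {x : Pt D} (hx : x ∈ J v) : qi J T v w ≤ wprod T inorm w v x := by
  refine csInf_le ⟨0, ?_⟩ ⟨x, hx, rfl⟩
  rintro _ ⟨x, -, rfl⟩
  exact wprod_inorm_nonneg _ _ _

lemma le_qi {v : V} (w : List V) {a : ℝ} (hJ : (J v).Nonempty)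
    (H : ∀ x ∈ J v, a ≤ wprod T inorm w v x) : a ≤ qi J T v w := by
  refine le_csInf (hJ.image _) ?_
  rintro _ ⟨x, hx, rfl⟩
  exact H x hx

lemma qi_le_one [Nontrivial (Pt D)] (h : GS E J O T c R r b β) {v : V} {w : List V}
    (hw : adm E w v) : qi J T v w ≤ 1 := by
  obtain ⟨x, hx⟩ := (h.J_conn v).nonempty
  exact (qi_le w hx).trans ((h.wprod_pos w v hw hx).2.trans (h.wprod_norm_le_one w v hw hx))

lemma Ql_nil (h : GS E J O T c R r b β) (τ : ℝ) (v : V) : 1 ≤ Ql E J T τ v [] := by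
  have : qi J T v [] = 1 := by
    have : wprod T inorm [] v '' J v = {1} := by
      rw [← (h.J_conn v).nonempty.image_const (1 : ℝ)]
      exact image_congr fun x _ => rfl
    rw [qi, this, csInf_singleton]
  rw [Ql, if_pos ⟨trivial, rfl⟩, this]
  simp

lemma Ql_mul (h : GS E J O T c R r b β) {τ : ℝ} (hτ : 0 ≤ τ) (v : V) (w w' : List V) :
    Ql E J T τ v w * Ql E J T τ v w' ≤ Ql E J T τ v (w ++ w') := by
  unfold Ql
  by_cases h1 : adm E w v ∧ hd w v = v
  · by_cases h2 : adm E w' v ∧ hd w' v = v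
    · have h3 : adm E (w ++ w') v ∧ hd (w ++ w') v = v := by
        rw [adm_append, hd_append, h2.2]
        exact ⟨⟨h1.1, h2.1⟩, h1.2⟩
      rw [if_pos h1, if_pos h2, if_pos h3, ← ENNReal.ofReal_mul (Real.rpow_nonneg (qi_nonneg _ _) _),
        ← Real.mul_rpow (qi_nonneg _ _) (qi_nonneg _ _)]
      refine ENNReal.ofReal_le_ofReal (Real.rpow_le_rpow
        (mul_nonneg (qi_nonneg _ _) (qi_nonneg _ _)) ?_ hτ)
      refine le_qi _ (h.J_conn v).nonempty fun x hx => ?_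
      rw [wprod_append, h2.2]
      have hm := h.fmap_mem w' v h2.1 hx
      rw [h2.2] at hm
      exact mul_le_mul (qi_le w hm) (qi_le w' hx) (qi_nonneg _ _) (wprod_inorm_nonneg _ _ _)
    · simp [h2]
  · simp [h1]

/-- Loops of a common length whose contraction lies in `[e ^ (-(j+1)), e ^ (-j)]`, in number at
least `B e ^ (j τ')` for a prescribed `B`: otherwise the sums of `qi ^ τ` over all loops of a given
length would be bounded, while they grow exponentially. -/
lemma exists_class [Nontrivial (Pt D)] (h : GS E J O T c R r b β) {τ τ' : ℝ} (hτ0 : 0 ≤ τ')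
    (hτ : τ' < τ) {v : V} {n : ℕ} (hn : 1 ≤ n) (hs : 1 < lsum (Ql E J T τ v) n) (B : ℝ) :
    ∃ L, 1 ≤ L ∧ ∃ j : ℕ, ∃ F : Finset (List V),
      (∀ w ∈ F, w.length = L ∧ adm E w v ∧ hd w v = v ∧ Real.exp (-(j + 1 : ℝ)) ≤ qi J T v w ∧
        qi J T v w ≤ Real.exp (-(j : ℝ))) ∧ B * Real.exp (j * τ') ≤ F.card := by
  classical
  by_contra hcon
  push Not at hcon
  set Z : ℝ≥0∞ := ∑' j : ℕ, ENNReal.ofReal (Real.exp (-(τ - τ'))) ^ j with hZ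
  have hZt : Z ≠ ⊤ := by
    rw [hZ, ENNReal.tsum_geometric, ENNReal.inv_ne_top]
    refine (tsub_pos_of_lt ?_).ne'
    rw [ENNReal.ofReal_lt_one, Real.exp_lt_one_iff]
    linarith
  obtain ⟨k, hk1, hk⟩ : ∃ k, 1 ≤ k ∧ ENNReal.ofReal B * Z < lsum (Ql E J T τ v) (k * n) := by
    have h1 := ENNReal.tendsto_pow_atTop_nhds_top_iff.2 hs
    have h2 := h1.eventually (lt_mem_nhds (ENNReal.mul_ne_top (ENNReal.ofReal_ne_top (r := B)) hZt).lt_top)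
    obtain ⟨k, hk, hk'⟩ := (h2.and (eventually_ge_atTop 1)).exists
    exact ⟨k, hk', hk.trans_le (pow_lsum_le (Ql_nil h τ v) (Ql_mul h (hτ0.trans hτ.le) v) n k)⟩
  set L := k * n
  have hL : 1 ≤ L := Nat.mul_pos hk1 hn
  let P : ℕ → List V → Prop := fun j w => w.length = L ∧ adm E w v ∧ hd w v = v ∧
    Real.exp (-(j + 1 : ℝ)) ≤ qi J T v w ∧ qi J T v w ≤ Real.exp (-(j : ℝ))
  refine absurd hk (not_lt.2 ?_)
  calc lsum (Ql E J T τ v) L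
      ≤ ∑' w : List V, ∑' j : ℕ, if P j w then ENNReal.ofReal (Real.exp (-(j : ℝ) * τ)) else 0 := by
        refine ENNReal.tsum_le_tsum fun w => ?_
        split_ifs with hw
        · unfold Ql
          split_ifs with hl
          · rcases (qi_nonneg (J := J) (T := T) v w).eq_or_lt with h0 | h0
            · have e0 : qi J T v w ^ τ = 0 := by rw [← h0, Real.zero_rpow (hτ0.trans_lt hτ).ne']
              rw [e0, ENNReal.ofReal_zero]
              exact zero_le
            · have hq1 := qi_le_one h hl.1
              have hlog : 0 ≤ -Real.log (qi J T v w) := by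
                have := Real.log_nonpos h0.le hq1; linarith
              set j := ⌊-Real.log (qi J T v w)⌋₊
              have hj1 := Nat.floor_le hlog
              have hj2 := Nat.lt_floor_add_one (-Real.log (qi J T v w))
              have hP : P j w := by
                refine ⟨hw, hl.1, hl.2, ?_, ?_⟩
                · rw [← Real.le_log_iff_exp_le h0]; linarith
                · rw [← Real.log_le_iff_le_exp h0]; linarith
              refine le_trans ?_ (ENNReal.le_tsum j)
              rw [if_pos hP, Real.exp_mul]
              exact ENNReal.ofReal_le_ofReal
                (Real.rpow_le_rpow h0.le hP.2.2.2.2 (hτ0.trans hτ.le))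
          · simp
        · simp
    _ = ∑' j : ℕ, ∑' w : List V, if P j w then ENNReal.ofReal (Real.exp (-(j : ℝ) * τ)) else 0 :=
        ENNReal.tsum_comm
    _ ≤ ∑' j : ℕ, ENNReal.ofReal B * ENNReal.ofReal (Real.exp (-(τ - τ'))) ^ j := by
        refine ENNReal.tsum_le_tsum fun j => ?_
        rw [ENNReal.tsum_eq_iSup_sum]
        refine iSup_le fun F => ?_
        rw [← Finset.sum_filter, Finset.sum_const, nsmul_eq_mul]
        have hc := hcon L hL j (F.filter (P j)) (fun w hw => (Finset.mem_filter.1 hw).2)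
        have e1 : ENNReal.ofReal (Real.exp (-(τ - τ'))) ^ j =
            ENNReal.ofReal (Real.exp (j * τ') * Real.exp (-(j : ℝ) * τ)) := by
          rw [← ENNReal.ofReal_pow (Real.exp_pos _).le, ← Real.exp_nat_mul, ← Real.exp_add]
          ring_nf
        have e2 : ((F.filter (P j)).card : ℝ≥0∞) ≤ ENNReal.ofReal (B * Real.exp (j * τ')) := by
          rw [← ENNReal.ofReal_natCast]
          exact ENNReal.ofReal_le_ofReal hc.le
        rw [e1, ENNReal.ofReal_mul (Real.exp_pos _).le, ← mul_assoc]
        refine mul_le_mul_left (e2.trans ?_) _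
        rw [← ENNReal.ofReal_mul' (Real.exp_pos _).le]
    _ = ENNReal.ofReal B * Z := ENNReal.tsum_mul_left

end Select


/-! ### The lower bound for the dimension -/

section Low

variable {D : ℕ} {V : Type*} {E : V → V → Prop} {J O : V → Set (Pt D)}
  {T : V → V → Pt D → Pt D} {c R r b β t : ℝ} {π : (ℕ → V) → Pt D}

/-- A finite family of points which are `s a`-separated contains a subfamily of proportional
size which is `d a`-separated; the proportion depends only on `d` and `s`. -/
lemma exists_sparse (D : ℕ) (d s : ℝ) (hs : 0 < s) : ∃ M : ℕ, 1 ≤ M ∧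
    ∀ {ι : Type*} (F : Finset ι) (z : ι → Pt D) (a : ℝ), 0 < a →
      (∀ i ∈ F, ∀ j ∈ F, i ≠ j → s * a ≤ dist (z i) (z j)) →
      ∃ F' ⊆ F, (∀ i ∈ F', ∀ j ∈ F', i ≠ j → d * a < dist (z i) (z j)) ∧
        F.card ≤ M * F'.card := by
  classical
  obtain ⟨M, hM⟩ := exists_cells D (2 * d) s hs
  refine ⟨M + 1, by omega, fun {ι} F z a ha hF => ?_⟩
  let Sp : Finset ι → Prop := fun G => ∀ i ∈ G, ∀ j ∈ G, i ≠ j → d * a < dist (z i) (z j)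
  obtain ⟨F', hF', hmax⟩ := Finset.exists_max_image (F.powerset.filter fun G => Sp G)
    Finset.card ⟨∅, by simp [Sp]⟩
  rw [Finset.mem_filter, Finset.mem_powerset] at hF'
  refine ⟨F', hF'.1, hF'.2, ?_⟩
  have hnear : ∀ i ∈ F, ∃ j ∈ F', i = j ∨ dist (z i) (z j) ≤ d * a := by
    intro i hi
    by_contra hcon
    push Not at hcon
    have hiF : i ∉ F' := fun hi' => (hcon i hi').1 rfl
    have := hmax (insert i F') (by
      rw [Finset.mem_filter, Finset.mem_powerset]
      refine ⟨Finset.insert_subset hi hF'.1, fun p hp q hq hpq => ?_⟩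
      rw [Finset.mem_insert] at hp hq
      rcases hp with rfl | hp <;> rcases hq with rfl | hq
      · exact absurd rfl hpq
      · exact (hcon q hq).2
      · rw [dist_comm]; exact (hcon p hp).2
      · exact hF'.2 p hp q hq hpq)
    rw [Finset.card_insert_of_notMem hiF] at this
    omega
  have hsub : F ⊆ F'.biUnion fun j => insert j (F.filter fun i => dist (z i) (z j) ≤ d * a) := by
    intro i hi
    obtain ⟨j, hj, h⟩ := hnear i hi
    rw [Finset.mem_biUnion]
    refine ⟨j, hj, ?_⟩
    rw [Finset.mem_insert, Finset.mem_filter]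
    exact h.imp id fun h => ⟨hi, h⟩
  refine (Finset.card_le_card hsub).trans (Finset.card_biUnion_le.trans ?_)
  rw [mul_comm (M + 1), ← smul_eq_mul F'.card]
  refine Finset.sum_le_card_nsmul _ _ _ fun j hj => (Finset.card_insert_le _ _).trans ?_
  gcongr
  set G := F.filter fun i => dist (z i) (z j) ≤ d * a
  have hds : ∀ x y : Pt D, dist (a⁻¹ • x) (a⁻¹ • y) = a⁻¹ * dist x y := fun x y => by
    rw [dist_smul₀, Real.norm_of_nonneg (inv_pos.2 ha).le]
  obtain ⟨cell, hcell⟩ := hM ((fun i => a⁻¹ • z i) '' (G : Set ι)) (by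
    rintro _ ⟨p, hp, rfl⟩ _ ⟨q, hq, rfl⟩
    have hp' := (Finset.mem_filter.1 hp).2
    have hq' := (Finset.mem_filter.1 hq).2
    have := dist_triangle_right (z p) (z q) (z j)
    rw [hds, inv_mul_le_iff₀ ha]
    linarith)
  have : Set.InjOn (fun i => cell (a⁻¹ • z i)) (G : Set ι) := by
    intro p hp q hq hpq
    by_contra hne
    have h1 := hcell _ ⟨p, hp, rfl⟩ _ ⟨q, hq, rfl⟩ hpq
    have h2 := hF p (Finset.mem_filter.1 hp).1 q (Finset.mem_filter.1 hq).1 hne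
    rw [hds, inv_mul_lt_iff₀ ha, mul_comm] at h1
    linarith
  calc G.card = (G.image fun i => cell (a⁻¹ • z i)).card := (Finset.card_image_of_injOn this).symm
    _ ≤ Fintype.card (Fin M) := Finset.card_le_univ _
    _ = M := Fintype.card_fin M

/-- Words of equal length are determined by a common image point, when the sets `S v` are
invariant under the maps and the images of the `S u` under distinct edges are disjoint. -/
lemma word_eq (h : GS E J O T c R r b β) {S : V → Set (Pt D)} (hSJ : ∀ v, S v ⊆ J v)
    (hST : ∀ ⦃v u⦄, E v u → ∀ x ∈ S u, T v u x ∈ S v)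
    (hdis : ∀ ⦃v u v' u'⦄, E v u → E v' u' → ∀ x ∈ S u, ∀ x' ∈ S u',
      T v u x = T v' u' x' → (v, u) = (v', u')) :
    ∀ (w w' : List V) (u u' : V), w.length = w'.length → adm E w u → adm E w' u' →
      ∀ x ∈ S u, ∀ x' ∈ S u', fmap T w u x = fmap T w' u' x' → w = w' := by
  have hmem : ∀ (w : List V) (u : V), adm E w u → ∀ x ∈ S u, fmap T w u x ∈ S (hd w u) := by
    intro w u
    induction w with
    | nil => exact fun _ x hx => hx
    | cons v w ih => exact fun hw x hx => hST hw.1 _ (ih hw.2 x hx)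
  intro w
  induction w with
  | nil =>
    intro w' u u' hl _ _ x _ x' _ _
    exact (List.length_eq_zero_iff.1 hl.symm).symm
  | cons v w ih =>
    intro w' u u' hl hw hw' x hx x' hx' he
    cases w' with
    | nil => simp at hl
    | cons v' w' =>
      have h1 := hmem w u hw.2 x hx
      have h2 := hmem w' u' hw'.2 x' hx'
      have h3 := hdis hw.1 hw'.1 _ h1 _ h2 he
      rw [Prod.mk.injEq] at h3
      obtain ⟨rfl, h4⟩ := h3
      rw [fmap_cons, fmap_cons, ← h4] at he
      rw [← h4] at h2
      have h5 := h.T_inj hw.1 (h.J_sub hw.1 (hSJ _ h1)) (h.J_sub hw.1 (hSJ _ h2)) he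
      rw [ih w' u u' (by simpa using hl) hw.2 hw'.2 x hx x' hx' h5]

lemma fmap_interior [Nontrivial (Pt D)] (h : GS E J O T c R r b β) {w : List V} {u : V}
    (hw : adm E w u) {x : Pt D} (hx : x ∈ interior (J u)) :
    fmap T w u x ∈ interior (J (hd w u)) := by
  obtain ⟨ρ, hρ, hb⟩ := Metric.mem_nhds_iff.1 (mem_interior_iff_mem_nhds.1 hx)
  have hxJ := interior_subset hx
  have hρ' : 0 < min ρ c := lt_min hρ h.hc
  refine mem_interior_iff_mem_nhds.2 (Filter.mem_of_superset (ball_mem_nhds _ ?_)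
    ((h.ball_subset_fmap' w u hw hxJ hρ' (min_le_right _ _)).trans ?_))
  · have := (h.wprod_pos w u hw hxJ).1
    have := dconst_pos r b β c
    positivity
  · rintro _ ⟨y, hy, rfl⟩
    exact h.fmap_mem w u hw (hb (ball_subset_ball (min_le_left _ _) hy))

lemma wprod_inorm_eq [Nontrivial (Pt D)] (h : GS E J O T c R r b β) (hC : CondConf E O T) {w : List V} {u : V}
    (hw : adm E w u) {x : Pt D} (hx : x ∈ J u) : wprod T inorm w u x = wprod T norm w u x := by
  induction w with
  | nil => rfl
  | cons v w ih =>
    have hm := h.J_sub hw.1 (h.fmap_mem w u hw.2 hx)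
    rw [wprod_cons, wprod_cons, ih hw.2, inorm_of_conformal (h.T_unit hw.1 _ hm) (hC hw.1 _ hm)]

/-- The factor relating `qi` to the lower Lipschitz constant of a loop. -/
def kap (c R r b β : ℝ) : ℝ := (dconst r b β c)⁻¹ * (c / (c + R))

lemma kap_pos (h : GS E J O T c R r b β) : 0 < kap c R r b β := by
  have := dconst_pos r b β c
  have := h.hc
  have := h.hR
  unfold kap
  positivity

lemma le_dimH_of_class [Nontrivial (Pt D)] (h : GS E J O T c R r b β) (hπ : IsCodingMap E J T π)
    {τ' : ℝ} (hτ : 0 < τ') {v : V} {L : ℕ} (hL : 1 ≤ L) {j : ℕ} {F : Finset (List V)}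
    (hF : ∀ w ∈ F, w.length = L ∧ adm E w v ∧ hd w v = v ∧ Real.exp (-(j + 1 : ℝ)) ≤ qi J T v w ∧
        qi J T v w ≤ Real.exp (-(j : ℝ)))
    {B : ℝ} (hB2 : 2 ≤ B) (hB : 1 ≤ B * (kap c R r b β * Real.exp (-1)) ^ τ')
    (hcard : B * Real.exp (j * τ') ≤ F.card)
    (hdis : ∀ w ∈ F, ∀ w' ∈ F, w ≠ w' → ∀ ω ∈ TMS E, ω 0 = v → ∀ ω' ∈ TMS E, ω' 0 = v →
      fmap T w v (π ω) ≠ fmap T w' v (π ω')) :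
    ENNReal.ofReal τ' ≤ dimH (π '' TMS E) := by
  have hk := kap_pos h
  let e := F.equivFin
  have hF' := fun i : Fin F.card => hF (e.symm i) (e.symm i).2
  refine le_dimH_of_loops h hπ (v := v) (m := F.card) hL ?_
    (ws := fun i => (e.symm i : List V)) (fun i => (hF' i).1) (fun i => (hF' i).2.2.1)
    (fun i => (hF' i).2.1) (ρ := kap c R r b β * Real.exp (-(j + 1 : ℝ))) (by positivity) hτ
    ?_ ?_ ?_
  · have h1 : (1 : ℝ) ≤ Real.exp (j * τ') := Real.one_le_exp (by positivity)
    have : (2 : ℝ) ≤ F.card := by nlinarith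
    exact_mod_cast this
  · have e1 : (kap c R r b β * Real.exp (-(j + 1 : ℝ))) ^ τ' =
        (kap c R r b β * Real.exp (-1)) ^ τ' * Real.exp (-(j * τ')) := by
      rw [neg_add, Real.exp_add, mul_comm (Real.exp _), ← mul_assoc,
        Real.mul_rpow (by positivity) (by positivity), ← Real.exp_mul, neg_mul]
    rw [e1]
    have h2 : Real.exp (j * τ') * Real.exp (-(j * τ')) = 1 := by rw [← Real.exp_add]; simp
    calc (1 : ℝ) ≤ B * (kap c R r b β * Real.exp (-1)) ^ τ' := hB
      _ = (B * Real.exp (j * τ')) *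
          ((kap c R r b β * Real.exp (-1)) ^ τ' * Real.exp (-(j * τ'))) := by
        linear_combination (-(B * (kap c R r b β * Real.exp (-1)) ^ τ')) * h2
      _ ≤ _ := by gcongr
  · intro i x hx z hz
    refine le_trans ?_ (h.lower_lipschitz _ v (hF' i).2.1 hx hz)
    change _ ≤ kap c R r b β * _ * _
    gcongr
    exact (hF' i).2.2.2.1.trans (qi_le _ hx)
  · intro i i' hii ω hω h0 ω' hω' h0'
    refine hdis _ (e.symm i).2 _ (e.symm i').2 ?_ ω hω h0 ω' hω' h0'
    exact fun h => hii (e.symm.injective (Subtype.ext h))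

/-- If the sum of `qi ^ τ` over the loops of some length at a vertex exceeds one, then the limit
set has dimension at least `τ`. -/
lemma le_dimH_of_lsum [Nontrivial (Pt D)] (h : GS E J O T c R r b β) (hπ : IsCodingMap E J T π)
    {v : V} (hreg : J v = closure (interior (J v)))
    (hsep : CondSSC E J T (π '' TMS E) ∨ (CondConf E O T ∧ CondOSC E J T))
    {τ : ℝ} (hτ : 0 < τ) {n : ℕ} (hn : 1 ≤ n) (hs : 1 < lsum (Ql E J T τ v) n) :
    ENNReal.ofReal τ ≤ dimH (π '' TMS E) := by
  suffices H : ∀ τ', 0 < τ' → τ' < τ → ENNReal.ofReal τ' ≤ dimH (π '' TMS E) by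
    refine le_of_tendsto (x := 𝓝[<] τ)
      ((ENNReal.continuous_ofReal.tendsto τ).mono_left nhdsWithin_le_nhds) ?_
    filter_upwards [Ioo_mem_nhdsLT hτ] with τ' hτ'
    exact H τ' hτ'.1 hτ'.2
  intro τ' hτ0 hττ
  have hk := kap_pos h
  have hkp : 0 < (kap c R r b β * Real.exp (-1)) ^ τ' := by positivity
  set B₀ := max 2 ((kap c R r b β * Real.exp (-1)) ^ τ')⁻¹ with hB₀
  have hB2 : 2 ≤ B₀ := le_max_left _ _
  have hB : 1 ≤ B₀ * (kap c R r b β * Real.exp (-1)) ^ τ' := by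
    rw [← inv_le_iff_one_le_mul₀ hkp]; exact le_max_right _ _
  rcases hsep with hS | ⟨hC, hO⟩
  · obtain ⟨L, hL, j, F, hF, hcard⟩ := exists_class h hτ0.le hττ hn hs B₀
    refine le_dimH_of_class h hπ hτ0 hL hF hB2 hB hcard ?_
    intro w hw w' hw' hne ω hω h0 ω' hω' h0' he
    refine hne (word_eq h (S := fun v => π '' {ω | ω ∈ TMS E ∧ ω 0 = v}) ?_ ?_ ?_ w w' v v
      ((hF w hw).1.trans (hF w' hw').1.symm) (hF w hw).2.1 (hF w' hw').2.1
      _ ⟨ω, ⟨hω, h0⟩, rfl⟩ _ ⟨ω', ⟨hω', h0'⟩, rfl⟩ he)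
    · rintro u _ ⟨η, ⟨hη, rfl⟩, rfl⟩
      exact coding_mem h hπ hη
    · rintro u u' huu _ ⟨η, ⟨hη, rfl⟩, rfl⟩
      have ha : adm E [u] (η 0) := ⟨huu, trivial⟩
      exact ⟨cat [u] η, ⟨cat_mem hη ha, rfl⟩, coding_cat h hπ hη ha⟩
    · rintro p q p' q' hpq hpq' _ ⟨η, ⟨hη, rfl⟩, rfl⟩ _ ⟨η', ⟨hη', rfl⟩, rfl⟩ heq
      by_contra hcon
      have := hS hpq hpq' hcon
      exact (Set.eq_empty_iff_forall_notMem.1 this) _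
        ⟨⟨_, ⟨coding_mem h hπ hη, η, hη, rfl⟩, rfl⟩,
          ⟨_, ⟨coding_mem h hπ hη', η', hη', rfl⟩, heq.symm⟩⟩
  · obtain ⟨y, hy⟩ : (interior (J v)).Nonempty := by
      rw [← closure_nonempty_iff, ← hreg]; exact (h.J_conn v).nonempty
    have hyJ := interior_subset hy
    obtain ⟨ρ₁, hρ₁, hball⟩ := Metric.mem_nhds_iff.1 (isOpen_interior.mem_nhds hy)
    set ρ := min ρ₁ c with hρd
    have hρ : 0 < ρ := lt_min hρ₁ h.hc
    have hdc := dconst_pos r b β c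
    have hdc' := dconst_pos r b β (chainM D R c * c)
    have hR := h.hR
    set C₁ := ((chainM D R c + 1) * dconst r b β c) * dconst r b β (chainM D R c * c) * R with hC₁
    obtain ⟨M, hM1, hM⟩ := exists_sparse D (2 * C₁) ((dconst r b β c)⁻¹ * Real.exp (-1) * ρ)
      (by positivity)
    obtain ⟨L, hL, j, F, hF, hcard⟩ := exists_class h hτ0.le hττ hn hs (M * B₀)
    have hweq := word_eq h (S := fun v => interior (J v)) (fun _ => interior_subset)
      (fun p q hpq x hx => fmap_interior h (w := [p]) (u := q) ⟨hpq, trivial⟩ hx) (by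
        intro p q p' q' hpq hpq' x hx x' hx' heq
        by_contra hcon
        exact (Set.eq_empty_iff_forall_notMem.1 (hO hpq hpq' hcon)) _
          ⟨⟨_, hx, rfl⟩, ⟨_, hx', heq.symm⟩⟩)
    obtain ⟨F', hF'F, hF's, hF'c⟩ := hM F (fun w => fmap T w v y) (Real.exp (-(j : ℝ)))
      (Real.exp_pos _) (by
        intro w hw w' hw' hne
        by_contra hlt
        push Not at hlt
        have hq := (hF w hw).2.2.2.1.trans (qi_le (T := T) w hyJ)
        rw [neg_add, Real.exp_add] at hq
        have hin : fmap T w' v y ∈ ball (fmap T w v y)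
            ((dconst r b β c)⁻¹ * wprod T inorm w v y * ρ) := by
          rw [mem_ball, dist_comm]
          refine hlt.trans_le ?_
          calc (dconst r b β c)⁻¹ * Real.exp (-1) * ρ * Real.exp (-(j : ℝ))
              = (dconst r b β c)⁻¹ * (Real.exp (-(j : ℝ)) * Real.exp (-1)) * ρ := by ring
            _ ≤ _ := by gcongr
        obtain ⟨x, hx, hxe⟩ := h.ball_subset_fmap' w v (hF w hw).2.1 hyJ hρ (min_le_right _ _) hin
        exact hne (hweq w w' v v ((hF w hw).1.trans (hF w' hw').1.symm) (hF w hw).2.1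
          (hF w' hw').2.1 x (hball (ball_subset_ball (min_le_left _ _) hx)) y hy hxe))
    have hdiam : ∀ w ∈ F, ∀ x ∈ J v,
        dist (fmap T w v x) (fmap T w v y) ≤ C₁ * Real.exp (-(j : ℝ)) := by
      intro w hw x hx
      have hb : ∀ x ∈ J v, wprod T norm w v x ≤
          dconst r b β (chainM D R c * c) * Real.exp (-(j : ℝ)) := by
        intro x hx
        have h1 : (dconst r b β (chainM D R c * c))⁻¹ * wprod T norm w v x ≤ qi J T v w := by
          refine le_qi w ⟨y, hyJ⟩ fun z hz => ?_
          rw [wprod_inorm_eq h hC (hF w hw).2.1 hz, inv_mul_le_iff₀ hdc']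
          exact h.wprod_distort w v (hF w hw).2.1 hx hz
        rw [← inv_mul_le_iff₀ hdc']
        exact h1.trans (hF w hw).2.2.2.2
      refine (h.fmap_diam w v (hF w hw).2.1 hb hx hyJ).trans ?_
      have hdR : diam (J v) ≤ R := diam_le_of_forall_dist_le hR (h.J_diam v)
      calc _ ≤ ((chainM D R c + 1) * dconst r b β c) *
            (dconst r b β (chainM D R c * c) * Real.exp (-(j : ℝ))) * R := by gcongr
        _ = _ := by rw [hC₁]; ring
    refine le_dimH_of_class h hπ hτ0 hL (fun w hw => hF w (hF'F hw)) hB2 hB ?_ ?_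
    · have hM0 : (0 : ℝ) < M := by exact_mod_cast hM1
      have : (F.card : ℝ) ≤ M * F'.card := by exact_mod_cast hF'c
      rw [mul_assoc] at hcard
      exact le_of_mul_le_mul_left (hcard.trans this) hM0
    · intro w hw w' hw' hne ω hω h0 ω' hω' h0' he
      have h1 := hF's w hw w' hw' hne
      have hm := coding_mem h hπ hω
      have hm' := coding_mem h hπ hω'
      rw [h0] at hm
      rw [h0'] at hm'
      have h2 := hdiam w (hF'F hw) _ hm
      have h3 := hdiam w' (hF'F hw') _ hm'
      rw [he] at h2
      have h4 := dist_triangle_left (fmap T w v y) (fmap T w' v y) (fmap T w' v (π ω'))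
      linarith

end Low


/-! ### The critical exponent of a conformal system -/

section Crit

variable {D : ℕ} {V : Type*} {E : V → V → Prop} {J O : V → Set (Pt D)}
  {T : V → V → Pt D → Pt D} {c R r b β : ℝ} {π : (ℕ → V) → Pt D}

/-- `f` is the potential `s log ‖T'‖` on the code space. -/
def IsPot (E : V → V → Prop) (T : V → V → Pt D → Pt D) (π : (ℕ → V) → Pt D) (s : ℝ)
    (f : (ℕ → V) → ℝ) : Prop :=
  ∀ ω ∈ TMS E, f ω = s * Real.log ‖fderiv ℝ (T (ω 0) (ω 1)) (π (shift ω))‖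

/-- `s` is a zero of the pressure at which the system is summable. -/
def IsCrit (E : V → V → Prop) (J : V → Set (Pt D)) (T : V → V → Pt D → Pt D)
    (π : (ℕ → V) → Pt D) (s : ℝ) : Prop :=
  0 ≤ s ∧ ∑' v, Wt E J T s [v] ≠ ⊤ ∧ ∃ f, IsPot E T π s f ∧ pressure E f = 0

lemma exists_isCrit [Nontrivial (Pt D)] (h : GS E J O T c R r b β) (hπ : IsCodingMap E J T π)
    (hC : CondConf E O T) (hext : ∀ ⦃v u⦄, E v u → ∃ u', E u u') (h8 : CondG8 E J T π) :
    ∃ s, IsCrit E J T π s := by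
  obtain ⟨s, ⟨hs0, hs⟩, hP⟩ := h8
  refine ⟨s, hs0, ?_, _, ?_, hP⟩
  · refine ne_top_of_le_ne_top (ENNReal.mul_ne_top
      (ENNReal.ofReal_ne_top (r := dconst r b β (chainM D R c * c) ^ s)) hs) ?_
    rw [← ENNReal.tsum_mul_left]
    refine ENNReal.tsum_le_tsum fun v => Wt_le fun u hw x hx => ?_
    obtain ⟨τ, hτ, h0⟩ := exists_path hext hw.1
    change τ 0 = u at h0
    have hz := coding_mem h hπ hτ
    rw [h0] at hz
    have hd := h.wprod_distort [v] u hw hx hz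
    have hdc := dconst_pos r b β (chainM D R c * c)
    have hO := h.J_sub hw.1 hz
    have e1 : wprod T norm [v] u (π τ) = inorm (fderiv ℝ (T v u) (π τ)) := by
      rw [wprod_cons, wprod_nil, mul_one]
      exact (inorm_of_conformal (h.T_unit hw.1 _ hO) (hC hw.1 _ hO)).symm
    rw [e1] at hd
    calc ENNReal.ofReal (wprod T norm [v] u x ^ s)
        ≤ ENNReal.ofReal ((dconst r b β (chainM D R c * c) *
            inorm (fderiv ℝ (T v u) (π τ))) ^ s) :=
          ENNReal.ofReal_le_ofReal (Real.rpow_le_rpow (wprod_norm_nonneg _ _ _) hd hs0)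
      _ = ENNReal.ofReal (dconst r b β (chainM D R c * c) ^ s) *
            ENNReal.ofReal (inorm (fderiv ℝ (T v u) (π τ)) ^ s) := by
          rw [Real.mul_rpow hdc.le inorm_nonneg, ENNReal.ofReal_mul (by positivity)]
      _ ≤ _ := by
          gcongr
          exact le_iSup₂_of_le u hw.1 (le_iSup₂_of_le (π τ) ⟨⟨τ, hτ, rfl⟩, hz⟩ le_rfl)
  · intro ω hω
    have hm := h.J_sub (hω 0) (coding_mem h hπ (shift_mem hω))
    change s * Real.log (inorm (fderiv ℝ (T (ω 0) (ω 1)) (π (shift ω)))) = _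
    rw [inorm_of_conformal (h.T_unit (hω 0) _ hm) (hC (hω 0) _ hm)]

lemma tsum_Wt_of_gt [Nontrivial (Pt D)] (h : GS E J O T c R r b β) (hπ : IsCodingMap E J T π)
    (hext : ∀ ⦃v u⦄, E v u → ∃ u', E u u') {s t : ℝ} (hs : 0 ≤ s) (hst : s < t)
    {f : (ℕ → V) → ℝ} (hf : IsPot E T π s f) (hP : pressure E f = 0)
    (h1 : ∑' v, Wt E J T t [v] ≠ ⊤) : ∑' w, Wt E J T t w ≠ ⊤ :=
  tsum_Wt_ne_top h hst h1 ENNReal.ofReal_ne_top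
    (fun v n hn => lsum_Lt_le_of_pressure h hπ hs hf hext hP v n hn)

lemma sum_Wt_antitone [Nontrivial (Pt D)] (h : GS E J O T c R r b β) {s t : ℝ} (hst : s ≤ t)
    (h1 : ∑' v, Wt E J T s [v] ≠ ⊤) : ∑' v, Wt E J T t [v] ≠ ⊤ :=
  ne_top_of_le_ne_top h1 (ENNReal.tsum_le_tsum fun _ => Wt_antitone h hst _)

lemma IsCrit.unique [Nontrivial (Pt D)] (h : GS E J O T c R r b β) (hπ : IsCodingMap E J T π)
    (hext : ∀ ⦃v u⦄, E v u → ∃ u', E u u') {s s₀ : ℝ} (hs : IsCrit E J T π s) (hs₀ : 0 ≤ s₀)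
    {f₀ : (ℕ → V) → ℝ} (hf₀ : IsPot E T π s₀ f₀) (hP₀ : pressure E f₀ = 0) : s₀ = s := by
  obtain ⟨hs0, hsum, f, hf, hP⟩ := hs
  rcases lt_trichotomy s₀ s with hlt | heq | hlt
  · exact absurd hP (pressure_neg_of_tsum h hπ hf
      (tsum_Wt_of_gt h hπ hext hs₀ hlt hf₀ hP₀ hsum)).ne
  · exact heq
  · exact absurd hP₀ (pressure_neg_of_tsum h hπ hf₀
      (tsum_Wt_of_gt h hπ hext hs0 hlt hf hP (sum_Wt_antitone h hlt.le hsum))).ne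

lemma IsCrit.tsum_ne_top [Nontrivial (Pt D)] (h : GS E J O T c R r b β)
    (hπ : IsCodingMap E J T π) (hext : ∀ ⦃v u⦄, E v u → ∃ u', E u u') {s t : ℝ}
    (hs : IsCrit E J T π s) (hst : s < t) : ∑' w, Wt E J T t w ≠ ⊤ := by
  obtain ⟨hs0, hsum, f, hf, hP⟩ := hs
  exact tsum_Wt_of_gt h hπ hext hs0 hst hf hP (sum_Wt_antitone h hst.le hsum)

lemma IsCrit.dimH_le [Countable V] [Nontrivial (Pt D)] (h : GS E J O T c R r b β)
    (hπ : IsCodingMap E J T π) (hext : ∀ ⦃v u⦄, E v u → ∃ u', E u u') (h9 : CondG9 E J T) {s : ℝ}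
    (hs : IsCrit E J T π s) : dimH (π '' TMS E) ≤ ENNReal.ofReal s := by
  refine ge_of_tendsto (x := 𝓝[>] s)
    ((ENNReal.continuous_ofReal.tendsto s).mono_left nhdsWithin_le_nhds) ?_
  filter_upwards [self_mem_nhdsWithin] with t ht
  obtain ⟨N, hN, hlt⟩ := exists_lsum_lt (hs.tsum_ne_top h hπ hext ht) one_pos
  exact dimH_limit_le h hπ h9 (hs.1.trans_lt ht) (sum_Wt_antitone h (le_of_lt ht) hs.2.1) hN hlt.le

/-- Below the critical exponent the loop sums are unbounded; otherwise the pressure at the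
critical exponent would be negative. -/
lemma IsCrit.exists_big [Nontrivial (Pt D)] (h : GS E J O T c R r b β)
    (hπ : IsCodingMap E J T π) {s τ : ℝ} (hs : IsCrit E J T π s) (hτ : τ < s) {B : ℝ≥0∞}
    (hB : B ≠ ⊤) : ∃ v n, 1 ≤ n ∧ B < lsum (Lt E J T τ v) n := by
  by_contra hcon
  push Not at hcon
  obtain ⟨-, hsum, f, hf, hP⟩ := hs
  exact absurd hP (pressure_neg_of_tsum h hπ hf (tsum_Wt_ne_top h hτ hsum hB hcon)).ne

lemma Lt_le_of_qi {τ : ℝ} (hτ : 0 ≤ τ) {v : V} {w : List V} {a q : ℝ} (ha : 0 < a) (hq : 0 ≤ q)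
    (H : ∀ x ∈ J v, a * wprod T norm w v x ≤ q) :
    Lt E J T τ v w ≤ ENNReal.ofReal (a⁻¹ ^ τ) * ENNReal.ofReal (q ^ τ) := by
  refine iSup_le fun _ => iSup₂_le fun x hx => ?_
  rw [← ENNReal.ofReal_mul (by positivity), ← Real.mul_rpow (by positivity) hq]
  refine ENNReal.ofReal_le_ofReal (Real.rpow_le_rpow (wprod_norm_nonneg _ _ _) ?_ hτ)
  rw [le_inv_mul_iff₀ ha]
  exact H x hx

lemma exists_edge_of_lsum {τ : ℝ} {v : V} {n : ℕ} (hn : 1 ≤ n) (hpos : 0 < lsum (Lt E J T τ v) n) :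
    ∃ v', E v' v := by
  by_contra hcon
  refine hpos.ne' (ENNReal.tsum_eq_zero.2 fun w => ?_)
  split_ifs with hw
  · have : ¬ (adm E w v ∧ hd w v = v) := fun hw' =>
      hcon (exists_edge_of_adm hw'.1 (by rintro rfl; simp at hw; omega))
    simp [Lt, this]
  · rfl

lemma IsCrit.le_dimH [Nontrivial (Pt D)] (h : GS E J O T c R r b β)
    (hπ : IsCodingMap E J T π) (hC : CondConf E O T)
    (hreg : ∀ ⦃v u⦄, E v u → J u = closure (interior (J u)))
    (hsep : CondSSC E J T (π '' TMS E) ∨ CondOSC E J T) {s : ℝ}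
    (hs : IsCrit E J T π s) : ENNReal.ofReal s ≤ dimH (π '' TMS E) := by
  rcases hs.1.eq_or_lt with h0 | hpos
  · simp [← h0]
  refine le_of_tendsto (x := 𝓝[<] s)
    ((ENNReal.continuous_ofReal.tendsto s).mono_left nhdsWithin_le_nhds) ?_
  filter_upwards [Ioo_mem_nhdsLT hpos] with τ hτ
  have hdc := dconst_pos r b β (chainM D R c * c)
  set K : ℝ≥0∞ := ENNReal.ofReal ((dconst r b β (chainM D R c * c))⁻¹⁻¹ ^ τ) with hK
  obtain ⟨v, n, hn, hlt⟩ := hs.exists_big h hπ hτ.2 (B := K) ENNReal.ofReal_ne_top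
  obtain ⟨v', e⟩ := exists_edge_of_lsum hn (bot_le.trans_lt hlt)
  refine le_dimH_of_lsum h hπ (hreg e) (hsep.imp id fun hO => ⟨hC, hO⟩) hτ.1 hn ?_
  have hle : lsum (Lt E J T τ v) n ≤ K * lsum (Ql E J T τ v) n := by
    rw [← lsum_const_mul]
    refine lsum_mono fun w _ => ?_
    by_cases hw : adm E w v ∧ hd w v = v
    · rw [Ql, if_pos hw]
      refine Lt_le_of_qi hτ.1.le (inv_pos.2 hdc) (qi_nonneg _ _) fun x hx => ?_
      refine le_qi w ⟨x, hx⟩ fun z hz => ?_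
      rw [wprod_inorm_eq h hC hw.1 hz, inv_mul_le_iff₀ hdc]
      exact h.wprod_distort w v hw.1 hx hz
    · simp [Lt, hw]
  by_contra hcon
  push Not at hcon
  exact absurd (hlt.trans_le hle) (not_lt.2 (mul_le_of_le_one_right' hcon))

/-- Seed sets with interior have positive diameter, so the condition on the diameters forces every
vertex to have an outgoing edge. -/
lemma exists_edge_of_G9 [Nontrivial (Pt D)] (h9 : CondG9 E J T) {v : V} (hcpt : IsCompact (J v))
    (hne : (J v).Nonempty) (hreg : J v = closure (interior (J v))) : ∃ u, E v u := by
  by_contra hcon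
  obtain ⟨C, -, hC⟩ := h9
  have h0 : {t : ℝ | ∃ u, E v u ∧ ∃ z ∈ J u, t = ‖fderiv ℝ (T v u) z‖} = ∅ :=
    Set.eq_empty_of_forall_notMem fun t ⟨u, hu, _⟩ => hcon ⟨u, hu⟩
  have h1 := hC v
  rw [h0, Real.sSup_empty, mul_zero] at h1
  obtain ⟨x, hx⟩ : (interior (J v)).Nonempty := by
    rw [← closure_nonempty_iff, ← hreg]; exact hne
  have hnt : (J v).Nontrivial := by
    have := Module.punctured_nhds_neBot ℝ (Pt D) x
    obtain ⟨y, hy, hyx⟩ := Filter.nonempty_of_mem (inter_mem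
      (mem_nhdsWithin_of_mem_nhds (mem_interior_iff_mem_nhds.1 hx) : J v ∈ 𝓝[≠] x)
      self_mem_nhdsWithin)
    exact ⟨x, interior_subset hx, y, hy, Ne.symm hyx⟩
  exact absurd h1 (not_le.2 (diam_pos hnt hcpt.isBounded))

end Crit


/-! ### Comparison of the perturbed and the unperturbed cocycles -/

section Compare

lemma arith_up {a a' A B X X₀ Y κ₁ κ : ℝ} (hA : 0 ≤ A) (hA1 : A ≤ 1) (hB : 0 ≤ B) (hB1 : B ≤ 1)
    (hX₀ : 0 ≤ X₀) (hX : X₀ ≤ X) (hY : 0 ≤ Y) (hκ : 0 ≤ κ₁) (ha0 : 0 ≤ a')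
    (ha : a ≤ X * A + κ₁) (ha' : a' ≤ Y * B + κ₁)
    (hF : (X - X₀) * Y + κ₁ * (X + Y + κ₁) ≤ κ) : a * a' ≤ X₀ * Y * (A * B) + κ := by
  have hX' : 0 ≤ X := hX₀.trans hX
  have h1 : a * a' ≤ (X * A + κ₁) * (Y * B + κ₁) :=
    (mul_le_mul_of_nonneg_right ha ha0).trans (mul_le_mul_of_nonneg_left ha' (by positivity))
  have h2 : A * B ≤ 1 := mul_le_one₀ hA1 hB hB1
  have h3 : (X - X₀) * Y * (A * B) ≤ (X - X₀) * Y :=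
    mul_le_of_le_one_right (mul_nonneg (sub_nonneg.2 hX) hY) h2
  have h4 : κ₁ * (X * A + Y * B + κ₁) ≤ κ₁ * (X + Y + κ₁) := by
    gcongr
    · exact mul_le_of_le_one_right hX' hA1
    · exact mul_le_of_le_one_right hY hB1
  linarith [h1, h3, h4, hF, show (X * A + κ₁) * (Y * B + κ₁) = X₀ * Y * (A * B) +
    (X - X₀) * Y * (A * B) + κ₁ * (X * A + Y * B + κ₁) by ring]

lemma arith_low {a a' A B X X₀ Y κ₁ κ : ℝ} (hA : 0 ≤ A) (hA1 : A ≤ 1) (hB : 0 ≤ B) (hB1 : B ≤ 1)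
    (hX₀ : 0 ≤ X) (hX : X ≤ X₀) (hX1 : X₀ ≤ 1) (hY : 0 ≤ Y) (hY1 : Y ≤ 1) (hκ : 0 ≤ κ₁)
    (ha0 : 0 ≤ a) (ha0' : 0 ≤ a') (ha : X * A - κ₁ ≤ a) (ha' : Y * B - κ₁ ≤ a')
    (hF : X₀ - X + 2 * κ₁ ≤ κ) : X₀ * Y * (A * B) - κ ≤ a * a' := by
  have hXA : 0 ≤ X * A := by positivity
  have hYB : 0 ≤ Y * B := by positivity
  have hXA1 : X * A ≤ 1 := mul_le_one₀ (hX.trans hX1) hA hA1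
  have hYB1 : Y * B ≤ 1 := mul_le_one₀ hY1 hB hB1
  have h1 : (X * A) * (Y * B) - κ₁ * (X * A + Y * B) ≤ a * a' := by
    have h0 : 0 ≤ a * a' := by positivity
    rcases le_or_gt (X * A) κ₁ with h | h
    · nlinarith [mul_le_mul_of_nonneg_right h hYB, mul_nonneg hκ hXA]
    rcases le_or_gt (Y * B) κ₁ with h' | h'
    · nlinarith [mul_le_mul_of_nonneg_left h' hXA, mul_nonneg hκ hYB]
    have := mul_le_mul ha ha' (by linarith) ha0
    nlinarith [mul_nonneg hκ hκ]
  have h2 : (X₀ - X) * (Y * (A * B)) ≤ X₀ - X := by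
    refine mul_le_of_le_one_right (by linarith) (mul_le_one₀ hY1 (by positivity)
      (mul_le_one₀ hA1 hB hB1))
  have h3 : κ₁ * (X * A + Y * B) ≤ κ₁ * 2 := by gcongr; linarith
  linarith [show X₀ * Y * (A * B) = (X * A) * (Y * B) + (X₀ - X) * (Y * (A * B)) by ring]

lemma ev_of {Q : ℝ → Prop} (H : ∃ ε₀ > 0, ∀ ε ∈ Set.Ioo (0 : ℝ) 1, ε < ε₀ → Q ε) :
    ∀ᶠ ε in 𝓝[Ioo (0 : ℝ) 1] 0, Q ε := by
  obtain ⟨ε₀, h0, H⟩ := H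
  filter_upwards [self_mem_nhdsWithin, mem_nhdsWithin_of_mem_nhds (Iio_mem_nhds h0)] with ε h1 h2
  exact H ε h1 h2

variable {D : ℕ} {V : Type*} {P : PertGIFS D V} {c R r b β : ℝ}

/-- The comparison, up to an error `κ`, of the perturbed composition along `w` with the unperturbed
one at nearby base points: for words of the limiting graph the derivatives agree up to bounded
distortion, and for the other words the perturbed derivative is small. -/
def Cmp (P : PertGIFS D V) (r b β : ℝ) (w : List V) (κ ε : ℝ) : Prop :=
  ∀ u, adm P.EE w u → ∀ x ∈ P.Jε ε u,
    (adm P.E₀ w u → ∀ y ∈ P.J u, dist x y < P.cpcd →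
      dist (fmap (P.Tε ε) w u x) (fmap P.T w u y) ≤ P.cpcd * r ^ w.length + κ ∧
      wprod (P.Tε ε) norm w u x ≤
        Real.exp (dsum r b β P.cpcd w.length) * wprod P.T norm w u y + κ ∧
      Real.exp (-dsum r b β P.cpcd w.length) * wprod P.T inorm w u y - κ ≤
        wprod (P.Tε ε) inorm w u x) ∧
    (¬ adm P.E₀ w u → wprod (P.Tε ε) norm w u x ≤ κ)

lemma cmp [Nontrivial (Pt D)] (h : GS P.E₀ P.J P.O P.T c R r b β) (hη : P.cpcd < c)
    (hG : ∀ ε ∈ Set.Ioo (0 : ℝ) 1, ∃ c R r b β,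
      GS P.EE (P.Jε ε) (P.Oε ε) (P.Tε ε) c R r b β) (w : List V) :
    ∀ κ > 0, ∀ᶠ ε in 𝓝[Ioo (0 : ℝ) 1] 0, Cmp P r b β w κ ε := by
  have hη0 := P.hcpcd
  have hb := h.hb
  have hr0 := h.hr0
  induction w with
  | nil =>
    intro κ hκ
    refine Eventually.of_forall fun ε u _ x _ => ⟨fun _ y _ hxy => ⟨?_, ?_, ?_⟩, ?_⟩
    · simp only [fmap_nil, List.length_nil, pow_zero, mul_one]; linarith
    · simp [dsum, hκ.le]
    · simp [dsum, hκ.le]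
    · exact fun hcon => absurd trivial hcon
  | cons v w ih =>
    intro κ hκ
    set n := w.length with hn
    set a := P.cpcd * r ^ n with ha
    have ha0 : 0 ≤ a := by positivity
    have hac : a < c := by
      have : r ^ n ≤ 1 := pow_le_one₀ hr0.le h.hr1.le
      have : a ≤ P.cpcd := mul_le_of_le_one_right hη0.le this
      linarith
    set Y := Real.exp (dsum r b β P.cpcd n) with hY
    have hY0 : 0 < Y := Real.exp_pos _
    have hds : 0 ≤ dsum r b β P.cpcd n := by
      unfold dsum
      have : 0 ≤ ∑ j ∈ Finset.range n, (r ^ β) ^ j := Finset.sum_nonneg fun _ _ => by positivity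
      positivity
    obtain ⟨κ₁, hκ0, hκc, hκ2, hκu, hκl⟩ : ∃ κ₁ > 0, a + κ₁ < c ∧ 2 * κ₁ ≤ κ ∧
        (Real.exp (b * (a + κ₁) ^ β) - Real.exp (b * a ^ β)) * Y +
          κ₁ * (Real.exp (b * (a + κ₁) ^ β) + Y + κ₁) ≤ κ ∧
        Real.exp (-(b * a ^ β)) - Real.exp (-(b * (a + κ₁) ^ β)) + 2 * κ₁ ≤ κ := by
      have hcont : Continuous fun k : ℝ => (a + k) ^ β :=
        (by fun_prop : Continuous fun k : ℝ => a + k).rpow_const fun _ => Or.inr h.hβ.le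
      have c1 : Continuous fun k : ℝ => a + k := by fun_prop
      have c2 : Continuous fun k : ℝ => 2 * k := by fun_prop
      have c3 : Continuous fun k : ℝ => (Real.exp (b * (a + k) ^ β) - Real.exp (b * a ^ β)) * Y +
          k * (Real.exp (b * (a + k) ^ β) + Y + k) := by fun_prop
      have c4 : Continuous fun k : ℝ =>
        Real.exp (-(b * a ^ β)) - Real.exp (-(b * (a + k) ^ β)) + 2 * k := by fun_prop
      have e1 := (c1.tendsto 0).eventually (gt_mem_nhds (by simpa using hac : a + 0 < c))
      have e2 := (c2.tendsto 0).eventually (gt_mem_nhds (by simpa using hκ : 2 * 0 < κ))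
      have e3 := (c3.tendsto 0).eventually_lt_const (u := κ) (by simpa using hκ)
      have e4 := (c4.tendsto 0).eventually_lt_const (u := κ) (by simpa using hκ)
      obtain ⟨k, ⟨⟨⟨h1, h2⟩, h3⟩, h4⟩, h5⟩ := ((((e1.and e2).and e3).and e4).filter_mono
        (nhdsWithin_le_nhds (s := Ioi (0 : ℝ))) |>.and self_mem_nhdsWithin).exists
      exact ⟨k, h5, h1, h2.le, h3.le, h4.le⟩
    filter_upwards [ih κ₁ hκ0, ev_of (P.p_iii κ₁ hκ0), ev_of (P.p_iv v κ₁ hκ0),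
      self_mem_nhdsWithin] with ε hih h3 h4 hε u hu x hx
    obtain ⟨c', R', r', b', β', g⟩ := hG ε hε
    set v' := hd w u with hv'
    have e : P.EE v v' := hu.1
    set p := fmap (P.Tε ε) w u x with hp
    have hpJ : p ∈ P.Jε ε v' := g.fmap_mem w u hu.2 hx
    have hT1 : ‖fderiv ℝ (P.Tε ε v v') p‖ ≤ 1 :=
      (g.T_r e p hpJ p (mem_ball_self g.hc)).trans g.hr1.le
    have hW1 := g.wprod_norm_le_one w u hu.2 hx
    have hW0 := wprod_norm_nonneg (T := P.Tε ε) w u x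
    have h4p := h4 e p hpJ
    have hih := hih u hu.2 x hx
    refine ⟨fun hE y hy hxy => ?_, fun hE => ?_⟩
    · have e0 : P.E₀ v v' := hE.1
      obtain ⟨hd1, hup, hlow⟩ := hih.1 hE.2 y hy hxy
      set q := fmap P.T w u y with hq
      have hqJ : q ∈ P.J v' := h.fmap_mem w u hE.2 hy
      have hpq : dist p q < c := hd1.trans_lt hκc
      have hpO : p ∈ P.O v' := h.JO e0 q hqJ hpq
      have hqO : q ∈ P.O v' := h.J_sub e0 hqJ
      have hdβ : b * dist p q ^ β ≤ b * (a + κ₁) ^ β :=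
        mul_le_mul_of_nonneg_left (Real.rpow_le_rpow dist_nonneg hd1 h.hβ.le) hb
      have haβ : b * a ^ β ≤ b * (a + κ₁) ^ β :=
        mul_le_mul_of_nonneg_left (Real.rpow_le_rpow ha0 (by linarith) h.hβ.le) hb
      have haβ0 : 0 ≤ b * a ^ β := by positivity
      have hbs : dsum r b β P.cpcd (n + 1) = b * a ^ β + dsum r b β P.cpcd n := by
        rw [dsum_succ, ha, mul_pow_rpow hη0.le hr0.le]; ring
      have hA1 : ‖fderiv ℝ (P.T v v') q‖ ≤ 1 :=
        (h.T_r e0 q hqJ q (mem_ball_self h.hc)).trans h.hr1.le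
      have hB1 := h.wprod_norm_le_one w u hE.2 hy
      have hBi := h.wprod_pos w u hE.2 hy
      have huq := h.T_unit e0 q hqO
      refine ⟨?_, ?_, ?_⟩
      · have s1 := dist_triangle (P.Tε ε v v' p) (P.T v v' p) (P.T v v' q)
        have s2 := h3 e p hpJ
        have s3 := h.dist_step e0 hqJ hpq
        have s4 : r * dist p q ≤ r * (a + κ₁) := mul_le_mul_of_nonneg_left hd1 hr0.le
        have s5 : r * κ₁ ≤ κ₁ := mul_le_of_le_one_left hκ0.le h.hr1.le
        have s6 : P.cpcd * r ^ (n + 1) = r * a := by rw [ha]; ring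
        change dist (P.Tε ε v v' p) (P.T v v' q) ≤ P.cpcd * r ^ (n + 1) + κ
        rw [s6]
        linarith
      · change ‖fderiv ℝ (P.Tε ε v v') p‖ * _ ≤
          Real.exp (dsum r b β P.cpcd (n + 1)) * (‖fderiv ℝ (P.T v v') q‖ * _) + κ
        rw [hbs, Real.exp_add]
        refine arith_up (norm_nonneg _) hA1 (wprod_norm_nonneg _ _ _) hB1 (Real.exp_pos _).le
          (Real.exp_le_exp.2 haβ) hY0.le hκ0.le hW0 ?_ hup hκu
        have s1 := h.norm_le e0 hpO hqO
        have s2 := norm_le_norm_add_norm_sub' (fderiv ℝ (P.Tε ε v v') p) (fderiv ℝ (P.T v v') p)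
        have s3 : Real.exp (b * dist p q ^ β) * ‖fderiv ℝ (P.T v v') q‖ ≤
            Real.exp (b * (a + κ₁) ^ β) * ‖fderiv ℝ (P.T v v') q‖ := by gcongr
        linarith
      · change Real.exp (-dsum r b β P.cpcd (n + 1)) * (inorm (fderiv ℝ (P.T v v') q) * _) - κ ≤
          inorm (fderiv ℝ (P.Tε ε v v') p) * _
        rw [hbs, neg_add, Real.exp_add]
        refine arith_low inorm_nonneg ((inorm_le_norm huq).trans hA1) hBi.1.le
          (hBi.2.trans hB1) (Real.exp_pos (-(b * (a + κ₁) ^ β))).le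
          (Real.exp_le_exp.2 (neg_le_neg haβ)) (Real.exp_le_one_iff.2 (by linarith))
          (Real.exp_pos _).le (Real.exp_le_one_iff.2 (by linarith)) hκ0.le inorm_nonneg
          (wprod_inorm_nonneg _ _ _) ?_ hlow hκl
        have s1 := h.inorm_le e0 hqO hpO
        rw [dist_comm] at s1
        have s2 := inorm_sub_le (h.T_unit e0 p hpO) (g.T_unit e p (g.J_sub e hpJ))
        have s3 : inorm (fderiv ℝ (P.T v v') q) ≤
            Real.exp (b * (a + κ₁) ^ β) * inorm (fderiv ℝ (P.T v v') p) :=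
          s1.trans (mul_le_mul_of_nonneg_right (Real.exp_le_exp.2 hdβ) inorm_nonneg)
        rw [← inv_mul_le_iff₀ (Real.exp_pos _), ← Real.exp_neg] at s3
        linarith
    · change ‖fderiv ℝ (P.Tε ε v v') p‖ * wprod (P.Tε ε) norm w u x ≤ κ
      by_cases e0 : P.E₀ v v'
      · have hw : ¬ adm P.E₀ w u := fun hw => hE ⟨e0, hw⟩
        have := mul_le_of_le_one_left hW0 hT1
        have := hih.2 hw
        linarith
      · have hc0 : P.T v v' = fun _ => P.a v := funext (P.hTconst e e0)
        rw [hc0, fderiv_fun_const] at h4p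
        simp only [Pi.zero_apply, sub_zero] at h4p
        have := mul_le_of_le_one_right (norm_nonneg (fderiv ℝ (P.Tε ε v v') p)) hW1
        linarith

end Compare


/-! ### Stability of the word sums -/

section Stability

/-- Dominated convergence, in the form needed for partition functions of bounded word length. -/
lemma eventually_tsum_le_one {ι α : Type*} {l : Filter ι} {F : ι → α → ℝ≥0∞} {G g : α → ℝ≥0∞}
    (hG : ∑' w, G w ≠ ⊤) (hF : ∀ᶠ ε in l, ∀ w, F ε w ≤ G w)
    (hc : ∀ w, ∀ κ : ℝ, 0 < κ → ∀ᶠ ε in l, F ε w ≤ g w + ENNReal.ofReal κ)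
    (hg : ∑' w, g w < 2⁻¹) : ∀ᶠ ε in l, ∑' w, F ε w ≤ 1 := by
  obtain ⟨S, hS⟩ := ((ENNReal.tendsto_tsum_compl_atTop_zero hG).eventually_lt_const
    (u := 4⁻¹) (by simp)).exists
  have hκ : (0 : ℝ) < 4⁻¹ * ((S.card : ℝ) + 1)⁻¹ := by positivity
  have hfin : ∀ᶠ ε in l, ∀ w ∈ S, F ε w ≤ g w + ENNReal.ofReal (4⁻¹ * ((S.card : ℝ) + 1)⁻¹) :=
    (eventually_all_finset S).2 fun w _ => hc w _ hκ
  filter_upwards [hF, hfin] with ε h1 h2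
  rw [← Summable.tsum_add_tsum_compl (s := (S : Set α)) ENNReal.summable ENNReal.summable,
    Finset.tsum_subtype' S (F ε)]
  have e1 : ∑ w ∈ S, F ε w ≤ 2⁻¹ + 4⁻¹ := by
    calc ∑ w ∈ S, F ε w ≤ ∑ w ∈ S, (g w + ENNReal.ofReal (4⁻¹ * ((S.card : ℝ) + 1)⁻¹)) :=
          Finset.sum_le_sum h2
      _ = ∑ w ∈ S, g w + S.card * ENNReal.ofReal (4⁻¹ * ((S.card : ℝ) + 1)⁻¹) := by
          rw [Finset.sum_add_distrib, Finset.sum_const, nsmul_eq_mul]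
      _ ≤ 2⁻¹ + 4⁻¹ := by
          refine add_le_add ((ENNReal.sum_le_tsum S).trans hg.le) ?_
          rw [← ENNReal.ofReal_natCast, ← ENNReal.ofReal_mul (by positivity)]
          have : (4⁻¹ : ℝ≥0∞) = ENNReal.ofReal 4⁻¹ := by
            rw [ENNReal.ofReal_inv_of_pos (by norm_num)]; norm_num
          rw [this]
          refine ENNReal.ofReal_le_ofReal ?_
          have h3 : (S.card : ℝ) * ((S.card : ℝ) + 1)⁻¹ ≤ 1 := by
            rw [← div_eq_mul_inv, div_le_one (by positivity)]; linarith
          calc (S.card : ℝ) * (4⁻¹ * ((S.card : ℝ) + 1)⁻¹)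
              = 4⁻¹ * ((S.card : ℝ) * ((S.card : ℝ) + 1)⁻¹) := by ring
            _ ≤ 4⁻¹ * 1 := by gcongr
            _ = 4⁻¹ := mul_one _
  have e2 : ∑' w : ↥((S : Set α)ᶜ), F ε w ≤ 4⁻¹ :=
    (ENNReal.tsum_le_tsum fun w : ↥((S : Set α)ᶜ) => h1 (w : α)).trans hS.le
  have e3 : (2⁻¹ + 4⁻¹ + 4⁻¹ : ℝ≥0∞) = 1 := by
    have : (4⁻¹ + 4⁻¹ : ℝ≥0∞) = 2⁻¹ := by
      rw [← two_mul, show (4 : ℝ≥0∞) = 2 * 2 by norm_num,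
        ENNReal.mul_inv (by simp) (by simp), ← mul_assoc, ENNReal.mul_inv_cancel (by simp) (by simp),
        one_mul]
    rw [add_assoc, this, ENNReal.inv_two_add_inv_two]
  calc _ ≤ (2⁻¹ + 4⁻¹ : ℝ≥0∞) + 4⁻¹ := add_le_add e1 e2
    _ = 1 := e3

lemma rpow_le_of_le_add {z p C κ t : ℝ} (hz : 0 ≤ z) (hp : 0 ≤ p) (hC : 0 ≤ C) (hκ : 0 ≤ κ)
    (ht : 0 ≤ t) (h : z ≤ C * p + κ) : z ^ t ≤ (2 * C) ^ t * p ^ t + (2 * κ) ^ t := by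
  rcases le_total κ (C * p) with h1 | h1
  · have : z ^ t ≤ (2 * C * p) ^ t := Real.rpow_le_rpow hz (by linarith) ht
    rw [Real.mul_rpow (by positivity) hp] at this
    have h2 : 0 ≤ (2 * κ) ^ t := by positivity
    linarith
  · have : z ^ t ≤ (2 * κ) ^ t := Real.rpow_le_rpow hz (by linarith) ht
    have h2 : 0 ≤ (2 * C) ^ t * p ^ t := by positivity
    linarith

variable {D : ℕ} {V : Type*} {P : PertGIFS D V} {c R r b β : ℝ}

/-- Upper semicontinuity, up to a multiplicative constant, of the weight of a fixed word. -/
lemma Wt_le_of_cmp (h : GS P.E₀ P.J P.O P.T c R r b β)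
    (hcmp : ∀ w, ∀ κ > 0, ∀ᶠ ε in 𝓝[Ioo (0 : ℝ) 1] 0, Cmp P r b β w κ ε) {t : ℝ} (ht : 0 < t)
    (w : List V) (κ' : ℝ) (hκ' : 0 < κ') :
    ∀ᶠ ε in 𝓝[Ioo (0 : ℝ) 1] 0, Wt P.EE (P.Jε ε) (P.Tε ε) t w ≤
      ENNReal.ofReal ((2 * dconst r b β P.cpcd) ^ t) * Wt P.E₀ P.J P.T t w +
        ENNReal.ofReal κ' := by
  set C := dconst r b β P.cpcd
  have hC : 0 < C := dconst_pos _ _ _ _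
  have hκ : 0 < κ' ^ (1 / t) / 2 := by positivity
  have hκe : (2 * (κ' ^ (1 / t) / 2)) ^ t = κ' := by
    rw [mul_div_cancel₀ _ two_ne_zero, ← Real.rpow_mul hκ'.le, one_div_mul_cancel ht.ne',
      Real.rpow_one]
  filter_upwards [hcmp w _ hκ, ev_of P.p_ii] with ε h1 h2
  refine Wt_le fun u hu x hx => ?_
  have hz := wprod_norm_nonneg (T := P.Tε ε) w u x
  by_cases hE : adm P.E₀ w u
  · obtain ⟨y, hy, hxy⟩ := mem_thickening_iff.1 (h2 u hx)
    have h3 := ((h1 u hu x hx).1 hE y hy hxy).2.1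
    have hp := wprod_norm_nonneg (T := P.T) w u y
    have h4 : wprod (P.Tε ε) norm w u x ≤ C * wprod P.T norm w u y + κ' ^ (1 / t) / 2 :=
      h3.trans (by
        gcongr
        exact dsum_le h.hr0 h.hr1 h.hb h.hβ P.hcpcd.le _)
    have h5 := rpow_le_of_le_add hz hp hC.le hκ.le ht.le h4
    rw [hκe] at h5
    refine (ENNReal.ofReal_le_ofReal h5).trans ?_
    rw [ENNReal.ofReal_add (by positivity) hκ'.le, ENNReal.ofReal_mul (by positivity)]
    gcongr
    exact le_Wt hE hy
  · have h3 := (h1 u hu x hx).2 hE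
    have h5 := rpow_le_of_le_add (p := 0) hz le_rfl zero_le_one hκ.le ht.le (by linarith)
    rw [hκe, Real.zero_rpow ht.ne', mul_zero, zero_add] at h5
    exact (ENNReal.ofReal_le_ofReal h5).trans le_add_self

/-- The supremum over small parameters `ε` of the `s`-th power of the derivatives starting at
`v`. -/
def supA (P : PertGIFS D V) (s ε₀ : ℝ) (v : V) : ℝ≥0∞ :=
  ⨆ (ε : ℝ) (_ : ε ∈ Set.Ioo 0 ε₀) (u : V) (_ : P.EE v u) (x : Pt D) (_ : x ∈ P.Jε ε u),
    ENNReal.ofReal (‖fderiv ℝ (P.Tε ε v u) x‖ ^ s)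

lemma Wt_single_le_supA {s ε₀ ε : ℝ} (hε : ε ∈ Ioo 0 ε₀) (v : V) :
    Wt P.EE (P.Jε ε) (P.Tε ε) s [v] ≤ supA P s ε₀ v := by
  refine Wt_le fun u hu x hx => ?_
  rw [wprod_cons, wprod_nil, mul_one, fmap_nil]
  exact le_iSup₂_of_le ε hε (le_iSup₂_of_le u hu.1 (le_iSup₂_of_le x hx le_rfl))

lemma Wt_le_prod {E : V → V → Prop} {J O : V → Set (Pt D)} {T : V → V → Pt D → Pt D} {t : ℝ}
    (h : GS E J O T c R r b β) {A : V → ℝ≥0∞} (hA : ∀ v, Wt E J T t [v] ≤ A v) (w : List V) :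
    Wt E J T t w ≤ (w.map A).prod := by
  induction w with
  | nil => simpa using Wt_nil
  | cons v w ih =>
    rw [List.map_cons, List.prod_cons]
    exact (Wt_append h [v] w).trans (mul_le_mul' (hA v) ih)

theorem eventually_dimH_le [Countable V] [Nontrivial (Pt D)]
    (h : GS P.E₀ P.J P.O P.T c R r b β)
    (hcmp : ∀ w, ∀ κ > 0, ∀ᶠ ε in 𝓝[Ioo (0 : ℝ) 1] 0, Cmp P r b β w κ ε)
    (hG : ∀ ε ∈ Set.Ioo (0 : ℝ) 1, ∃ c R r b β, GS P.EE (P.Jε ε) (P.Oε ε) (P.Tε ε) c R r b β)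
    {πε : ℝ → (ℕ → V) → Pt D}
    (hπε : ∀ ε ∈ Set.Ioo (0 : ℝ) 1, IsCodingMap P.EE (P.Jε ε) (P.Tε ε) (πε ε))
    (h9 : ∀ ε ∈ Set.Ioo (0 : ℝ) 1, CondG9 P.EE (P.Jε ε) (P.Tε ε))
    {s t : ℝ} (hs : s ∈ IPSet P) (hst : s < t) (hsum : ∑' w, Wt P.E₀ P.J P.T t w ≠ ⊤) :
    ∀ᶠ ε in 𝓝[Ioo (0 : ℝ) 1] 0, dimH (πε ε '' TMS P.EE) ≤ ENNReal.ofReal t := by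
  obtain ⟨hs0, ε₀, hε₀, hA⟩ := hs
  change ∑' v, supA P s ε₀ v ≠ ⊤ at hA
  have ht : 0 < t := hs0.trans_lt hst
  set K := ENNReal.ofReal ((2 * dconst r b β P.cpcd) ^ t) with hK
  have hfs : ∑' w, K * Wt P.E₀ P.J P.T t w ≠ ⊤ := by
    rw [ENNReal.tsum_mul_left]; exact ENNReal.mul_ne_top ENNReal.ofReal_ne_top hsum
  obtain ⟨N, hN, hlt⟩ := exists_lsum_lt hfs (η := 2⁻¹) (by simp)
  have hb : ∀ᶠ ε in 𝓝[Ioo (0 : ℝ) 1] 0, ε ∈ Ioo (0 : ℝ) 1 ∧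
      ∀ v, Wt P.EE (P.Jε ε) (P.Tε ε) t [v] ≤ supA P s ε₀ v := by
    filter_upwards [self_mem_nhdsWithin, mem_nhdsWithin_of_mem_nhds (Iio_mem_nhds hε₀)]
      with ε h1 h2
    obtain ⟨c', R', r', b', β', g⟩ := hG ε h1
    exact ⟨h1, fun v => (Wt_antitone g hst.le [v]).trans (Wt_single_le_supA ⟨h1.1, h2⟩ v)⟩
  have hle : ∀ᶠ ε in 𝓝[Ioo (0 : ℝ) 1] 0, lsum (Wt P.EE (P.Jε ε) (P.Tε ε) t) N ≤ 1 := by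
    refine eventually_tsum_le_one
      (G := fun w => if w.length = N then (w.map (supA P s ε₀)).prod else 0)
      (g := fun w => if w.length = N then K * Wt P.E₀ P.J P.T t w else 0) ?_ ?_ ?_ hlt
    · exact ne_top_of_le_ne_top (ENNReal.pow_ne_top hA) (lsum_prod_le _ N)
    · filter_upwards [hb] with ε h1 w
      obtain ⟨c', R', r', b', β', g⟩ := hG ε h1.1
      split_ifs
      · exact Wt_le_prod g h1.2 w
      · exact le_rfl
    · intro w κ hκ
      filter_upwards [Wt_le_of_cmp h hcmp ht w κ hκ] with ε h1
      split_ifs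
      · exact h1
      · exact zero_le
  filter_upwards [hb, hle] with ε h1 h2
  obtain ⟨c', R', r', b', β', g⟩ := hG ε h1.1
  exact dimH_limit_le g (hπε ε h1.1) (h9 ε h1.1) ht
    (ne_top_of_le_ne_top hA (ENNReal.tsum_le_tsum h1.2)) hN h2

/-- Lower semicontinuity, up to a multiplicative constant, of the weight of a fixed loop. -/
lemma Lt_le_Ql_of_cmp [Nontrivial (Pt D)] (h : GS P.E₀ P.J P.O P.T c R r b β)
    (hC : CondConf P.E₀ P.O P.T)
    (hcmp : ∀ w, ∀ κ > 0, ∀ᶠ ε in 𝓝[Ioo (0 : ℝ) 1] 0, Cmp P r b β w κ ε) {τ : ℝ} (hτ : 0 ≤ τ)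
    (v : V) (w : List V) :
    ∀ᶠ ε in 𝓝[Ioo (0 : ℝ) 1] 0, Lt P.E₀ P.J P.T τ v w ≤
      ENNReal.ofReal (((dconst r b β P.cpcd)⁻¹ * (dconst r b β (chainM D R c * c))⁻¹ *
        (dconst r b β (chainM D R c * c))⁻¹ / 2)⁻¹ ^ τ) *
        Ql P.EE (P.Jε ε) (P.Tε ε) τ v w := by
  set C := dconst r b β P.cpcd
  set M := dconst r b β (chainM D R c * c)
  have hC0 : 0 < C := dconst_pos _ _ _ _
  have hM0 : 0 < M := dconst_pos _ _ _ _
  by_cases hw : adm P.E₀ w v ∧ hd w v = v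
  swap
  · refine Eventually.of_forall fun ε => ?_
    rw [Lt, iSup_neg hw]
    exact zero_le
  obtain ⟨x₀, hx₀⟩ := (h.J_conn v).nonempty
  set S := wprod P.T norm w v x₀
  have hS : 0 < S := (h.wprod_pos w v hw.1 hx₀).1.trans_le (h.wprod_pos w v hw.1 hx₀).2
  have hκ : 0 < C⁻¹ * M⁻¹ * S / 2 := by positivity
  filter_upwards [hcmp w _ hκ, ev_of P.p_ii, self_mem_nhdsWithin] with ε h1 h2 hε
  have hEE := adm_mono P.hE₀E w v hw.1
  rw [Ql, if_pos ⟨hEE, hw.2⟩]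
  have hq : C⁻¹ * M⁻¹ * S / 2 ≤ qi (P.Jε ε) (P.Tε ε) v w := by
    refine le_qi w (P.pJ_conn ε hε v).nonempty fun x hx => ?_
    obtain ⟨y, hy, hxy⟩ := mem_thickening_iff.1 (h2 v hx)
    have h3 := ((h1 v hEE x hx).1 hw.1 y hy hxy).2.2
    rw [wprod_inorm_eq h hC hw.1 hy] at h3
    have h4 : C⁻¹ ≤ Real.exp (-dsum r b β P.cpcd w.length) := by
      rw [Real.exp_neg]
      exact inv_anti₀ (Real.exp_pos _) (dsum_le h.hr0 h.hr1 h.hb h.hβ P.hcpcd.le _)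
    have h5 : M⁻¹ * S ≤ wprod P.T norm w v y := by
      rw [inv_mul_le_iff₀ hM0]; exact h.wprod_distort w v hw.1 hx₀ hy
    have h6 : C⁻¹ * (M⁻¹ * S) ≤
        Real.exp (-dsum r b β P.cpcd w.length) * wprod P.T norm w v y :=
      mul_le_mul h4 h5 (by positivity) (Real.exp_pos _).le
    have h7 : C⁻¹ * (M⁻¹ * S) = C⁻¹ * M⁻¹ * S / 2 + C⁻¹ * M⁻¹ * S / 2 := by ring
    linarith
  refine Lt_le_of_qi hτ (by positivity) (qi_nonneg v w) fun z hz => ?_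
  have h8 := h.wprod_distort w v hw.1 hz hx₀
  calc C⁻¹ * M⁻¹ * M⁻¹ / 2 * wprod P.T norm w v z ≤ C⁻¹ * M⁻¹ * M⁻¹ / 2 * (M * S) := by gcongr
    _ = C⁻¹ * M⁻¹ * S / 2 := by field_simp
    _ ≤ _ := hq

theorem eventually_le_dimH [Nontrivial (Pt D)]
    (h : GS P.E₀ P.J P.O P.T c R r b β) (hC : CondConf P.E₀ P.O P.T)
    {π : (ℕ → V) → Pt D} (hπ : IsCodingMap P.E₀ P.J P.T π)
    (hcmp : ∀ w, ∀ κ > 0, ∀ᶠ ε in 𝓝[Ioo (0 : ℝ) 1] 0, Cmp P r b β w κ ε)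
    (hG : ∀ ε ∈ Set.Ioo (0 : ℝ) 1, ∃ c R r b β, GS P.EE (P.Jε ε) (P.Oε ε) (P.Tε ε) c R r b β)
    {πε : ℝ → (ℕ → V) → Pt D}
    (hπε : ∀ ε ∈ Set.Ioo (0 : ℝ) 1, IsCodingMap P.EE (P.Jε ε) (P.Tε ε) (πε ε))
    (hsep : ∀ ε ∈ Set.Ioo (0 : ℝ) 1, CondSSC P.EE (P.Jε ε) (P.Tε ε) (πε ε '' TMS P.EE) ∨
          (CondConf P.EE (P.Oε ε) (P.Tε ε) ∧ CondOSC P.EE (P.Jε ε) (P.Tε ε)))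
    {s τ : ℝ} (hs : IsCrit P.E₀ P.J P.T π s) (hτ : 0 < τ) (hτs : τ < s) :
    ∀ᶠ ε in 𝓝[Ioo (0 : ℝ) 1] 0, ENNReal.ofReal τ ≤ dimH (πε ε '' TMS P.EE) := by
  set K := ENNReal.ofReal (((dconst r b β P.cpcd)⁻¹ * (dconst r b β (chainM D R c * c))⁻¹ *
        (dconst r b β (chainM D R c * c))⁻¹ / 2)⁻¹ ^ τ) with hK
  have hKt : K ≠ ⊤ := ENNReal.ofReal_ne_top
  obtain ⟨v, n, hn, hbig⟩ := hs.exists_big h hπ hτs hKt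
  rw [lsum, ENNReal.tsum_eq_iSup_sum, lt_iSup_iff] at hbig
  obtain ⟨S, hS⟩ := hbig
  have hfin : ∀ᶠ ε in 𝓝[Ioo (0 : ℝ) 1] 0, ∀ w ∈ S, Lt P.E₀ P.J P.T τ v w ≤
      K * Ql P.EE (P.Jε ε) (P.Tε ε) τ v w :=
    (eventually_all_finset S).2 fun w _ => Lt_le_Ql_of_cmp h hC hcmp hτ.le v w
  filter_upwards [hfin, self_mem_nhdsWithin] with ε h1 hε
  obtain ⟨c', R', r', b', β', g⟩ := hG ε hε
  refine le_dimH_of_lsum g (hπε ε hε) (P.pJ_reg ε hε v) (hsep ε hε) hτ hn ?_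
  have h2 : K < K * lsum (Ql P.EE (P.Jε ε) (P.Tε ε) τ v) n := by
    refine hS.trans_le ?_
    rw [lsum, ← ENNReal.tsum_mul_left]
    refine le_trans (Finset.sum_le_sum fun w hw => ?_) (ENNReal.sum_le_tsum S)
    split_ifs
    · exact h1 w hw
    · exact zero_le
  by_contra hcon
  exact absurd h2 (not_lt.2 (mul_le_of_le_one_right' (not_lt.1 hcon)))

end Stability

/-! ### The standing constants of the two systems -/

section Constants

variable {D : ℕ} {V : Type*} (P : PertGIFS D V)

lemma exists_GS_unperturbed [Nontrivial (Pt D)] (hC : CondConf P.E₀ P.O P.T)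
    (hB : CondBD P.E₀ P.O P.T) :
    ∃ c R r b β, P.cpcd < c ∧ GS P.E₀ P.J P.O P.T c R r b β := by
  obtain ⟨c, hc, hJO, hcc⟩ := P.hJO
  obtain ⟨R, hR⟩ := P.J_diam
  obtain ⟨b, hb, β, hβ, hbd⟩ := hB
  refine ⟨c, max R 0, max P.r (1 / 2), b, β, hcc, hc, le_max_right _ _, by positivity,
    max_lt P.hr (by norm_num), hb.le, hβ.1, P.J_conn, P.J_cpt, fun v x hx z hz => ?_,
    fun v u e => P.O_open u (P.hE₀V e).2, ?_, P.T_diff, P.T_inj, P.T_sub, P.T_J, P.T_unit, ?_,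
    hbd, ?_⟩
  · exact (dist_le_diam_of_mem (P.J_cpt v).isBounded hx hz).trans ((hR v).trans (le_max_left _ _))
  · intro v u e x hx z hz
    by_contra hzO
    have := hJO u (P.hE₀V e).2 x hx z hzO
    rw [mem_ball'] at hz
    linarith
  · intro v u e x hx z hz
    refine (P.T_contr e z ?_).trans (le_max_left _ _)
    by_contra hzO
    have := hJO u (P.hE₀V e).2 x hx z hzO
    rw [mem_ball'] at hz
    linarith
  · intro v u e x hx z hz
    rw [inorm_of_conformal (P.T_unit e x hx) (hC e x hx),
      inorm_of_conformal (P.T_unit e z hz) (hC e z hz)]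
    exact hbd e x hx z hz

lemma exists_GS_perturbed {c₃ : ℝ} (hc₃ : 0 < c₃) {ε : ℝ} (hε : ε ∈ Ioo (0 : ℝ) 1)
    (h3 : ∀ ⦃v u⦄, P.EE v u → ∀ x ∈ P.Oε ε u, ∀ y ∈ P.Oε ε u,
          |inorm (fderiv ℝ (P.Tε ε v u) x) - inorm (fderiv ℝ (P.Tε ε v u) y)| ≤
            c₃ * inorm (fderiv ℝ (P.Tε ε v u) x) * dist x y ^ P.β) :
    ∃ c R r b β, GS P.EE (P.Jε ε) (P.Oε ε) (P.Tε ε) c R r b β := by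
  obtain ⟨c, hc, hJO⟩ := P.pJO ε hε
  obtain ⟨R, hR⟩ := P.pJ_diam ε hε
  obtain ⟨ρ, hρ, hT⟩ := P.pT_contr ε hε
  refine ⟨c, max R 0, max ρ (1 / 2), max P.c'' c₃, P.β, hc, le_max_right _ _, by positivity,
    max_lt hρ (by norm_num), hc₃.le.trans (le_max_right _ _), P.hβ.1, P.pJ_conn ε hε,
    P.pJ_cpt ε hε, fun v x hx z hz => ?_,
    fun v u e => P.pO_open ε hε u, ?_, P.pT_diff ε hε, P.pT_inj ε hε, P.pT_sub ε hε,
    P.pT_J ε hε, P.pT_unit ε hε, ?_, ?_, ?_⟩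
  · exact (dist_le_diam_of_mem (P.pJ_cpt ε hε v).isBounded hx hz).trans
      ((hR v).trans (le_max_left _ _))
  · intro v u e x hx z hz
    by_contra hzO
    have := hJO u x hx z hzO
    rw [mem_ball'] at hz
    linarith
  · intro v u e x hx z hz
    refine (hT e z ?_).trans (le_max_left _ _)
    by_contra hzO
    have := hJO u x hx z hzO
    rw [mem_ball'] at hz
    linarith
  · intro v u e x hx z hz
    refine (P.p_vi ε hε e x hx z hz).trans ?_
    gcongr
    exact le_max_left _ _
  · intro v u e x hx z hz
    have := inorm_nonneg (A := fderiv ℝ (P.Tε ε v u) x)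
    refine (h3 e x hx z hz).trans ?_
    gcongr
    exact le_max_right _ _

end Constants

end GIFS
end

/-- Continuity of the Hausdorff dimension for perturbed GIFS with
degeneration: under (D.1)–(D.2), condition (D.3) gives the upper semicontinuity,
condition (D.4) gives the lower semicontinuity, and together they give
`dim_H K(ε) → dim_H K` as `ε → 0`. -/
theorem dimH_perturbed_continuity
    {D : ℕ} {V : Type*} [Countable V] (P : PertGIFS D V)
    (π : (ℕ → V) → Pt D) (hπ : IsCodingMap P.EE P.J P.T π)
    (πε : ℝ → (ℕ → V) → Pt D)
    (hπε : ∀ ε ∈ Set.Ioo (0 : ℝ) 1, IsCodingMap P.EE (P.Jε ε) (P.Tε ε) (πε ε))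
    -- (D.1): the unperturbed system satisfies (G.5)_C, (G.7)_B, (G.8)_{SV}, (G.9)_J
    -- and (G.6)_S or (G.6)_O
    (hD1 : CondConf P.E₀ P.O P.T ∧ CondBD P.E₀ P.O P.T ∧
      CondG8 P.E₀ P.J P.T π ∧ CondG9 P.E₀ P.J P.T ∧
      (CondSSC P.E₀ P.J P.T (π '' TMS P.E₀) ∨ CondOSC P.E₀ P.J P.T))
    -- (D.2): (P.3) holds, and each perturbed system satisfies (G.8)_{SV}, (G.9)_J and
    -- (G.6)_S or both (G.5)_C and (G.6)_O
    (hD2 : (∃ c > 0, ∀ ε ∈ Set.Ioo (0 : ℝ) 1, ∀ ⦃v u⦄, P.EE v u →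
        ∀ x ∈ P.Oε ε u, ∀ y ∈ P.Oε ε u,
          |inorm (fderiv ℝ (P.Tε ε v u) x) - inorm (fderiv ℝ (P.Tε ε v u) y)| ≤
            c * inorm (fderiv ℝ (P.Tε ε v u) x) * dist x y ^ P.β) ∧
      ∀ ε ∈ Set.Ioo (0 : ℝ) 1,
        CondG8 P.EE (P.Jε ε) (P.Tε ε) (πε ε) ∧
        CondG9 P.EE (P.Jε ε) (P.Tε ε) ∧
        (CondSSC P.EE (P.Jε ε) (P.Tε ε) (πε ε '' TMS P.EE) ∨
          (CondConf P.EE (P.Oε ε) (P.Tε ε) ∧ CondOSC P.EE (P.Jε ε) (P.Tε ε)))) :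
    -- (1): under (D.3)
    ((∃ s₀ : ℝ, pressure P.E₀ (fun ω => s₀ * phiU P.T π ω) = 0 ∧ s₀ ∈ IPSet P) →
      Filter.limsup (fun ε : ℝ => dimH (πε ε '' TMS P.EE))
          (nhdsWithin 0 (Set.Ioo 0 1)) ≤ dimH (π '' TMS P.E₀)) ∧
    -- (2): under (D.4)
    ((∃ s : ℝ, 0 < pressure P.E₀ (fun ω => s * phiU P.T π ω) ∧
        pressure P.E₀ (fun ω => s * phiU P.T π ω) < (⊤ : EReal) ∧ s ∈ IPSetLow P) →
      dimH (π '' TMS P.E₀) ≤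
        Filter.liminf (fun ε : ℝ => dimH (πε ε '' TMS P.EE))
          (nhdsWithin 0 (Set.Ioo 0 1))) ∧
    -- consequently, under (D.3) and (D.4)
    ((∃ s₀ : ℝ, pressure P.E₀ (fun ω => s₀ * phiU P.T π ω) = 0 ∧ s₀ ∈ IPSet P) →
      (∃ s : ℝ, 0 < pressure P.E₀ (fun ω => s * phiU P.T π ω) ∧
        pressure P.E₀ (fun ω => s * phiU P.T π ω) < (⊤ : EReal) ∧ s ∈ IPSetLow P) →
      Filter.Tendsto (fun ε : ℝ => dimH (πε ε '' TMS P.EE))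
        (nhdsWithin 0 (Set.Ioo 0 1)) (nhds (dimH (π '' TMS P.E₀)))) := by
  rcases Nat.eq_zero_or_pos D with rfl | hD
  · -- In dimension `0` every set is a subsingleton and all dimensions vanish.
    have h0 : ∀ S : Set (Pt 0), dimH S = 0 := fun S => (Set.subsingleton_of_subsingleton).dimH_zero
    simp only [h0]
    exact ⟨fun _ => limsup_le_of_le (by isBoundedDefault) (Eventually.of_forall fun _ => le_rfl),
      fun _ => zero_le, fun _ _ => tendsto_const_nhds⟩
  have : Nonempty (Fin D) := ⟨⟨0, hD⟩⟩
  have : Nontrivial (Pt D) := inferInstance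
  obtain ⟨hC, hB, h8, h9, hsep⟩ := hD1
  obtain ⟨⟨c₃, hc₃, hP3⟩, hD2⟩ := hD2
  obtain ⟨c, R, r, b, β, hcc, h⟩ := GIFS.exists_GS_unperturbed P hC hB
  have hG : ∀ ε ∈ Set.Ioo (0 : ℝ) 1, ∃ c R r b β,
      GIFS.GS P.EE (P.Jε ε) (P.Oε ε) (P.Tε ε) c R r b β :=
    fun ε hε => GIFS.exists_GS_perturbed P hc₃ hε (hP3 ε hε)
  have hπ₀ : IsCodingMap P.E₀ P.J P.T π := fun ω hω => hπ ω fun n => P.hE₀E (hω n)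
  have hreg : ∀ ⦃v u⦄, P.E₀ v u → P.J u = closure (interior (P.J u)) :=
    fun v u e => P.J_reg u (P.hE₀V e).2
  have hext : ∀ ⦃v u⦄, P.E₀ v u → ∃ u', P.E₀ u u' := fun v u e =>
    GIFS.exists_edge_of_G9 h9 (P.J_cpt u) (P.J_conn u).nonempty (hreg e)
  obtain ⟨s, hs⟩ := GIFS.exists_isCrit h hπ₀ hC hext h8
  have hcmp := GIFS.cmp h hcc hG
  have hup : (∃ s₀ : ℝ, pressure P.E₀ (fun ω => s₀ * phiU P.T π ω) = 0 ∧ s₀ ∈ IPSet P) →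
      Filter.limsup (fun ε : ℝ => dimH (πε ε '' TMS P.EE))
          (nhdsWithin 0 (Set.Ioo 0 1)) ≤ dimH (π '' TMS P.E₀) := by
    rintro ⟨s₀, hP₀, hs₀⟩
    obtain rfl : s₀ = s := GIFS.IsCrit.unique h hπ₀ hext hs hs₀.1 (fun ω _ => rfl) hP₀
    refine le_trans ?_ (hs.le_dimH h hπ₀ hC hreg hsep)
    refine ENNReal.le_of_forall_pos_le_add fun δ hδ _ => ?_
    have := GIFS.eventually_dimH_le h hcmp hG hπε (fun ε hε => (hD2 ε hε).2.1) hs₀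
      (t := s₀ + δ) (by simpa using hδ) (hs.tsum_ne_top h hπ₀ hext (by simpa using hδ))
    refine (limsup_le_of_le (by isBoundedDefault) this).trans ?_
    exact (ENNReal.ofReal_add_le).trans (by rw [ENNReal.ofReal_coe_nnreal])
  have hlow : dimH (π '' TMS P.E₀) ≤
        Filter.liminf (fun ε : ℝ => dimH (πε ε '' TMS P.EE)) (nhdsWithin 0 (Set.Ioo 0 1)) := by
    refine (hs.dimH_le h hπ₀ hext h9).trans (le_of_forall_lt fun a ha => ?_)
    obtain ⟨a', haa', ha's⟩ := exists_between ha
    have hfin : a' ≠ ⊤ := ha's.ne_top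
    have hpos : 0 < a'.toReal := ENNReal.toReal_pos (ne_bot_of_gt haa') hfin
    have := GIFS.eventually_le_dimH h hC hπ₀ hcmp hG hπε (fun ε hε => (hD2 ε hε).2.2) hs hpos
      ((ENNReal.lt_ofReal_iff_toReal_lt hfin).1 ha's)
    rw [ENNReal.ofReal_toReal hfin] at this
    exact haa'.trans_le (le_liminf_of_le (by isBoundedDefault) this)
  exact ⟨hup, fun _ => hlow, fun hD3 _ => tendsto_of_le_liminf_of_limsup_le hlow (hup hD3)
    (by isBoundedDefault) (by isBoundedDefault)⟩
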